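/- arXiv:1708.02724 — 2 statements merged into one kernel-verified Lean document; each statement's English description precedes it below -/
import Mathlib

section
/- Finite-time blow-up for the 1D Boussinesq system: Let g₀, P₀ ∈ C^∞([−π/4,π/4]) satisfy: (1) g₀ is odd and g₀ ≥ 0, g₀' ≥ 0 on [0,π/4]; (2) P₀ is even and P₀ ≥ 0, P₀' ≥ 0, P₀ + P₀'' ≥ 0 on [0,π/4]; (3) P₀(π/4) > √2 · P₀(0). Then there is no global smooth solution: there does not exist a pair (g,P) ∈ C^∞([0,∞)×[−π/4,π/4]) solving the 1D Boussinesq system for all t ≥ 0 with g(0,·) = g₀, P(0,·) = P₀, and g(t,·) odd, P(t,·) even for all t ≥ 0. -/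
open Set Real MeasureTheory
open scoped ENNReal NNReal Topology

noncomputable section

/-- The interval `[-π/4, π/4]`. -/
def I14 : Set ℝ := Icc (-(π/4)) (π/4)

/-- A classical solution of the 1D Boussinesq system
`∂ₜ g + 2G ∂_θ g = sin θ · P + cos θ · ∂_θ P`, `∂ₜ P + 2G ∂_θ P = P ∂_θ G` on the time set
`J`, on the interval `[-π/4, π/4]`, where for each `t`, `G(t,·)` is the unique odd `C²`
function with `∂_{θθ} G + 4G = g(t,·)` and `G(t, ±π/4) = 0`; `g(t,·)` is odd and `P(t,·)`
is even. -/
structure OneDSol (J : Set ℝ) (g P G : ℝ → ℝ → ℝ) : Prop where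
  g_odd : ∀ t ∈ J, ∀ θ ∈ I14, g t (-θ) = - g t θ
  P_even : ∀ t ∈ J, ∀ θ ∈ I14, P t (-θ) = P t θ
  G_odd : ∀ t ∈ J, ∀ θ ∈ I14, G t (-θ) = - G t θ
  G_C2 : ∀ t ∈ J, ContDiffOn ℝ 2 (G t) I14
  G_eq : ∀ t ∈ J, ∀ θ ∈ I14, iteratedDerivWithin 2 (G t) I14 θ + 4 * G t θ = g t θ
  G_bc₁ : ∀ t ∈ J, G t (π/4) = 0
  G_bc₂ : ∀ t ∈ J, G t (-(π/4)) = 0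
  reg_g : ∀ t ∈ J, DifferentiableOn ℝ (g t) I14
  reg_P : ∀ t ∈ J, DifferentiableOn ℝ (P t) I14
  reg_gt : ∀ θ ∈ I14, ∀ t ∈ J, DifferentiableWithinAt ℝ (fun s => g s θ) J t
  reg_Pt : ∀ θ ∈ I14, ∀ t ∈ J, DifferentiableWithinAt ℝ (fun s => P s θ) J t
  eq_g : ∀ t ∈ J, ∀ θ ∈ I14,
    derivWithin (fun s => g s θ) J t + 2 * G t θ * derivWithin (g t) I14 θ
      = Real.sin θ * P t θ + Real.cos θ * derivWithin (P t) I14 θ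
  eq_P : ∀ t ∈ J, ∀ θ ∈ I14,
    derivWithin (fun s => P s θ) J t + 2 * G t θ * derivWithin (P t) I14 θ
      = P t θ * derivWithin (G t) I14 θ

/-- Sup-norm over `[-π/4, π/4]`, valued in `ℝ≥0∞`. -/
def supNormI (f : ℝ → ℝ) : ℝ≥0∞ := ⨆ θ : I14, (‖f (θ : ℝ)‖₊ : ℝ≥0∞)

/-- `α`-Hölder seminorm over `[-π/4, π/4]`, valued in `ℝ≥0∞`. -/
def hSemi (α : ℝ) (f : ℝ → ℝ) : ℝ≥0∞ :=
  ⨆ p : {q : I14 × I14 // (q.1 : ℝ) ≠ (q.2 : ℝ)},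
    (‖f (p.1.1 : ℝ) - f (p.1.2 : ℝ)‖₊ : ℝ≥0∞) /
      ENNReal.ofReal (|(p.1.1 : ℝ) - (p.1.2 : ℝ)| ^ α)

/-- The `C^{k,α}` norm on `[-π/4,π/4]`:
`Σ_{j ≤ k} sup |f^{(j)}| + Hölder seminorm of f^{(k)}`, valued in `ℝ≥0∞`. -/
def CkaNorm (k : ℕ) (α : ℝ) (f : ℝ → ℝ) : ℝ≥0∞ :=
  (Finset.range (k+1)).sum (fun j => supNormI (iteratedDerivWithin j f I14)) +
    hSemi α (iteratedDerivWithin k f I14)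

/-- The `C^k` norm `Σ_{j ≤ k} sup |f^{(j)}|` on `[-π/4,π/4]`, valued in `ℝ≥0∞`. -/
def CkNorm (k : ℕ) (f : ℝ → ℝ) : ℝ≥0∞ :=
  (Finset.range (k+1)).sum (fun j => supNormI (iteratedDerivWithin j f I14))

/-!
The proof runs on the half interval `[0, π/4]`. The pair `(∂θ g, P + ∂θ² P)` solves a transport
system whose off-diagonal coefficients `cos θ` and `P` are nonnegative, so a maximum principle
propagates `P ≥ 0` and then `∂θ g ≥ 0`. Testing `G'' + 4G = g` against `cos 2θ`,
`sin 2θ - cos 2θ` and `sin 2θ + cos 2θ` gives `G'(0) ≤ 0`, `G'(π/4) ≥ -G'(0)` and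
`G'(π/4) - G'(0) ≥ ∫ g`. The first inequality makes `P(t, 0)` nonincreasing. Since
`∂ₜ g - 2 sin θ P` is the `θ`-derivative of `-2 G g + G'² + 4 G² + cos θ P`, the quantities
`p = P(t, π/4)` and `M = ∫₀^{π/4} g` satisfy `p' ≥ M p / 2` and `M' ≥ p / √2 - P₀(0)`. The
primitive `N` of `p / √2 - P₀(0)` then obeys a Riccati inequality `N' ≥ δ + N² / 4` with
`δ = P₀(π/4) / √2 - P₀(0) > 0`, which forces blow-up before time `π / √δ`.
-/

section PartialDerivatives

variable {E : Type*} [NormedAddCommGroup E] [NormedSpace ℝ E]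
  {S U : Set ℝ} {F : ℝ → ℝ → E} {m n : WithTop ℕ∞} {t x : ℝ}

/-- The partial derivative `∂F/∂t (t, x)`, taken within `S` so that it is one-sided at the
endpoints of an interval. -/
def partialFst (S : Set ℝ) (F : ℝ → ℝ → E) (t x : ℝ) : E := derivWithin (F · x) S t

/-- The partial derivative `∂F/∂x (t, x)`, taken within `U` so that it is one-sided at the
endpoints of an interval. -/
def partialSnd (U : Set ℝ) (F : ℝ → ℝ → E) (t x : ℝ) : E := derivWithin (F t) U x

lemma partialSnd_partialSnd_eq_iteratedDerivWithin :
    partialSnd U (partialSnd U F) t x = iteratedDerivWithin 2 (F t) U x := by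
  rw [iteratedDerivWithin_succ, iteratedDerivWithin_one]
  rfl

lemma hasDerivWithinAt_fst_of_hasFDerivWithinAt {f : ℝ × ℝ → E} {f' : ℝ × ℝ →L[ℝ] E}
    (hf : HasFDerivWithinAt f f' (S ×ˢ U) (t, x)) (hx : x ∈ U) :
    HasDerivWithinAt (fun s ↦ f (s, x)) (f' (1, 0)) S t :=
  hf.comp_hasDerivWithinAt (f := fun s ↦ (s, x)) t
    ((hasDerivWithinAt_id t S).prodMk (hasDerivWithinAt_const t S x)) fun _ hs ↦ ⟨hs, hx⟩

lemma hasDerivWithinAt_snd_of_hasFDerivWithinAt {f : ℝ × ℝ → E} {f' : ℝ × ℝ →L[ℝ] E}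
    (hf : HasFDerivWithinAt f f' (S ×ˢ U) (t, x)) (ht : t ∈ S) :
    HasDerivWithinAt (fun y ↦ f (t, y)) (f' (0, 1)) U x :=
  hf.comp_hasDerivWithinAt (f := fun y ↦ (t, y)) x
    ((hasDerivWithinAt_const x U t).prodMk (hasDerivWithinAt_id x U)) fun _ hy ↦ ⟨ht, hy⟩

lemma hasDerivWithinAt_partialFst (hF : DifferentiableOn ℝ ↿F (S ×ˢ U)) (ht : t ∈ S)
    (hx : x ∈ U) : HasDerivWithinAt (F · x) (partialFst S F t x) S t :=
  (hasDerivWithinAt_fst_of_hasFDerivWithinAt (hF (t, x) ⟨ht, hx⟩).hasFDerivWithinAt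
    hx).differentiableWithinAt.hasDerivWithinAt

lemma hasDerivWithinAt_partialSnd (hF : DifferentiableOn ℝ ↿F (S ×ˢ U)) (ht : t ∈ S)
    (hx : x ∈ U) : HasDerivWithinAt (F t) (partialSnd U F t x) U x :=
  (hasDerivWithinAt_snd_of_hasFDerivWithinAt (hF (t, x) ⟨ht, hx⟩).hasFDerivWithinAt
    ht).differentiableWithinAt.hasDerivWithinAt

lemma partialFst_eq_fderivWithin (hS : UniqueDiffOn ℝ S) (hF : DifferentiableOn ℝ ↿F (S ×ˢ U))
    (ht : t ∈ S) (hx : x ∈ U) : partialFst S F t x = fderivWithin ℝ ↿F (S ×ˢ U) (t, x) (1, 0) :=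
  (hasDerivWithinAt_fst_of_hasFDerivWithinAt (hF (t, x) ⟨ht, hx⟩).hasFDerivWithinAt
    hx).derivWithin (hS t ht)

lemma partialSnd_eq_fderivWithin (hU : UniqueDiffOn ℝ U) (hF : DifferentiableOn ℝ ↿F (S ×ˢ U))
    (ht : t ∈ S) (hx : x ∈ U) : partialSnd U F t x = fderivWithin ℝ ↿F (S ×ˢ U) (t, x) (0, 1) :=
  (hasDerivWithinAt_snd_of_hasFDerivWithinAt (hF (t, x) ⟨ht, hx⟩).hasFDerivWithinAt
    ht).derivWithin (hU x hx)

lemma contDiffOn_partialFst (hS : UniqueDiffOn ℝ S) (hU : UniqueDiffOn ℝ U)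
    (hF : ContDiffOn ℝ n ↿F (S ×ˢ U)) (hmn : m + 1 ≤ n) :
    ContDiffOn ℝ m ↿(partialFst S F) (S ×ˢ U) :=
  ((hF.fderivWithin (hS.prod hU) hmn).clm_apply contDiffOn_const).congr fun _ hq ↦
    partialFst_eq_fderivWithin hS
      ((hF.of_le (le_add_self.trans hmn)).differentiableOn one_ne_zero) hq.1 hq.2

lemma contDiffOn_partialSnd (hS : UniqueDiffOn ℝ S) (hU : UniqueDiffOn ℝ U)
    (hF : ContDiffOn ℝ n ↿F (S ×ˢ U)) (hmn : m + 1 ≤ n) :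
    ContDiffOn ℝ m ↿(partialSnd U F) (S ×ˢ U) :=
  ((hF.fderivWithin (hS.prod hU) hmn).clm_apply contDiffOn_const).congr fun _ hq ↦
    partialSnd_eq_fderivWithin hU
      ((hF.of_le (le_add_self.trans hmn)).differentiableOn one_ne_zero) hq.1 hq.2

theorem partialFst_partialSnd_comm (hS : Convex ℝ S) (hS' : (interior S).Nonempty)
    (hU : Convex ℝ U) (hU' : (interior U).Nonempty) (hF : ContDiffOn ℝ 2 ↿F (S ×ˢ U))
    (ht : t ∈ S) (hx : x ∈ U) :
    partialFst S (partialSnd U F) t x = partialSnd U (partialFst S F) t x := by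
  have hSd := uniqueDiffOn_convex hS hS'
  have hUd := uniqueDiffOn_convex hU hU'
  have hF₁ : DifferentiableOn ℝ ↿F (S ×ˢ U) := hF.differentiableOn two_ne_zero
  have hclosure : (t, x) ∈ closure (interior (S ×ˢ U)) := by
    rw [(hS.prod hU).closure_interior_eq_closure_of_nonempty_interior
      (by rw [interior_prod_eq]; exact hS'.prod hU')]
    exact subset_closure ⟨ht, hx⟩
  have hsymm : IsSymmSndFDerivWithinAt ℝ ↿F (S ×ˢ U) (t, x) :=
    (hF (t, x) ⟨ht, hx⟩).isSymmSndFDerivWithinAt (by simp) (hSd.prod hUd) hclosure ⟨ht, hx⟩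
  have hF₂ := ((hF.fderivWithin (hSd.prod hUd) (m := 1) (by norm_num)).differentiableOn
    one_ne_zero (t, x) ⟨ht, hx⟩).hasFDerivWithinAt
  have hts := ((hasDerivWithinAt_fst_of_hasFDerivWithinAt hF₂ hx).clm_apply
    (hasDerivWithinAt_const t S ((0 : ℝ), (1 : ℝ)))).congr_of_mem
      (fun s hs ↦ partialSnd_eq_fderivWithin hUd hF₁ hs hx) ht
  have hst := ((hasDerivWithinAt_snd_of_hasFDerivWithinAt hF₂ ht).clm_apply
    (hasDerivWithinAt_const x U ((1 : ℝ), (0 : ℝ)))).congr_of_mem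
      (fun y hy ↦ partialFst_eq_fderivWithin hSd hF₁ ht hy) hx
  rw [partialFst, hts.derivWithin (hSd t ht), partialSnd, hst.derivWithin (hUd x hx)]
  simpa using hsymm (1, 0) (0, 1)

end PartialDerivatives

section Calculus

variable {E : Type*} [NormedAddCommGroup E] [NormedSpace ℝ E] {a b : ℝ}

lemma mul_sub_nonneg_of_isMinOn {s : Set ℝ} {f : ℝ → ℝ} {f' x y : ℝ} (hs : Convex ℝ s)
    (hf : HasDerivWithinAt f f' s x) (hmin : IsMinOn f s x) (hx : x ∈ s) (hy : y ∈ s) :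
    0 ≤ (y - x) * f' := by
  simpa using hmin.localize.hasFDerivWithinAt_nonneg hf.hasFDerivWithinAt
    (sub_mem_posTangentConeAt_of_segment_subset (hs.segment_subset hx hy))

lemma monotoneOn_Icc_of_hasDerivAt_nonneg {f f' : ℝ → ℝ} (hf : ContinuousOn f (Icc a b))
    (hf' : ∀ x ∈ Ioo a b, HasDerivAt f (f' x) x) (hnonneg : ∀ x ∈ Ioo a b, 0 ≤ f' x) :
    MonotoneOn f (Icc a b) :=
  monotoneOn_of_hasDerivWithinAt_nonneg (convex_Icc a b) hf
    (by simpa only [interior_Icc] using fun x hx ↦ (hf' x hx).hasDerivWithinAt)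
    (by simpa only [interior_Icc] using hnonneg)

theorem integral_eq_sub_of_hasDerivWithinAt_Icc [CompleteSpace E] {f f' : ℝ → E} (hab : a ≤ b)
    (hf : ∀ x ∈ Icc a b, HasDerivWithinAt f (f' x) (Icc a b) x)
    (hf' : ContinuousOn f' (Icc a b)) : ∫ x in a..b, f' x = f b - f a :=
  intervalIntegral.integral_eq_sub_of_hasDerivAt_of_le hab
    (fun x hx ↦ (hf x hx).continuousWithinAt)
    (fun x hx ↦ (hf x (Ioo_subset_Icc_self hx)).hasDerivAt (Icc_mem_nhds hx.1 hx.2))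
    (hf'.intervalIntegrable_of_Icc hab)

theorem continuousOn_integral_of_isCompact {X : Type*} [TopologicalSpace X]
    [FirstCountableTopology X] {K : Set X} {F : X → ℝ → E} (hK : IsCompact K)
    (hF : ContinuousOn ↿F (K ×ˢ uIcc a b)) : ContinuousOn (fun t ↦ ∫ x in a..b, F t x) K := by
  obtain ⟨C, hC⟩ := (hK.prod isCompact_uIcc).exists_bound_of_continuousOn hF
  refine fun t ht ↦ intervalIntegral.continuousWithinAt_of_dominated_interval
    (bound := fun _ ↦ C) ?_ ?_ intervalIntegrable_const ?_
  · filter_upwards [self_mem_nhdsWithin] with s hs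
    exact (hF.uncurry_left s hs).intervalIntegrable.def'.aestronglyMeasurable
  · filter_upwards [self_mem_nhdsWithin] with s hs
    exact ae_of_all _ fun x hx ↦ hC (s, x) ⟨hs, uIoc_subset_uIcc hx⟩
  · exact ae_of_all _ fun x hx ↦ hF.uncurry_right x (uIoc_subset_uIcc hx) t ht

theorem hasDerivAt_integral_of_continuousOn_deriv {S : Set ℝ} {F F' : ℝ → ℝ → E} {t : ℝ}
    (hS : S ∈ 𝓝 t) (hF : ∀ s ∈ S, ContinuousOn (F s) (uIcc a b))
    (hF' : ContinuousOn ↿F' (S ×ˢ uIcc a b))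
    (hderiv : ∀ s ∈ S, ∀ x ∈ uIcc a b, HasDerivAt (F · x) (F' s x) s) :
    HasDerivAt (fun s ↦ ∫ x in a..b, F s x) (∫ x in a..b, F' t x) t := by
  obtain ⟨K, hKt, hKS, hK⟩ := local_compact_nhds hS
  obtain ⟨C, hC⟩ := (hK.prod isCompact_uIcc).exists_bound_of_continuousOn
    (hF'.mono (prod_mono_left hKS))
  refine (intervalIntegral.hasDerivAt_integral_of_dominated_loc_of_deriv_le
    (bound := fun _ ↦ C) hKt ?_ (hF t (mem_of_mem_nhds hS)).intervalIntegrable ?_ ?_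
    intervalIntegrable_const ?_).2
  · filter_upwards [hS] with s hs
    exact (hF s hs).intervalIntegrable.def'.aestronglyMeasurable
  · exact (hF'.uncurry_left t (mem_of_mem_nhds hS)).intervalIntegrable.def'.aestronglyMeasurable
  · exact ae_of_all _ fun x hx s hs ↦ hC (s, x) ⟨hs, uIoc_subset_uIcc hx⟩
  · exact ae_of_all _ fun x hx s hs ↦ hderiv s (hKS hs) x (uIoc_subset_uIcc hx)

end Calculus

section MaximumPrinciple

variable {a b : ℝ}

lemma mul_eq_zero_of_isMinOn_Icc {f : ℝ → ℝ} {f' v x : ℝ} (hx : x ∈ Icc a b)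
    (hf : HasDerivWithinAt f f' (Icc a b) x) (hmin : IsMinOn f (Icc a b) x)
    (hva : x = a → v = 0) (hvb : x = b → v = 0) : v * f' = 0 := by
  by_cases hend : x = a ∨ x = b
  · rw [hend.elim hva hvb, zero_mul]
  · push Not at hend
    have hmem : Icc a b ∈ 𝓝 x :=
      Icc_mem_nhds (hx.1.lt_of_ne' hend.1) (hx.2.lt_of_ne hend.2)
    rw [(hmin.isLocalMin hmem).hasDerivAt_eq_zero (hf.hasDerivAt hmem), mul_zero]

lemma deriv_le_mul_of_isMinOn_exp_mul {f : ℝ → ℝ} {f' K t : ℝ} (ht : 0 < t)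
    (hf : HasDerivWithinAt f f' (Icc 0 t) t)
    (hmin : IsMinOn (fun s ↦ rexp (-K * s) * f s) (Icc 0 t) t) : f' ≤ K * f t := by
  have hexp : HasDerivAt (fun s ↦ rexp (-K * s)) (rexp (-K * t) * -K) t := by
    simpa using ((hasDerivAt_id t).const_mul (-K)).exp
  have hslope := mul_sub_nonneg_of_isMinOn (convex_Icc 0 t) (hexp.hasDerivWithinAt.mul hf) hmin
    ⟨ht.le, le_rfl⟩ ⟨le_rfl, ht.le⟩
  have hscaled : 0 ≤ (t * rexp (-K * t)) * (K * f t - f') := by linear_combination hslope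
  exact sub_nonneg.1 (nonneg_of_mul_nonneg_right hscaled (mul_pos ht (exp_pos _)))

lemma exists_forall_le_of_isCompact {ι X : Type*} [Finite ι] [Nonempty ι] [TopologicalSpace X]
    {K : Set X} {w : ι → X → ℝ}
    (hK : IsCompact K) (hK' : K.Nonempty) (hw : ∀ i, ContinuousOn (w i) K) :
    ∃ i, ∃ p ∈ K, ∀ j, ∀ q ∈ K, w i p ≤ w j q := by
  choose p hp hmin using fun i ↦ hK.exists_isMinOn hK' (hw i)
  obtain ⟨i, hi⟩ := Finite.exists_min fun i ↦ w i (p i)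
  exact ⟨i, p i, hp i, fun j q hq ↦ (hi j).trans (hmin j hq)⟩

variable {ι : Type*} [Fintype ι]

lemma mul_le_sum_mul_of_rowSum_le {A : ι → ℝ} {u : ι → ℝ} {i : ι} {L : ℝ}
    (hA : ∀ j ≠ i, 0 ≤ A j) (hsum : ∑ j, A j ≤ L) (hmin : ∀ j, u i ≤ u j) (hneg : u i ≤ 0) :
    L * u i ≤ ∑ j, A j * u j := by
  calc L * u i ≤ (∑ j, A j) * u i := mul_le_mul_of_nonpos_right hsum hneg
    _ = ∑ j, A j * u i := Finset.sum_mul ..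
    _ ≤ ∑ j, A j * u j := Finset.sum_le_sum fun j _ ↦ by
      rcases eq_or_ne j i with rfl | hj
      · rfl
      · exact mul_le_mul_of_nonneg_left (hmin j) (hA j hj)

theorem nonneg_of_cooperative_transport {u u_t u_x v : ι → ℝ → ℝ → ℝ}
    {A : ℝ → ℝ → Matrix ι ι ℝ} {L T : ℝ}
    (hu : ∀ i, ContinuousOn ↿(u i) (Icc 0 T ×ˢ Icc a b))
    (hu_t : ∀ i, ∀ t ∈ Icc 0 T, ∀ x ∈ Icc a b,
      HasDerivWithinAt (u i · x) (u_t i t x) (Icc 0 T) t)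
    (hu_x : ∀ i, ∀ t ∈ Icc 0 T, ∀ x ∈ Icc a b, HasDerivWithinAt (u i t) (u_x i t x) (Icc a b) x)
    (hva : ∀ i, ∀ t ∈ Icc 0 T, v i t a = 0) (hvb : ∀ i, ∀ t ∈ Icc 0 T, v i t b = 0)
    (hA : ∀ i j, j ≠ i → ∀ t ∈ Icc 0 T, ∀ x ∈ Icc a b, 0 ≤ A t x i j)
    (hAL : ∀ i, ∀ t ∈ Icc 0 T, ∀ x ∈ Icc a b, ∑ j, A t x i j ≤ L)
    (hpde : ∀ i, ∀ t ∈ Icc 0 T, ∀ x ∈ Icc a b,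
      ∑ j, A t x i j * u j t x ≤ u_t i t x + v i t x * u_x i t x)
    (hu₀ : ∀ i, ∀ x ∈ Icc a b, 0 ≤ u i 0 x) :
    ∀ i, ∀ t ∈ Icc 0 T, ∀ x ∈ Icc a b, 0 ≤ u i t x := by
  intro i₀ t₀ ht₀ x₀ hx₀
  -- Once `K` exceeds the row sums of `A`, no component of `exp (-K t) u` can attain a negative
  -- overall minimum: the transport term vanishes there and the time derivative has a sign.
  set K := L + 1
  have : Nonempty ι := ⟨i₀⟩
  obtain ⟨i, ⟨t, x⟩, ⟨ht : t ∈ Icc 0 T, hx : x ∈ Icc a b⟩, hmin⟩ := exists_forall_le_of_isCompact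
    (w := fun i (q : ℝ × ℝ) ↦ rexp (-K * q.1) * u i q.1 q.2)
    (isCompact_Icc.prod isCompact_Icc) ⟨(t₀, x₀), ht₀, hx₀⟩
    fun i ↦ ContinuousOn.mul (by fun_prop) (hu i)
  suffices hnonneg : 0 ≤ u i t x from nonneg_of_mul_nonneg_right
    ((mul_nonneg (exp_pos _).le hnonneg).trans (hmin i₀ (t₀, x₀) ⟨ht₀, hx₀⟩)) (exp_pos _)
  by_contra! hneg
  have ht_pos : 0 < t := ht.1.lt_of_ne <| by
    rintro rfl
    exact (hu₀ i x hx).not_gt hneg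
  have htime : u_t i t x ≤ K * u i t x := deriv_le_mul_of_isMinOn_exp_mul
    (f := (u i · x)) ht_pos
    ((hu_t i t ht x hx).mono (Icc_subset_Icc_right ht.2))
    fun s hs ↦ hmin i (s, x) ⟨⟨hs.1, hs.2.trans ht.2⟩, hx⟩
  have hle_slice (j : ι) (y : ℝ) (hy : y ∈ Icc a b) : u i t x ≤ u j t y :=
    le_of_mul_le_mul_left (hmin j (t, y) ⟨ht, hy⟩) (exp_pos _)
  have hspace : v i t x * u_x i t x = 0 :=
    mul_eq_zero_of_isMinOn_Icc hx (hu_x i t ht x hx) (fun y hy ↦ hle_slice i y hy)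
      (fun h ↦ h ▸ hva i t ht) (fun h ↦ h ▸ hvb i t ht)
  have hreaction : L * u i t x ≤ ∑ j, A t x i j * u j t x :=
    mul_le_sum_mul_of_rowSum_le (u := fun j ↦ u j t x) (fun j hj ↦ hA i j hj t ht x hx)
      (hAL i t ht x hx) (fun j ↦ hle_slice j x hx) hneg.le
  linarith [hpde i t ht x hx, add_one_mul L (u i t x)]

end MaximumPrinciple

section DirichletProblem

lemma hasDerivWithinAt_wronskian {f f' w w' : ℝ → ℝ} {h k x : ℝ} {s : Set ℝ}
    (hf : HasDerivWithinAt f (f' x) s x) (hf' : HasDerivWithinAt f' (h - k * f x) s x)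
    (hw : HasDerivWithinAt w (w' x) s x) (hw' : HasDerivWithinAt w' (-(k * w x)) s x) :
    HasDerivWithinAt (fun y ↦ w y * f' y - w' y * f y) (w x * h) s x :=
  ((hw.mul hf').sub (hw'.mul hf)).congr_deriv (by ring)

lemma abs_le_mul_abs_sub_of_abs_deriv_le {f f' : ℝ → ℝ} {a b c K x : ℝ}
    (hf : ∀ y ∈ Icc a b, HasDerivWithinAt f (f' y) (Icc a b) y)
    (hf' : ∀ y ∈ Icc a b, |f' y| ≤ K) (hc : c ∈ Icc a b) (hx : x ∈ Icc a b) (hfc : f c = 0) :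
    |f x| ≤ K * |x - c| := by
  simpa [hfc] using (convex_Icc a b).norm_image_sub_le_of_norm_hasDerivWithin_le hf hf' hc hx

lemma hasDerivAt_sin_mul (ω x : ℝ) : HasDerivAt (fun y ↦ sin (ω * y)) (ω * cos (ω * x)) x := by
  simpa [mul_comm] using ((hasDerivAt_id x).const_mul ω).sin

lemma hasDerivAt_cos_mul (ω x : ℝ) : HasDerivAt (fun y ↦ cos (ω * y)) (-(ω * sin (ω * x))) x := by
  simpa [mul_comm] using ((hasDerivAt_id x).const_mul ω).cos

variable {k a b ω : ℝ} {f f' h : ℝ → ℝ}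

lemma pos_of_mul_eq_pi_div_two (hb : 0 ≤ b) (hωb : ω * b = π / 2) : 0 < ω :=
  pos_of_mul_pos_left (hωb ▸ pi_div_two_pos) hb

lemma mul_mem_Icc_pi_div_two {x : ℝ} (hωb : ω * b = π / 2) (hx : x ∈ Icc 0 b) :
    ω * x ∈ Icc 0 (π / 2) := by
  have hω := (pos_of_mul_eq_pi_div_two (hx.1.trans hx.2) hωb).le
  exact ⟨mul_nonneg hω hx.1, hωb ▸ mul_le_mul_of_nonneg_left hx.2 hω⟩

lemma integral_sin_sub_cos_mul_eq_zero (hωb : ω * b = π / 2) :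
    ∫ x in 0..b, (sin (ω * x) - cos (ω * x)) = 0 := by
  have hω : ω ≠ 0 := left_ne_zero_of_mul (hωb.trans_ne pi_div_two_pos.ne')
  rw [intervalIntegral.integral_comp_mul_left (fun y ↦ sin y - cos y) hω, mul_zero, hωb,
    intervalIntegral.integral_sub (by simp) (by simp)]
  simp

lemma sin_sub_cos_mul_sub_nonneg {x : ℝ} (hωb : ω * b = π / 2)
    (hh : MonotoneOn h (Icc 0 b)) (hx : x ∈ Icc 0 b) :
    0 ≤ (sin (ω * x) - cos (ω * x)) * (h x - h (b / 2)) := by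
  have hω := (pos_of_mul_eq_pi_div_two (hx.1.trans hx.2) hωb).le
  have hωx := mul_mem_Icc_pi_div_two hωb hx
  have hmid : b / 2 ∈ Icc 0 b := by constructor <;> linarith [hx.1.trans hx.2]
  rcases le_total x (b / 2) with hxb | hbx
  · have hle : sin (ω * x) ≤ cos (ω * x) := by
      rw [← sin_pi_div_two_sub]
      exact sin_le_sin_of_le_of_le_pi_div_two (by linarith [hωx.1, pi_pos]) (by linarith [hωx.1])
        (by linarith [mul_le_mul_of_nonneg_left hxb hω])
    exact mul_nonneg_of_nonpos_of_nonpos (sub_nonpos.2 hle) (sub_nonpos.2 (hh hx hmid hxb))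
  · have hle : cos (ω * x) ≤ sin (ω * x) := by
      rw [← sin_pi_div_two_sub]
      exact sin_le_sin_of_le_of_le_pi_div_two (by linarith [hωx.2, pi_pos]) hωx.2
        (by linarith [mul_le_mul_of_nonneg_left hbx hω])
    exact mul_nonneg (sub_nonneg.2 hle) (sub_nonneg.2 (hh hmid hx hbx))

lemma one_le_sin_add_cos {y : ℝ} (hy : y ∈ Icc 0 (π / 2)) : 1 ≤ sin y + cos y := by
  have hsin := sin_nonneg_of_nonneg_of_le_pi hy.1 (by linarith [hy.2, pi_pos])
  have hcos := cos_nonneg_of_mem_Icc ⟨by linarith [hy.1, pi_pos], hy.2⟩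
  nlinarith [sin_sq_add_cos_sq y, sin_le_one y, cos_le_one y]

/-- `f` solves the Dirichlet problem `f'' + k f = h`, `f(a) = f(b) = 0` on `[a, b]`. The
derivative `f'` is carried along as a separate function. -/
structure IsDirichletSol (k a b : ℝ) (f f' h : ℝ → ℝ) : Prop where
  hasDerivWithinAt : ∀ x ∈ Icc a b, HasDerivWithinAt f (f' x) (Icc a b) x
  hasDerivWithinAt_deriv : ∀ x ∈ Icc a b, HasDerivWithinAt f' (h x - k * f x) (Icc a b) x
  left_eq_zero : f a = 0
  right_eq_zero : f b = 0

namespace IsDirichletSol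

theorem integral_mul_eq (hf : IsDirichletSol k a b f f' h) (hab : a ≤ b)
    (hh : ContinuousOn h (Icc a b)) {w w' : ℝ → ℝ} (hw : ∀ x, HasDerivAt w (w' x) x)
    (hw' : ∀ x, HasDerivAt w' (-(k * w x)) x) :
    ∫ x in a..b, w x * h x = w b * f' b - w a * f' a := by
  have hw_cont : Continuous w := continuous_iff_continuousAt.2 fun x ↦ (hw x).continuousAt
  rw [integral_eq_sub_of_hasDerivWithinAt_Icc hab (fun x hx ↦ hasDerivWithinAt_wronskian
    (hf.hasDerivWithinAt x hx) (hf.hasDerivWithinAt_deriv x hx) (hw x).hasDerivWithinAt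
    (hw' x).hasDerivWithinAt) (hw_cont.continuousOn.mul hh), hf.left_eq_zero, hf.right_eq_zero]
  ring

section QuarterPeriod

variable (hf : IsDirichletSol (ω ^ 2) 0 b f f' h) (hb : 0 ≤ b) (hωb : ω * b = π / 2)
include hf hb hωb

theorem integral_trig_mul_eq (hh : ContinuousOn h (Icc 0 b)) (α β : ℝ) :
    ∫ x in 0..b, (α * sin (ω * x) + β * cos (ω * x)) * h x = α * f' b - β * f' 0 := by
  have hw (x : ℝ) : HasDerivAt (fun y ↦ α * sin (ω * y) + β * cos (ω * y))
      (α * (ω * cos (ω * x)) + β * -(ω * sin (ω * x))) x :=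
    ((hasDerivAt_sin_mul ω x).const_mul α).add ((hasDerivAt_cos_mul ω x).const_mul β)
  have hw' (x : ℝ) : HasDerivAt (fun y ↦ α * (ω * cos (ω * y)) + β * -(ω * sin (ω * y)))
      (-(ω ^ 2 * (α * sin (ω * x) + β * cos (ω * x)))) x :=
    ((((hasDerivAt_cos_mul ω x).const_mul ω).const_mul α).add
      (((hasDerivAt_sin_mul ω x).const_mul ω).neg.const_mul β)).congr_deriv (by ring)
  simpa [hωb] using hf.integral_mul_eq hb hh hw hw'

theorem deriv_left_nonpos (hh : ContinuousOn h (Icc 0 b))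
    (hh₀ : ∀ x ∈ Icc 0 b, 0 ≤ h x) : f' 0 ≤ 0 := by
  have hint : 0 ≤ ∫ x in 0..b, (0 * sin (ω * x) + 1 * cos (ω * x)) * h x := by
    refine intervalIntegral.integral_nonneg hb fun x hx ↦ mul_nonneg ?_ (hh₀ x hx)
    have hωx := mul_mem_Icc_pi_div_two hωb hx
    simpa using cos_nonneg_of_mem_Icc ⟨by linarith [hωx.1, pi_pos], hωx.2⟩
  rw [hf.integral_trig_mul_eq hb hωb hh] at hint
  linarith

theorem deriv_right_add_deriv_left_nonneg (hh : ContinuousOn h (Icc 0 b))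
    (hmono : MonotoneOn h (Icc 0 b)) : 0 ≤ f' b + f' 0 := by
  have hint : 0 ≤ ∫ x in 0..b, (sin (ω * x) - cos (ω * x)) * (h x - h (b / 2)) :=
    intervalIntegral.integral_nonneg hb fun x ↦ sin_sub_cos_mul_sub_nonneg hωb hmono
  have hsplit : ∫ x in 0..b, (sin (ω * x) - cos (ω * x)) * (h x - h (b / 2))
      = (∫ x in 0..b, (1 * sin (ω * x) + -1 * cos (ω * x)) * h x)
        - h (b / 2) * ∫ x in 0..b, (sin (ω * x) - cos (ω * x)) := by
    rw [← intervalIntegral.integral_const_mul, ← intervalIntegral.integral_sub]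
    · exact intervalIntegral.integral_congr fun x _ ↦ by ring
    · exact ((by fun_prop : Continuous _).continuousOn.mul hh).intervalIntegrable_of_Icc hb
    · exact (by fun_prop : Continuous _).intervalIntegrable ..
  rw [hsplit, hf.integral_trig_mul_eq hb hωb hh, integral_sin_sub_cos_mul_eq_zero hωb] at hint
  linarith

theorem integral_le_deriv_right_sub_deriv_left (hh : ContinuousOn h (Icc 0 b))
    (hh₀ : ∀ x ∈ Icc 0 b, 0 ≤ h x) : ∫ x in 0..b, h x ≤ f' b - f' 0 := by
  calc ∫ x in 0..b, h x
      ≤ ∫ x in 0..b, (1 * sin (ω * x) + 1 * cos (ω * x)) * h x := by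
        refine intervalIntegral.integral_mono_on hb (hh.intervalIntegrable_of_Icc hb)
          (((by fun_prop : Continuous _).continuousOn.mul hh).intervalIntegrable_of_Icc hb)
          fun x hx ↦ le_mul_of_one_le_left (hh₀ x hx) ?_
        simpa using one_le_sin_add_cos (mul_mem_Icc_pi_div_two hωb hx)
    _ = f' b - f' 0 := by rw [hf.integral_trig_mul_eq hb hωb hh, one_mul, one_mul]

theorem abs_deriv_le {K x : ℝ} (hh : ∀ y ∈ Icc 0 b, |h y| ≤ K) (hx : x ∈ Icc 0 b) :
    |f' x| ≤ K * b := by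
  set U : ℝ → ℝ := fun y ↦ sin (ω * y) * f' y - ω * cos (ω * y) * f y with hU
  set V : ℝ → ℝ := fun y ↦ cos (ω * y) * f' y - -(ω * sin (ω * y)) * f y with hV
  have hU' : ∀ y ∈ Icc 0 b, HasDerivWithinAt U (sin (ω * y) * h y) (Icc 0 b) y := fun y hy ↦
    hasDerivWithinAt_wronskian (hf.hasDerivWithinAt y hy) (hf.hasDerivWithinAt_deriv y hy)
      (hasDerivAt_sin_mul ω y).hasDerivWithinAt
      (((hasDerivAt_cos_mul ω y).const_mul ω).congr_deriv (by ring)).hasDerivWithinAt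
  have hV' : ∀ y ∈ Icc 0 b, HasDerivWithinAt V (cos (ω * y) * h y) (Icc 0 b) y := fun y hy ↦
    hasDerivWithinAt_wronskian (hf.hasDerivWithinAt y hy) (hf.hasDerivWithinAt_deriv y hy)
      (hasDerivAt_cos_mul ω y).hasDerivWithinAt
      (((hasDerivAt_sin_mul ω y).const_mul ω).neg.congr_deriv (by ring)).hasDerivWithinAt
  have hbound {c z B : ℝ} (hc : |c| ≤ 1) (hz : |z| ≤ B) : |c * z| ≤ B := by
    rw [abs_mul]
    exact (mul_le_of_le_one_left (abs_nonneg z) hc).trans hz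
  have hUx : |U x| ≤ K * |x - 0| := abs_le_mul_abs_sub_of_abs_deriv_le hU'
    (fun y hy ↦ hbound (abs_sin_le_one _) (hh y hy)) ⟨le_rfl, hb⟩ hx (by simp [hU, hf.left_eq_zero])
  have hVx : |V x| ≤ K * |x - b| := abs_le_mul_abs_sub_of_abs_deriv_le hV'
    (fun y hy ↦ hbound (abs_cos_le_one _) (hh y hy)) ⟨hb, le_rfl⟩ hx
    (by simp [hV, hωb, hf.right_eq_zero])
  calc |f' x| = |sin (ω * x) * U x + cos (ω * x) * V x| := by
        congr 1
        linear_combination -f' x * sin_sq_add_cos_sq (ω * x)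
    _ ≤ |sin (ω * x) * U x| + |cos (ω * x) * V x| := abs_add_le _ _
    _ ≤ K * |x - 0| + K * |x - b| :=
        add_le_add (hbound (abs_sin_le_one _) hUx) (hbound (abs_cos_le_one _) hVx)
    _ = K * b := by
        rw [abs_of_nonneg (sub_nonneg.2 hx.1), abs_of_nonpos (sub_nonpos.2 hx.2)]
        ring

end QuarterPeriod

end IsDirichletSol

end DirichletProblem

section RiccatiBlowup

variable {a b T : ℝ}

lemma exists_primitive_of_continuousOn_Icc {f : ℝ → ℝ} (hab : a ≤ b)
    (hf : ContinuousOn f (Icc a b)) :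
    ∃ F : ℝ → ℝ, F a = 0 ∧ ∀ x ∈ Icc a b, HasDerivAt F (f x) x := by
  refine ⟨fun x ↦ ∫ y in a..x, IccExtend hab ((Icc a b).domRestrict f) y,
    intervalIntegral.integral_same, fun x hx ↦ ?_⟩
  have hderiv := ((hf.domRestrict.Icc_extend' (h := hab)).integral_hasStrictDerivAt a x).hasDerivAt
  rwa [IccExtend_of_mem _ _ hx] at hderiv

theorem mul_sub_le_arctan_sub_arctan {y y' : ℝ → ℝ} {r : ℝ} (hab : a ≤ b)
    (hy : ContinuousOn y (Icc a b)) (hy' : ∀ x ∈ Ioo a b, HasDerivAt y (y' x) x)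
    (hriccati : ∀ x ∈ Ioo a b, r * (1 + y x ^ 2) ≤ y' x) :
    r * (b - a) ≤ arctan (y b) - arctan (y a) := by
  have hmono : MonotoneOn (fun x ↦ arctan (y x) - r * x) (Icc a b) := by
    refine monotoneOn_Icc_of_hasDerivAt_nonneg
      ((continuous_arctan.comp_continuousOn hy).sub (by fun_prop))
      (fun x hx ↦ (hy' x hx).arctan.sub ((hasDerivAt_id x).const_mul r)) fun x hx ↦ ?_
    have hpos : 0 < 1 + y x ^ 2 := by positivity
    rw [mul_one, one_div, inv_mul_eq_div, sub_nonneg, le_div_iff₀ hpos]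
    exact hriccati x hx
  have hends := hmono ⟨le_rfl, hab⟩ ⟨hab, le_rfl⟩ hab
  simp only at hends
  linarith

theorem lt_pi_div_sqrt_of_riccati {N N' : ℝ → ℝ} {δ : ℝ} (hT : 0 ≤ T) (hδ : 0 < δ)
    (hN : ContinuousOn N (Icc 0 T)) (hN' : ∀ t ∈ Ioo 0 T, HasDerivAt N (N' t) t)
    (hN₀ : 0 ≤ N 0) (hriccati : ∀ t ∈ Ioo 0 T, δ + N t ^ 2 / 4 ≤ N' t) : T < π / √δ := by
  set r := √δ
  have hr : 0 < r := sqrt_pos.2 hδ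
  have hrδ : r ^ 2 = δ := sq_sqrt hδ.le
  have harctan := mul_sub_le_arctan_sub_arctan (y := fun t ↦ N t / (2 * r)) (r := r / 2) hT
    (hN.div_const _) (fun t ht ↦ (hN' t ht).div_const _) fun t ht ↦ by
      rw [le_div_iff₀ (by positivity)]
      calc r / 2 * (1 + (N t / (2 * r)) ^ 2) * (2 * r) = δ + N t ^ 2 / 4 := by
            rw [← hrδ]
            field_simp
            ring
        _ ≤ N' t := hriccati t ht
  have hstart : 0 ≤ arctan (N 0 / (2 * r)) := arctan_nonneg.2 (by positivity)
  rw [lt_div_iff₀ hr]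
  linarith [arctan_lt_pi_div_two (N T / (2 * r))]

variable {p p' M M' N : ℝ → ℝ} {c q : ℝ}

/-- `p - N² / (4c)` is nondecreasing, because `N N' ≤ c N p ≤ 2c p'`. -/
lemma add_sq_div_le_of_coupled (hc : 0 < c) (hq : 0 ≤ q) (hp : ContinuousOn p (Icc 0 T))
    (hp' : ∀ t ∈ Ioo 0 T, HasDerivAt p (p' t) t)
    (hN' : ∀ t ∈ Icc 0 T, HasDerivAt N (c * p t - q) t) (hN₀ : N 0 = 0)
    (hN : ∀ t ∈ Icc 0 T, 0 ≤ N t) (hp_growth : ∀ t ∈ Ioo 0 T, N t * p t / 2 ≤ p' t)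
    {t : ℝ} (ht : t ∈ Icc 0 T) : p 0 + N t ^ 2 / (4 * c) ≤ p t := by
  have hmono : MonotoneOn (fun s ↦ p s - N s ^ 2 / (4 * c)) (Icc 0 T) := by
    refine monotoneOn_Icc_of_hasDerivAt_nonneg
      (hp.sub (((HasDerivAt.continuousOn hN').pow 2).div_const _))
      (fun s hs ↦ (hp' s hs).sub
        (((hN' s (Ioo_subset_Icc_self hs)).pow 2).div_const (4 * c))) fun s hs ↦ ?_
    have hqN : 0 ≤ q * N s / (2 * c) :=
      div_nonneg (mul_nonneg hq (hN s (Ioo_subset_Icc_self hs))) (by positivity)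
    calc 0 ≤ (p' s - N s * p s / 2) + q * N s / (2 * c) :=
          add_nonneg (sub_nonneg.2 (hp_growth s hs)) hqN
      _ = _ := by
          simp only [Nat.cast_ofNat, Nat.add_one_sub_one, pow_one]
          field_simp
          ring
  have h₀t := hmono ⟨le_rfl, ht.1.trans ht.2⟩ ht ht.1
  simp only [hN₀, zero_pow two_ne_zero, zero_div] at h₀t
  linarith

theorem lt_pi_div_sqrt_of_coupled_growth (hT : 0 ≤ T) (hq : 0 ≤ q)
    (hqp : q < c * p 0) (hp : ContinuousOn p (Icc 0 T)) (hM : ContinuousOn M (Icc 0 T))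
    (hp' : ∀ t ∈ Ioo 0 T, HasDerivAt p (p' t) t) (hM' : ∀ t ∈ Ioo 0 T, HasDerivAt M (M' t) t)
    (hp₀ : ∀ t ∈ Icc 0 T, 0 ≤ p t) (hM₀ : ∀ t ∈ Icc 0 T, 0 ≤ M t)
    (hp_growth : ∀ t ∈ Ioo 0 T, M t * p t / 2 ≤ p' t)
    (hM_growth : ∀ t ∈ Ioo 0 T, c * p t - q ≤ M' t) : T < π / √(c * p 0 - q) := by
  obtain ⟨N, hN₀, hN'⟩ := exists_primitive_of_continuousOn_Icc hT
    ((hp.const_mul c).sub (continuousOn_const (c := q)))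
  have h0 : (0 : ℝ) ∈ Icc 0 T := ⟨le_rfl, hT⟩
  have hc : 0 < c := pos_of_mul_pos_left (hq.trans_lt hqp) (hp₀ 0 h0)
  have hN_cont : ContinuousOn N (Icc 0 T) := HasDerivAt.continuousOn hN'
  have hN'_Ioo : ∀ t ∈ Ioo 0 T, HasDerivAt N (c * p t - q) t :=
    fun t ht ↦ hN' t (Ioo_subset_Icc_self ht)
  have hp_mono : MonotoneOn p (Icc 0 T) :=
    monotoneOn_Icc_of_hasDerivAt_nonneg hp hp' fun t ht ↦ (div_nonneg
      (mul_nonneg (hM₀ t (Ioo_subset_Icc_self ht)) (hp₀ t (Ioo_subset_Icc_self ht)))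
      zero_le_two).trans (hp_growth t ht)
  have hN_mono : MonotoneOn N (Icc 0 T) :=
    monotoneOn_Icc_of_hasDerivAt_nonneg hN_cont hN'_Ioo fun t ht ↦ sub_nonneg.2 <|
      hqp.le.trans (mul_le_mul_of_nonneg_left
        (hp_mono h0 (Ioo_subset_Icc_self ht) ht.1.le) hc.le)
  have hN_nonneg : ∀ t ∈ Icc 0 T, 0 ≤ N t := fun t ht ↦ hN₀ ▸ hN_mono h0 ht ht.1
  have hMN_mono : MonotoneOn (fun t ↦ M t - N t) (Icc 0 T) :=
    monotoneOn_Icc_of_hasDerivAt_nonneg (hM.sub hN_cont)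
      (fun t ht ↦ (hM' t ht).sub (hN'_Ioo t ht)) fun t ht ↦ sub_nonneg.2 (hM_growth t ht)
  have hNM : ∀ t ∈ Icc 0 T, N t ≤ M t := fun t ht ↦ by
    have h₀t := hMN_mono h0 ht ht.1
    simp only [hN₀] at h₀t
    linarith [hM₀ 0 h0]
  refine lt_pi_div_sqrt_of_riccati hT (sub_pos.2 hqp) hN_cont hN'_Ioo hN₀.ge fun t ht ↦ ?_
  have ht' := Ioo_subset_Icc_self ht
  have hp_lower := add_sq_div_le_of_coupled hc hq hp hp' hN' hN₀ hN_nonneg (fun s hs ↦ by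
    have hs' := Ioo_subset_Icc_self hs
    linarith [hp_growth s hs, mul_le_mul_of_nonneg_right (hNM s hs') (hp₀ s hs')]) ht'
  have hscaled := mul_le_mul_of_nonneg_left hp_lower hc.le
  have hcancel : c * (p 0 + N t ^ 2 / (4 * c)) = c * p 0 + N t ^ 2 / 4 := by field_simp
  linarith

end RiccatiBlowup

section Solutions

lemma convex_I14 : Convex ℝ I14 := convex_Icc _ _

lemma interior_I14_nonempty : (interior I14).Nonempty := by
  rw [I14, interior_Icc, nonempty_Ioo]
  linarith [pi_pos]

lemma uniqueDiffOn_I14 : UniqueDiffOn ℝ I14 :=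
  uniqueDiffOn_convex convex_I14 interior_I14_nonempty

lemma Icc_subset_I14 : Icc 0 (π / 4) ⊆ I14 := Icc_subset_Icc_left (by linarith [pi_pos])

lemma zero_mem_Icc_pi_div_four : (0 : ℝ) ∈ Icc 0 (π / 4) := ⟨le_rfl, by positivity⟩

lemma pi_div_four_mem_Icc : π / 4 ∈ Icc 0 (π / 4) := ⟨by positivity, le_rfl⟩

/-- A solution on a nondegenerate time interval `J` that is regular enough, up to the boundary,
for the equations to be differentiated once (`g`) or twice (`P`) in `θ`. -/
structure IsRegularSol (J : Set ℝ) (g P G : ℝ → ℝ → ℝ) : Prop extends OneDSol J g P G where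
  convex : Convex ℝ J
  interior_nonempty : (interior J).Nonempty
  contDiffOn_g : ContDiffOn ℝ 2 ↿g (J ×ˢ I14)
  contDiffOn_P : ContDiffOn ℝ 3 ↿P (J ×ˢ I14)

namespace IsRegularSol

variable {J : Set ℝ} {g P G : ℝ → ℝ → ℝ} {t T θ : ℝ}

local notation "∂ₜ" => partialFst J
local notation "∂θ" => partialSnd I14

section Regularity

variable (h : IsRegularSol J g P G)
include h

lemma uniqueDiffOn : UniqueDiffOn ℝ J := uniqueDiffOn_convex h.convex h.interior_nonempty

lemma contDiffOn_partialSnd_g : ContDiffOn ℝ 1 ↿(∂θ g) (J ×ˢ I14) :=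
  contDiffOn_partialSnd h.uniqueDiffOn uniqueDiffOn_I14 h.contDiffOn_g (by norm_num)

lemma contDiffOn_partialFst_g : ContDiffOn ℝ 1 ↿(∂ₜ g) (J ×ˢ I14) :=
  contDiffOn_partialFst h.uniqueDiffOn uniqueDiffOn_I14 h.contDiffOn_g (by norm_num)

lemma contDiffOn_partialSnd_P : ContDiffOn ℝ 2 ↿(∂θ P) (J ×ˢ I14) :=
  contDiffOn_partialSnd h.uniqueDiffOn uniqueDiffOn_I14 h.contDiffOn_P (by norm_num)

lemma contDiffOn_partialSnd_partialSnd_P : ContDiffOn ℝ 1 ↿(∂θ (∂θ P)) (J ×ˢ I14) :=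
  contDiffOn_partialSnd h.uniqueDiffOn uniqueDiffOn_I14 h.contDiffOn_partialSnd_P (by norm_num)

lemma differentiableOn_g : DifferentiableOn ℝ ↿g (J ×ˢ I14) :=
  h.contDiffOn_g.differentiableOn two_ne_zero

lemma differentiableOn_P : DifferentiableOn ℝ ↿P (J ×ˢ I14) :=
  h.contDiffOn_P.differentiableOn three_ne_zero

lemma differentiableOn_partialSnd_g : DifferentiableOn ℝ ↿(∂θ g) (J ×ˢ I14) :=
  h.contDiffOn_partialSnd_g.differentiableOn one_ne_zero

lemma differentiableOn_partialSnd_P : DifferentiableOn ℝ ↿(∂θ P) (J ×ˢ I14) :=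
  h.contDiffOn_partialSnd_P.differentiableOn two_ne_zero

lemma differentiableOn_partialSnd_partialSnd_P : DifferentiableOn ℝ ↿(∂θ (∂θ P)) (J ×ˢ I14) :=
  h.contDiffOn_partialSnd_partialSnd_P.differentiableOn one_ne_zero

lemma hasDerivWithinAt_G (ht : t ∈ J) (hθ : θ ∈ I14) :
    HasDerivWithinAt (G t) (∂θ G t θ) I14 θ :=
  ((h.G_C2 t ht).differentiableOn two_ne_zero θ hθ).hasDerivWithinAt

lemma hasDerivWithinAt_partialSnd_G (ht : t ∈ J) (hθ : θ ∈ I14) :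
    HasDerivWithinAt (∂θ G t) (g t θ - 4 * G t θ) I14 θ := by
  have hdiff : DifferentiableOn ℝ (∂θ G t) I14 :=
    ((h.G_C2 t ht).derivWithin uniqueDiffOn_I14 (m := 1) (by norm_num)).differentiableOn one_ne_zero
  refine (hdiff θ hθ).hasDerivWithinAt.congr_deriv ?_
  rw [← h.G_eq t ht θ hθ, add_sub_cancel_right, ← partialSnd_partialSnd_eq_iteratedDerivWithin,
    partialSnd]

end Regularity

section Equations

variable (h : IsRegularSol J g P G) (ht : t ∈ J)
include h ht

lemma G_zero : G t 0 = 0 := by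
  have hodd := h.G_odd t ht 0 (Icc_subset_I14 zero_mem_Icc_pi_div_four)
  rw [neg_zero] at hodd
  linarith

lemma g_zero : g t 0 = 0 := by
  have hodd := h.g_odd t ht 0 (Icc_subset_I14 zero_mem_Icc_pi_div_four)
  rw [neg_zero] at hodd
  linarith

theorem isDirichletSol : IsDirichletSol (2 ^ 2) 0 (π / 4) (G t) (∂θ G t) (g t) where
  hasDerivWithinAt x hx := (h.hasDerivWithinAt_G ht (Icc_subset_I14 hx)).mono Icc_subset_I14
  hasDerivWithinAt_deriv x hx :=
    ((h.hasDerivWithinAt_partialSnd_G ht (Icc_subset_I14 hx)).mono Icc_subset_I14).congr_deriv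
      (by norm_num)
  left_eq_zero := h.G_zero ht
  right_eq_zero := h.G_bc₁ t ht

lemma continuousOn_g : ContinuousOn (g t) (Icc 0 (π / 4)) :=
  (h.contDiffOn_g.continuousOn.uncurry_left t ht).mono Icc_subset_I14

lemma partialFst_g (hθ : θ ∈ I14) :
    ∂ₜ g t θ = sin θ * P t θ + cos θ * ∂θ P t θ - 2 * G t θ * ∂θ g t θ :=
  eq_sub_of_add_eq (h.eq_g t ht θ hθ)

lemma partialFst_P (hθ : θ ∈ I14) : ∂ₜ P t θ = P t θ * ∂θ G t θ - 2 * G t θ * ∂θ P t θ :=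
  eq_sub_of_add_eq (h.eq_P t ht θ hθ)

lemma partialFst_partialSnd_g (hθ : θ ∈ I14) :
    ∂ₜ (∂θ g) t θ = -2 * ∂θ G t θ * ∂θ g t θ + cos θ * (P t θ + ∂θ (∂θ P) t θ)
      - 2 * G t θ * ∂θ (∂θ g) t θ := by
  have hrhs : HasDerivWithinAt (∂ₜ g t) _ I14 θ :=
    (((((hasDerivAt_sin θ).hasDerivWithinAt.mul
      (hasDerivWithinAt_partialSnd h.differentiableOn_P ht hθ)).add
    ((hasDerivAt_cos θ).hasDerivWithinAt.mul
      (hasDerivWithinAt_partialSnd h.differentiableOn_partialSnd_P ht hθ))).sub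
    (((h.hasDerivWithinAt_G ht hθ).const_mul 2).mul
      (hasDerivWithinAt_partialSnd h.differentiableOn_partialSnd_g ht hθ)))).congr_of_mem
    (fun x hx ↦ h.partialFst_g ht hx) hθ
  rw [partialFst_partialSnd_comm h.convex h.interior_nonempty convex_I14 interior_I14_nonempty
    h.contDiffOn_g ht hθ, partialSnd, hrhs.derivWithin (uniqueDiffOn_I14 θ hθ)]
  ring

lemma partialFst_partialSnd_P (hθ : θ ∈ I14) :
    ∂ₜ (∂θ P) t θ = -(∂θ G t θ * ∂θ P t θ) + P t θ * (g t θ - 4 * G t θ)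
      - 2 * G t θ * ∂θ (∂θ P) t θ := by
  have hrhs : HasDerivWithinAt (∂ₜ P t) _ I14 θ :=
    (((hasDerivWithinAt_partialSnd h.differentiableOn_P ht hθ).mul
      (h.hasDerivWithinAt_partialSnd_G ht hθ)).sub
    (((h.hasDerivWithinAt_G ht hθ).const_mul 2).mul
      (hasDerivWithinAt_partialSnd h.differentiableOn_partialSnd_P ht hθ))).congr_of_mem
    (fun x hx ↦ h.partialFst_P ht hx) hθ
  rw [partialFst_partialSnd_comm h.convex h.interior_nonempty convex_I14 interior_I14_nonempty
    (h.contDiffOn_P.of_le (by norm_num)) ht hθ, partialSnd,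
    hrhs.derivWithin (uniqueDiffOn_I14 θ hθ)]
  ring

lemma partialFst_partialSnd_partialSnd_P (hθ : θ ∈ I14) :
    ∂ₜ (∂θ (∂θ P)) t θ = -3 * ∂θ G t θ * ∂θ (∂θ P) t θ + P t θ * (∂θ g t θ - 4 * ∂θ G t θ)
      - 2 * G t θ * ∂θ (∂θ (∂θ P)) t θ := by
  have hrhs : HasDerivWithinAt (∂ₜ (∂θ P) t) _ I14 θ :=
    ((((h.hasDerivWithinAt_partialSnd_G ht hθ).mul
      (hasDerivWithinAt_partialSnd h.differentiableOn_partialSnd_P ht hθ)).neg.add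
    ((hasDerivWithinAt_partialSnd h.differentiableOn_P ht hθ).mul
      ((hasDerivWithinAt_partialSnd h.differentiableOn_g ht hθ).sub
        ((h.hasDerivWithinAt_G ht hθ).const_mul 4)))).sub
    (((h.hasDerivWithinAt_G ht hθ).const_mul 2).mul (hasDerivWithinAt_partialSnd
      h.differentiableOn_partialSnd_partialSnd_P ht hθ))).congr_of_mem
    (fun x hx ↦ h.partialFst_partialSnd_P ht hx) hθ
  rw [partialFst_partialSnd_comm h.convex h.interior_nonempty convex_I14 interior_I14_nonempty
    h.contDiffOn_partialSnd_P ht hθ, partialSnd, hrhs.derivWithin (uniqueDiffOn_I14 θ hθ)]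
  simp only [Pi.sub_apply]
  ring

lemma partialFst_P_pi_div_four : ∂ₜ P t (π / 4) = P t (π / 4) * ∂θ G t (π / 4) := by
  simp [h.partialFst_P ht (Icc_subset_I14 pi_div_four_mem_Icc), h.G_bc₁ t ht]

lemma partialFst_P_zero : ∂ₜ P t 0 = P t 0 * ∂θ G t 0 := by
  simp [h.partialFst_P ht (Icc_subset_I14 zero_mem_Icc_pi_div_four), h.G_zero ht]

end Equations

section Positivity

lemma hasDerivWithinAt_partialFst_Icc {F : ℝ → ℝ → ℝ} (hTJ : Icc 0 T ⊆ J)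
    (hF : DifferentiableOn ℝ ↿F (J ×ˢ I14)) :
    ∀ t ∈ Icc 0 T, ∀ x ∈ Icc 0 (π / 4), HasDerivWithinAt (F · x) (∂ₜ F t x) (Icc 0 T) t :=
  fun _ ht _ hx ↦ (hasDerivWithinAt_partialFst hF (hTJ ht) (Icc_subset_I14 hx)).mono hTJ

lemma hasDerivWithinAt_partialSnd_Icc {F : ℝ → ℝ → ℝ} (hTJ : Icc 0 T ⊆ J)
    (hF : DifferentiableOn ℝ ↿F (J ×ˢ I14)) :
    ∀ t ∈ Icc 0 T, ∀ x ∈ Icc 0 (π / 4), HasDerivWithinAt (F t) (∂θ F t x) (Icc 0 (π / 4)) x :=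
  fun _ ht _ hx ↦
    (hasDerivWithinAt_partialSnd hF (hTJ ht) (Icc_subset_I14 hx)).mono Icc_subset_I14

/-- The coefficients of the system of transport equations satisfied by `∂θ g` and
`P + ∂θ (∂θ P)`. It is cooperative as long as `0 ≤ P`. -/
def reactionMatrix (P G : ℝ → ℝ → ℝ) (t θ : ℝ) : Matrix (Fin 2) (Fin 2) ℝ :=
  !![-2 * ∂θ G t θ, cos θ; P t θ, -3 * ∂θ G t θ]

lemma reactionMatrix_nonneg_of_ne {i j : Fin 2} (hij : j ≠ i) (hP : 0 ≤ P t θ)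
    (hθ : θ ∈ Icc 0 (π / 4)) : 0 ≤ reactionMatrix P G t θ i j := by
  have hcos : 0 ≤ cos θ :=
    cos_nonneg_of_mem_Icc ⟨by linarith [hθ.1, pi_pos], by linarith [hθ.2, pi_pos]⟩
  fin_cases i <;> fin_cases j <;> simp_all [reactionMatrix]

variable (h : IsRegularSol J g P G) (hTJ : Icc 0 T ⊆ J)
include h hTJ

lemma exists_abs_partialSnd_G_le :
    ∃ C, ∀ t ∈ Icc 0 T, ∀ θ ∈ Icc 0 (π / 4), |∂θ G t θ| ≤ C := by
  obtain ⟨C, hC⟩ := (isCompact_Icc.prod isCompact_Icc).exists_bound_of_continuousOn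
    (h.contDiffOn_g.continuousOn.mono (prod_mono hTJ Icc_subset_I14))
  exact ⟨C * (π / 4), fun t ht θ hθ ↦ (h.isDirichletSol (hTJ ht)).abs_deriv_le (by positivity)
    (by ring) (fun y hy ↦ hC (t, y) ⟨ht, hy⟩) hθ⟩

lemma exists_rowSum_reactionMatrix_le :
    ∃ L, ∀ i, ∀ t ∈ Icc 0 T, ∀ θ ∈ Icc 0 (π / 4), ∑ j, reactionMatrix P G t θ i j ≤ L := by
  obtain ⟨C, hC⟩ := h.exists_abs_partialSnd_G_le hTJ
  obtain ⟨B, hB⟩ := (isCompact_Icc.prod isCompact_Icc).exists_bound_of_continuousOn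
    (h.contDiffOn_P.continuousOn.mono (prod_mono hTJ Icc_subset_I14))
  refine ⟨3 * C + 1 + B, Fin.forall_fin_two.2 ⟨fun t ht θ hθ ↦ ?_, fun t ht θ hθ ↦ ?_⟩⟩
  all_goals
    have hG := abs_le.1 (hC t ht θ hθ)
    have hP : |P t θ| ≤ B := hB (t, θ) ⟨ht, hθ⟩
    simp only [reactionMatrix, Matrix.of_apply, Fin.sum_univ_two, Matrix.cons_val_zero,
      Matrix.cons_val_one]
    linarith [cos_le_one θ, abs_le.1 hP, abs_nonneg (P t θ)]

theorem P_nonneg (hP₀ : ∀ θ ∈ Icc 0 (π / 4), 0 ≤ P 0 θ) (ht : t ∈ Icc 0 T)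
    (hθ : θ ∈ Icc 0 (π / 4)) : 0 ≤ P t θ := by
  obtain ⟨C, hC⟩ := h.exists_abs_partialSnd_G_le hTJ
  refine nonneg_of_cooperative_transport (ι := Unit) (u := fun _ ↦ P) (v := fun _ t x ↦ 2 * G t x)
    (A := fun t x ↦ .of fun _ _ ↦ ∂θ G t x) (L := C)
    (fun _ ↦ h.contDiffOn_P.continuousOn.mono (prod_mono hTJ Icc_subset_I14))
    (fun _ ↦ hasDerivWithinAt_partialFst_Icc hTJ h.differentiableOn_P)
    (fun _ ↦ hasDerivWithinAt_partialSnd_Icc hTJ h.differentiableOn_P)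
    (fun _ t ht ↦ by rw [h.G_zero (hTJ ht), mul_zero])
    (fun _ t ht ↦ by rw [h.G_bc₁ t (hTJ ht), mul_zero])
    (fun i j hij ↦ absurd (Subsingleton.elim j i) hij)
    (fun _ t ht x hx ↦ by simpa using (le_abs_self _).trans (hC t ht x hx))
    (fun _ t ht x hx ↦ ?_) (fun _ ↦ hP₀) () t ht θ hθ
  simp only [Matrix.of_apply, Finset.univ_unique, Finset.sum_singleton,
    h.partialFst_P (hTJ ht) (Icc_subset_I14 hx)]
  linarith

theorem partialSnd_g_nonneg (hP₀ : ∀ θ ∈ Icc 0 (π / 4), 0 ≤ P 0 θ)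
    (hg₀ : ∀ θ ∈ Icc 0 (π / 4), 0 ≤ ∂θ g 0 θ)
    (hPP₀ : ∀ θ ∈ Icc 0 (π / 4), 0 ≤ P 0 θ + ∂θ (∂θ P) 0 θ) (ht : t ∈ Icc 0 T)
    (hθ : θ ∈ Icc 0 (π / 4)) : 0 ≤ ∂θ g t θ := by
  obtain ⟨L, hL⟩ := h.exists_rowSum_reactionMatrix_le hTJ
  have hJI := prod_mono hTJ Icc_subset_I14
  refine nonneg_of_cooperative_transport (u := ![∂θ g, fun t x ↦ P t x + ∂θ (∂θ P) t x])
    (u_t := ![∂ₜ (∂θ g), fun t x ↦ ∂ₜ P t x + ∂ₜ (∂θ (∂θ P)) t x])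
    (u_x := ![∂θ (∂θ g), fun t x ↦ ∂θ P t x + ∂θ (∂θ (∂θ P)) t x])
    (v := fun _ t x ↦ 2 * G t x) (A := reactionMatrix P G)
    (Fin.forall_fin_two.2 ⟨h.contDiffOn_partialSnd_g.continuousOn.mono hJI,
      (h.contDiffOn_P.continuousOn.add
        h.contDiffOn_partialSnd_partialSnd_P.continuousOn).mono hJI⟩)
    (Fin.forall_fin_two.2
      ⟨hasDerivWithinAt_partialFst_Icc hTJ h.differentiableOn_partialSnd_g, fun t ht x hx ↦
        (hasDerivWithinAt_partialFst_Icc hTJ h.differentiableOn_P t ht x hx).add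
        (hasDerivWithinAt_partialFst_Icc hTJ h.differentiableOn_partialSnd_partialSnd_P t ht x hx)⟩)
    (Fin.forall_fin_two.2
      ⟨hasDerivWithinAt_partialSnd_Icc hTJ h.differentiableOn_partialSnd_g, fun t ht x hx ↦
        (hasDerivWithinAt_partialSnd_Icc hTJ h.differentiableOn_P t ht x hx).add
        (hasDerivWithinAt_partialSnd_Icc hTJ h.differentiableOn_partialSnd_partialSnd_P t ht x hx)⟩)
    (fun _ t ht ↦ by rw [h.G_zero (hTJ ht), mul_zero])
    (fun _ t ht ↦ by rw [h.G_bc₁ t (hTJ ht), mul_zero])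
    (fun i j hij t ht x hx ↦ reactionMatrix_nonneg_of_ne hij (h.P_nonneg hTJ hP₀ ht hx) hx) hL ?_
    (Fin.forall_fin_two.2 ⟨hg₀, hPP₀⟩) 0 t ht θ hθ
  simp only [reactionMatrix, Matrix.of_apply, Fin.sum_univ_two, Fin.forall_fin_two,
    Matrix.cons_val_zero, Matrix.cons_val_one]
  refine ⟨fun t ht x hx ↦ ?_, fun t ht x hx ↦ ?_⟩
  · linarith [h.partialFst_partialSnd_g (hTJ ht) (Icc_subset_I14 hx)]
  · linarith [h.partialFst_P (hTJ ht) (Icc_subset_I14 hx),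
      h.partialFst_partialSnd_partialSnd_P (hTJ ht) (Icc_subset_I14 hx)]

end Positivity

section TotalVorticity

section Slice

variable (h : IsRegularSol J g P G) (ht : t ∈ J)
include h ht

lemma hasDerivWithinAt_vorticity_primitive (hθ : θ ∈ I14) :
    HasDerivWithinAt (fun x ↦ -2 * G t x * g t x + ∂θ G t x ^ 2 + 4 * G t x ^ 2 + cos x * P t x)
      (∂ₜ g t θ - 2 * (sin θ * P t θ)) I14 θ := by
  have hG := h.hasDerivWithinAt_G ht hθ
  refine (((((hG.const_mul (-2)).mul (hasDerivWithinAt_partialSnd h.differentiableOn_g ht hθ)).add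
    ((h.hasDerivWithinAt_partialSnd_G ht hθ).pow 2)).add ((hG.pow 2).const_mul 4)).add
    ((hasDerivAt_cos θ).hasDerivWithinAt.mul
      (hasDerivWithinAt_partialSnd h.differentiableOn_P ht hθ))).congr_deriv ?_
  rw [h.partialFst_g ht hθ]
  simp only [Nat.cast_ofNat, Nat.add_one_sub_one, pow_one]
  ring

theorem integral_partialFst_g : ∫ θ in 0..π / 4, ∂ₜ g t θ
    = ∂θ G t (π / 4) ^ 2 - ∂θ G t 0 ^ 2 + cos (π / 4) * P t (π / 4) - P t 0
      + 2 * ∫ θ in 0..π / 4, sin θ * P t θ := by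
  have hpi : 0 ≤ π / 4 := by positivity
  have hcont_g : ContinuousOn (∂ₜ g t) (Icc 0 (π / 4)) :=
    (h.contDiffOn_partialFst_g.continuousOn.uncurry_left t ht).mono Icc_subset_I14
  have hcont_P : ContinuousOn (fun θ ↦ 2 * (sin θ * P t θ)) (Icc 0 (π / 4)) :=
    continuousOn_const.mul (continuous_sin.continuousOn.mul
      ((h.contDiffOn_P.continuousOn.uncurry_left t ht).mono Icc_subset_I14))
  have hint := integral_eq_sub_of_hasDerivWithinAt_Icc hpi (fun θ hθ ↦
    (h.hasDerivWithinAt_vorticity_primitive ht (Icc_subset_I14 hθ)).mono Icc_subset_I14)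
    (hcont_g.sub hcont_P)
  rw [intervalIntegral.integral_sub (hcont_g.intervalIntegrable_of_Icc hpi)
    (hcont_P.intervalIntegrable_of_Icc hpi), intervalIntegral.integral_const_mul] at hint
  simp only [h.G_zero ht, h.G_bc₁ t ht, cos_zero] at hint
  linarith

lemma monotoneOn_g (hg : ∀ θ ∈ Icc 0 (π / 4), 0 ≤ ∂θ g t θ) :
    MonotoneOn (g t) (Icc 0 (π / 4)) :=
  monotoneOn_of_hasDerivWithinAt_nonneg (convex_Icc _ _) (h.continuousOn_g ht)
    (fun _ hθ ↦ (hasDerivWithinAt_partialSnd h.differentiableOn_g ht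
      (Icc_subset_I14 (interior_subset hθ))).mono (interior_subset.trans Icc_subset_I14))
    fun θ hθ ↦ hg θ (interior_subset hθ)

variable (hg : ∀ θ ∈ Icc 0 (π / 4), 0 ≤ ∂θ g t θ)
include hg

lemma g_nonneg : ∀ θ ∈ Icc 0 (π / 4), 0 ≤ g t θ := fun _ hθ ↦
  (h.g_zero ht).symm.trans_le (h.monotoneOn_g ht hg zero_mem_Icc_pi_div_four hθ hθ.1)

lemma partialSnd_G_zero_nonpos : ∂θ G t 0 ≤ 0 :=
  (h.isDirichletSol ht).deriv_left_nonpos (by positivity) (by ring)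
    (h.continuousOn_g ht) (h.g_nonneg ht hg)

lemma neg_partialSnd_G_zero_le : -∂θ G t 0 ≤ ∂θ G t (π / 4) :=
  neg_le_iff_add_nonneg.2 <| (h.isDirichletSol ht).deriv_right_add_deriv_left_nonneg
    (by positivity) (by ring) (h.continuousOn_g ht) (h.monotoneOn_g ht hg)

theorem integral_g_div_two_le : (∫ θ in 0..π / 4, g t θ) / 2 ≤ ∂θ G t (π / 4) := by
  linarith [h.neg_partialSnd_G_zero_le ht hg,
    (h.isDirichletSol ht).integral_le_deriv_right_sub_deriv_left (by positivity) (by ring)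
      (h.continuousOn_g ht) (h.g_nonneg ht hg)]

theorem le_integral_partialFst_g (hP : ∀ θ ∈ Icc 0 (π / 4), 0 ≤ P t θ) :
    √2 / 2 * P t (π / 4) - P t 0 ≤ ∫ θ in 0..π / 4, ∂ₜ g t θ := by
  have hsq : ∂θ G t 0 ^ 2 ≤ ∂θ G t (π / 4) ^ 2 := by
    rw [← neg_sq (∂θ G t 0)]
    exact pow_le_pow_left₀ (neg_nonneg.2 (h.partialSnd_G_zero_nonpos ht hg))
      (h.neg_partialSnd_G_zero_le ht hg) 2
  have hsin : 0 ≤ ∫ θ in 0..π / 4, sin θ * P t θ :=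
    intervalIntegral.integral_nonneg (by positivity) fun θ hθ ↦
      mul_nonneg (sin_nonneg_of_nonneg_of_le_pi hθ.1 (by linarith [hθ.2, pi_pos])) (hP θ hθ)
  rw [h.integral_partialFst_g ht, cos_pi_div_four]
  linarith

end Slice

variable (h : IsRegularSol J g P G) (hTJ : Icc 0 T ⊆ J)
include h hTJ

lemma continuousOn_integral_g : ContinuousOn (fun t ↦ ∫ θ in 0..π / 4, g t θ) (Icc 0 T) :=
  continuousOn_integral_of_isCompact isCompact_Icc <| h.contDiffOn_g.continuousOn.mono <|
    prod_mono hTJ <| (uIcc_of_le (by positivity)).trans_subset Icc_subset_I14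

lemma hasDerivAt_integral_g (ht : t ∈ Ioo 0 T) :
    HasDerivAt (fun s ↦ ∫ θ in 0..π / 4, g s θ) (∫ θ in 0..π / 4, ∂ₜ g t θ) t := by
  have hI : uIcc 0 (π / 4) ⊆ I14 := (uIcc_of_le (by positivity)).trans_subset Icc_subset_I14
  have hTJ' : Ioo 0 T ⊆ J := Ioo_subset_Icc_self.trans hTJ
  exact hasDerivAt_integral_of_continuousOn_deriv (isOpen_Ioo.mem_nhds ht)
    (fun s hs ↦ (h.contDiffOn_g.continuousOn.uncurry_left s (hTJ' hs)).mono hI)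
    (h.contDiffOn_partialFst_g.continuousOn.mono (prod_mono hTJ' hI))
    fun s hs x hx ↦ (hasDerivWithinAt_partialFst h.differentiableOn_g (hTJ' hs)
      (hI hx)).hasDerivAt (Filter.mem_of_superset (isOpen_Ioo.mem_nhds hs) hTJ')

end TotalVorticity

section Lifespan

variable (h : IsRegularSol J g P G) (hTJ : Icc 0 T ⊆ J)
include h hTJ

lemma P_zero_le (hP₀ : ∀ θ ∈ Icc 0 (π / 4), 0 ≤ P 0 θ)
    (hg : ∀ t ∈ Icc 0 T, ∀ θ ∈ Icc 0 (π / 4), 0 ≤ ∂θ g t θ) (ht : t ∈ Icc 0 T) :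
    P t 0 ≤ P 0 0 := by
  have hanti : AntitoneOn (P · 0) (Icc 0 T) := by
    refine antitoneOn_of_hasDerivWithinAt_nonpos (convex_Icc 0 T)
      (fun s hs ↦ (hasDerivWithinAt_partialFst_Icc hTJ h.differentiableOn_P s hs 0
        zero_mem_Icc_pi_div_four).continuousWithinAt)
      (fun s hs ↦ (hasDerivWithinAt_partialFst_Icc hTJ h.differentiableOn_P s
        (interior_subset hs) 0 zero_mem_Icc_pi_div_four).mono interior_subset) fun s hs ↦ ?_
    have hs' := interior_subset hs
    rw [h.partialFst_P_zero (hTJ hs')]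
    exact mul_nonpos_of_nonneg_of_nonpos (h.P_nonneg hTJ hP₀ hs' zero_mem_Icc_pi_div_four)
      (h.partialSnd_G_zero_nonpos (hTJ hs') (hg s hs'))
  exact hanti ⟨le_rfl, ht.1.trans ht.2⟩ ht ht.1

theorem lt_pi_div_sqrt (hT : 0 ≤ T) (hP₀ : ∀ θ ∈ Icc 0 (π / 4), 0 ≤ P 0 θ)
    (hg₀ : ∀ θ ∈ Icc 0 (π / 4), 0 ≤ ∂θ g 0 θ)
    (hPP₀ : ∀ θ ∈ Icc 0 (π / 4), 0 ≤ P 0 θ + ∂θ (∂θ P) 0 θ)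
    (hgap : P 0 0 < √2 / 2 * P 0 (π / 4)) : T < π / √(√2 / 2 * P 0 (π / 4) - P 0 0) := by
  have hg (t) (ht : t ∈ Icc 0 T) (θ) (hθ : θ ∈ Icc 0 (π / 4)) : 0 ≤ ∂θ g t θ :=
    h.partialSnd_g_nonneg hTJ hP₀ hg₀ hPP₀ ht hθ
  have hP (t) (ht : t ∈ Icc 0 T) (θ) (hθ : θ ∈ Icc 0 (π / 4)) : 0 ≤ P t θ :=
    h.P_nonneg hTJ hP₀ ht hθ
  have hP_t := hasDerivWithinAt_partialFst_Icc hTJ h.differentiableOn_P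
  refine lt_pi_div_sqrt_of_coupled_growth (p := (P · (π / 4)))
    (M := fun t ↦ ∫ θ in 0..π / 4, g t θ) hT (hP₀ 0 zero_mem_Icc_pi_div_four) hgap
    (fun t ht ↦ (hP_t t ht _ pi_div_four_mem_Icc).continuousWithinAt)
    (h.continuousOn_integral_g hTJ)
    (fun t ht ↦ (hP_t t (Ioo_subset_Icc_self ht) _ pi_div_four_mem_Icc).hasDerivAt
      (Icc_mem_nhds ht.1 ht.2)) (fun t ht ↦ h.hasDerivAt_integral_g hTJ ht)
    (fun t ht ↦ hP t ht _ pi_div_four_mem_Icc)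
    (fun t ht ↦ intervalIntegral.integral_nonneg (by positivity) (h.g_nonneg (hTJ ht) (hg t ht)))
    (fun t ht ↦ ?_) (fun t ht ↦ ?_)
  all_goals have ht' := Ioo_subset_Icc_self ht
  · rw [h.partialFst_P_pi_div_four (hTJ ht'), mul_div_right_comm, mul_comm (P t _)]
    exact mul_le_mul_of_nonneg_right (h.integral_g_div_two_le (hTJ ht') (hg t ht'))
      (hP t ht' _ pi_div_four_mem_Icc)
  · exact (sub_le_sub_left (h.P_zero_le hTJ hP₀ hg ht') _).trans
      (h.le_integral_partialFst_g (hTJ ht') (hg t ht') (hP t ht'))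

end Lifespan

end IsRegularSol

end Solutions

theorem oneD_boussinesq_blowup_general {J : Set ℝ} {T : ℝ} {g P G : ℝ → ℝ → ℝ} {g₀ P₀ : ℝ → ℝ}
    (hJ : Convex ℝ J) (hTJ : Icc 0 T ⊆ J)
    (hg : ContDiffOn ℝ 2 (fun q : ℝ × ℝ ↦ g q.1 q.2) (J ×ˢ I14))
    (hP : ContDiffOn ℝ 3 (fun q : ℝ × ℝ ↦ P q.1 q.2) (J ×ˢ I14)) (h : OneDSol J g P G)
    (hinit : ∀ θ ∈ I14, g 0 θ = g₀ θ ∧ P 0 θ = P₀ θ)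
    (hg₀ : ∀ θ ∈ Icc 0 (π / 4), 0 ≤ derivWithin g₀ I14 θ)
    (hP₀ : ∀ θ ∈ Icc 0 (π / 4), 0 ≤ P₀ θ ∧ 0 ≤ P₀ θ + iteratedDerivWithin 2 P₀ I14 θ)
    (hgap : √2 * P₀ 0 < P₀ (π / 4)) : T < π / √(√2 / 2 * P₀ (π / 4) - P₀ 0) := by
  have hgap' : P₀ 0 < √2 / 2 * P₀ (π / 4) := by
    have hscaled := mul_lt_mul_of_pos_left hgap (by positivity : 0 < √2 / 2)
    have hsq : √2 * √2 = 2 := mul_self_sqrt zero_le_two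
    linear_combination hscaled - P₀ 0 / 2 * hsq
  rcases le_or_gt T 0 with hT | hT
  · exact hT.trans_lt (div_pos pi_pos (sqrt_pos.2 (sub_pos.2 hgap')))
  have hsol : IsRegularSol J g P G :=
    ⟨h, hJ, (nonempty_Ioo.2 hT).mono (isOpen_Ioo.subset_interior_iff.2
      (Ioo_subset_Icc_self.trans hTJ)), hg, hP⟩
  have hP_init : EqOn (P 0) P₀ I14 := fun θ hθ ↦ (hinit θ hθ).2
  have hg_init : EqOn (g 0) g₀ I14 := fun θ hθ ↦ (hinit θ hθ).1
  rw [← hP_init (Icc_subset_I14 zero_mem_Icc_pi_div_four),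
    ← hP_init (Icc_subset_I14 pi_div_four_mem_Icc)] at hgap' ⊢
  refine hsol.lt_pi_div_sqrt hTJ hT.le (fun θ hθ ↦ ?_) (fun θ hθ ↦ ?_) (fun θ hθ ↦ ?_) hgap'
  · exact (hP₀ θ hθ).1.trans_eq (hP_init (Icc_subset_I14 hθ)).symm
  · exact (hg₀ θ hθ).trans_eq
      (derivWithin_congr hg_init (hg_init (Icc_subset_I14 hθ))).symm
  · rw [partialSnd_partialSnd_eq_iteratedDerivWithin,
      iteratedDerivWithin_congr hP_init (Icc_subset_I14 hθ), hP_init (Icc_subset_I14 hθ)]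
    exact (hP₀ θ hθ).2

/-- **Finite-time blow-up for the 1D Boussinesq system (Theorem 4.1).** If
`g₀, P₀ ∈ C^∞([-π/4,π/4])` with `g₀` odd, `g₀, g₀' ≥ 0` on `[0,π/4]`, `P₀` even with
`P₀, P₀', P₀ + P₀'' ≥ 0` on `[0,π/4]`, and `P₀(π/4) > √2 · P₀(0)`, then there is no global
smooth solution of the 1D Boussinesq system with this initial data. -/
theorem oneD_boussinesq_blowup
    (g₀ P₀ : ℝ → ℝ)
    (hg₀ : ContDiffOn ℝ (⊤ : ℕ∞) g₀ I14)
    (hP₀ : ContDiffOn ℝ (⊤ : ℕ∞) P₀ I14)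
    (hg₀odd : ∀ θ ∈ I14, g₀ (-θ) = - g₀ θ)
    (hg₀pos : ∀ θ ∈ Icc (0:ℝ) (π/4), 0 ≤ g₀ θ ∧ 0 ≤ derivWithin g₀ I14 θ)
    (hP₀even : ∀ θ ∈ I14, P₀ (-θ) = P₀ θ)
    (hP₀pos : ∀ θ ∈ Icc (0:ℝ) (π/4),
      0 ≤ P₀ θ ∧ 0 ≤ derivWithin P₀ I14 θ ∧ 0 ≤ P₀ θ + iteratedDerivWithin 2 P₀ I14 θ)
    (hgap : Real.sqrt 2 * P₀ 0 < P₀ (π/4)) :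
    ¬ ∃ g P G : ℝ → ℝ → ℝ,
        ContDiffOn ℝ (⊤ : ℕ∞) (fun q : ℝ × ℝ => g q.1 q.2) (Ici (0:ℝ) ×ˢ I14) ∧
        ContDiffOn ℝ (⊤ : ℕ∞) (fun q : ℝ × ℝ => P q.1 q.2) (Ici (0:ℝ) ×ˢ I14) ∧
        OneDSol (Ici 0) g P G ∧
        (∀ θ ∈ I14, g 0 θ = g₀ θ ∧ P 0 θ = P₀ θ) := by
  rintro ⟨g, P, G, hg, hP, hsol, hinit⟩
  exact lt_irrefl _ <| oneD_boussinesq_blowup_general (convex_Ici 0) Icc_subset_Ici_self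
    (hg.of_le (WithTop.coe_le_coe.2 le_top)) (hP.of_le (WithTop.coe_le_coe.2 le_top)) hsol hinit
    (fun θ hθ ↦ (hg₀pos θ hθ).2) (fun θ hθ ↦ ⟨(hP₀pos θ hθ).1, (hP₀pos θ hθ).2.2⟩) hgap
end
end

section
/- Existence for the Dirichlet–Poisson problem on a sector with quadratic growth: Let 0 < β < 1/2 and let f : Ω_β → ℝ be bounded and locally Hölder continuous. Then there exists Ψ : Ω̄_β → ℝ, continuous on Ω̄_β and twice continuously differentiable on Ω_β, such that ΔΨ := ∂_{x₁x₁}Ψ + ∂_{x₂x₂}Ψ = f on Ω_β, Ψ = 0 on ∂Ω_β, and there is a constant C = C(β) > 0 with |Ψ(x)| ≤ C ‖f‖_{L^∞(Ω_β)} |x|² and |∇Ψ(x)| ≤ C ‖f‖_{L^∞(Ω_β)} |x| for all x ∈ Ω_β. -/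
open Set Complex
open scoped ENNReal NNReal Real

noncomputable section

/-- The open sector `Ω_β = { r e^{iθ} : r > 0, 0 < θ < βπ }` in `ℂ ≅ ℝ²`. -/
def Sector (β : ℝ) : Set ℂ := {z | z ≠ 0 ∧ 0 < Complex.arg z ∧ Complex.arg z < β * π}

/-- The Laplacian `ΔΨ = ∂_{x₁x₁}Ψ + ∂_{x₂x₂}Ψ` of a function `Ψ : ℂ → ℝ`. -/
def lap (Ψ : ℂ → ℝ) (z : ℂ) : ℝ :=
  fderiv ℝ (fun w => fderiv ℝ Ψ w 1) z 1 +
    fderiv ℝ (fun w => fderiv ℝ Ψ w Complex.I) z Complex.I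

open MeasureTheory Filter Topology Metric Asymptotics ComplexConjugate
open UpperHalfPlane (upperHalfPlaneSet isOpen_upperHalfPlaneSet)

/-
The power `w ↦ w ^ β` maps the upper half-plane conformally onto the sector, and multiplies the
Laplacian by `|(w ^ β)'|²`, so the problem becomes `ΔV = h` on the half-plane with
`|h w| ≤ C ‖f‖ |w| ^ (2β - 2)`. The logarithmic potential of the reflection of `h` that is odd under
conjugation vanishes on the real axis. As `-2 < 2β - 2 < -1`, homogeneity of the kernel
`|ω| ^ p / |ω - w|` bounds the potential by a multiple of `|w| ^ (2β)` and its gradient, a Cauchy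
transform, by a multiple of `|w| ^ (2β - 1)`; these become `|z| ^ 2` and `|z|` on the sector.

For a density `g` that is Hölder continuous near `w`, subtracting `g w` from the density leaves an
absolutely convergent integral for the `∂`-derivative of the Cauchy transform, while the subtracted
part is `π g w` times the conjugate of `w - c` on a disc with centre `c`. Hence the Cauchy transform
is continuously differentiable with `∂̄`-derivative `π g`, which is the Poisson equation.
-/

theorem norm_sub_rpow_isBigO_norm_rpow {E : Type*} [NormedAddCommGroup E] [ProperSpace E] (v : E)
    (c : ℝ) : (fun x => ‖x - v‖ ^ c) =O[cocompact E] fun x => ‖x‖ ^ c := by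
  have hbdd : (fun x => ‖x - v‖ - ‖x‖) =O[cocompact E] fun _ => (1 : ℝ) :=
    IsBigO.of_bound ‖v‖ (Eventually.of_forall fun x => by
      simpa [abs_sub_comm] using abs_norm_sub_norm_le (x - v) x)
  have hequiv : (fun x => ‖x - v‖) ~[cocompact E] fun x => ‖x‖ :=
    hbdd.trans_isLittleO ((isLittleO_const_left_of_ne one_ne_zero).2
      (tendsto_norm_atTop_atTop.comp (tendsto_norm_cocompact_atTop (E := E))))
  exact (hequiv.rpow (r := c) (fun _ => norm_nonneg _)).isBigO

section PowerKernels

variable {E : Type*} [NormedAddCommGroup E] [NormedSpace ℝ E] [FiniteDimensional ℝ E]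
  [MeasurableSpace E] [BorelSpace E] {μ : Measure E} [μ.IsAddHaarMeasure] {a b p : ℝ}

theorem locallyIntegrable_norm_rpow [Nontrivial E] (hp : -Module.finrank ℝ E < p) :
    LocallyIntegrable (fun x : E => ‖x‖ ^ p) μ :=
  locallyIntegrable_of_norm_le_rpow (C := 1) (α := -p) Module.finrank_pos (by linarith)
    (ae_of_all _ fun x => by
      rw [neg_neg, one_mul, Real.norm_of_nonneg (Real.rpow_nonneg (norm_nonneg x) p)])
    (by fun_prop : Measurable fun x : E => ‖x‖ ^ p).aestronglyMeasurable

theorem integrableAtFilter_cocompact_norm_rpow [Nontrivial E] (hp : p < -Module.finrank ℝ E) :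
    IntegrableAtFilter (fun x : E => ‖x‖ ^ p) (cocompact E) μ := by
  refine ⟨(closedBall 0 1)ᶜ, (isCompact_closedBall 0 1).compl_mem_cocompact, ?_⟩
  rw [← integrable_indicator_iff isClosed_closedBall.measurableSet.compl]
  have hradial : Integrable (fun x : E => (Ioi 1).indicator (fun y : ℝ => y ^ p) ‖x‖) μ := by
    rw [integrable_fun_norm_addHaar μ (f := (Ioi 1).indicator fun y : ℝ => y ^ p)]
    have hfar : IntegrableOn (fun y : ℝ => y ^ (Module.finrank ℝ E - 1 + p)) (Ioi 1) :=
      (integrableOn_Ioi_rpow_iff one_pos).2 (by linarith)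
    refine ((integrable_indicator_iff measurableSet_Ioi).2 hfar).integrableOn.congr_fun
      (fun y (hy : 0 < y) => ?_) measurableSet_Ioi
    by_cases hy1 : 1 < y
    · simp only [indicator_of_mem (mem_Ioi.2 hy1), smul_eq_mul]
      rw [Real.rpow_add hy, ← Real.rpow_natCast, Nat.cast_sub Module.finrank_pos, Nat.cast_one]
    · simp [hy1]
  refine hradial.congr (ae_of_all _ fun x => ?_)
  simp [indicator]

theorem locallyIntegrable_norm_sub_rpow [Nontrivial E] (hp : -Module.finrank ℝ E < p) (v : E) :
    LocallyIntegrable (fun x => ‖x - v‖ ^ p) μ := by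
  intro x
  obtain ⟨s, hs, hint⟩ := locallyIntegrable_norm_rpow (μ := μ) hp (x - v)
  refine ⟨(· - v) ⁻¹' s, (continuous_sub_right v).continuousAt hs, ?_⟩
  exact ((measurePreserving_sub_right μ v).integrableOn_comp_preimage
    (Homeomorph.subRight v).measurableEmbedding).2 hint

theorem locallyIntegrable_norm_sub_rpow_mul_norm_sub_rpow [Nontrivial E]
    (ha : -Module.finrank ℝ E < a) (hb : -Module.finrank ℝ E < b) {u w : E} (huw : u ≠ w) :
    LocallyIntegrable (fun x => ‖x - u‖ ^ a * ‖x - w‖ ^ b) μ := by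
  have key : ∀ {p q : ℝ} {v v' x : E}, -Module.finrank ℝ E < p → x ≠ v' →
      IntegrableAtFilter (fun x => ‖x - v‖ ^ p * ‖x - v'‖ ^ q) (𝓝 x) μ := by
    intro p q v v' x hp hx
    have hcont : ContinuousAt (fun x => ‖x - v'‖ ^ q) x :=
      (continuous_norm.comp (continuous_sub_right v')).continuousAt.rpow_const
        (Or.inl (norm_ne_zero_iff.2 (sub_ne_zero.2 hx)))
    refine IsBigO.integrableAtFilter (g := fun x => ‖x - v‖ ^ p) ?_ ?_
      (locallyIntegrable_norm_sub_rpow hp v x)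
    · simpa using (isBigO_refl (fun x => ‖x - v‖ ^ p) (𝓝 x)).mul (hcont.isBigO_one ℝ)
    · exact (by fun_prop : Measurable fun x => ‖x - v‖ ^ p * ‖x - v'‖ ^ q
        ).aestronglyMeasurable.stronglyMeasurableAtFilter
  intro x
  rcases ne_or_eq x w with hx | rfl
  · exact key ha hx
  · simpa only [mul_comm] using key hb huw.symm

theorem integrable_norm_sub_rpow_mul_norm_sub_rpow [Nontrivial E]
    (ha : -Module.finrank ℝ E < a) (hb : -Module.finrank ℝ E < b)
    (hab : a + b < -Module.finrank ℝ E) {u w : E} (huw : u ≠ w) :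
    Integrable (fun x => ‖x - u‖ ^ a * ‖x - w‖ ^ b) μ := by
  refine (locallyIntegrable_norm_sub_rpow_mul_norm_sub_rpow ha hb huw
    ).integrable_of_isBigO_cocompact (g := fun x => ‖x‖ ^ (a + b)) ?_
    (integrableAtFilter_cocompact_norm_rpow hab)
  refine ((norm_sub_rpow_isBigO_norm_rpow u a).mul
    (norm_sub_rpow_isBigO_norm_rpow w b)).congr' .rfl ?_
  filter_upwards [(tendsto_norm_cocompact_atTop (E := E)).eventually_gt_atTop 0] with x hx
  rw [Real.rpow_add hx]

end PowerKernels

section RieszKernels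

variable {p : ℝ} {u w z : ℂ}

theorem integral_comp_const_mul {F : Type*} [NormedAddCommGroup F] [NormedSpace ℝ F] (f : ℂ → F)
    (w : ℂ) : ∫ ζ, f (w * ζ) = (‖w‖ ^ 2)⁻¹ • ∫ ω, f ω := by
  have hpolar (ζ : ℂ) : ‖w‖ • rotation (Circle.exp w.arg) ζ = w * ζ := by
    rw [rotation_apply, real_smul, ← mul_assoc, Circle.coe_exp, norm_mul_exp_arg_mul_I]
  have hrot := (rotation (Circle.exp w.arg)).measurePreserving.integral_comp
    (rotation (Circle.exp w.arg)).toHomeomorph.measurableEmbedding (fun ζ => f (‖w‖ • ζ))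
  simp only [hpolar] at hrot
  rw [hrot, Measure.integral_comp_smul, finrank_real_complex, abs_of_nonneg (by positivity)]

/-- The constant `∫ |ω| ^ p / |ω - 1|` of the planar Riesz composition formula
`∫ |ω - u| ^ p / |ω - w| = rieszConst p * |w - u| ^ (p + 1)`. -/
def rieszConst (p : ℝ) : ℝ := ∫ ω : ℂ, ‖ω‖ ^ p * ‖ω - 1‖⁻¹

theorem rieszConst_nonneg (p : ℝ) : 0 ≤ rieszConst p :=
  integral_nonneg fun _ => by positivity

theorem integrable_norm_sub_rpow_mul_inv_norm_sub (hp : -2 < p) (hp' : p < -1) (huw : u ≠ w) :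
    Integrable fun ω : ℂ => ‖ω - u‖ ^ p * ‖ω - w‖⁻¹ := by
  simpa only [Real.rpow_neg_one] using integrable_norm_sub_rpow_mul_norm_sub_rpow (E := ℂ)
    (μ := volume) (a := p) (b := -1) (by simpa using hp) (by norm_num)
    (by rw [finrank_real_complex]; push_cast; linarith) huw

theorem integral_norm_sub_rpow_mul_inv_norm_sub (huw : u ≠ w) :
    ∫ ω : ℂ, ‖ω - u‖ ^ p * ‖ω - w‖⁻¹ = rieszConst p * ‖w - u‖ ^ (p + 1) := by
  have hpos : 0 < ‖w - u‖ := norm_pos_iff.2 (sub_ne_zero.2 huw.symm)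
  have hscale (ζ : ℂ) : ‖(w - u) * ζ‖ ^ p * ‖(w - u) * ζ - (w - u)‖⁻¹ =
      ‖w - u‖ ^ (p - 1) * (‖ζ‖ ^ p * ‖ζ - 1‖⁻¹) := by
    rw [← mul_sub_one, norm_mul, norm_mul, Real.mul_rpow hpos.le (norm_nonneg _), mul_inv,
      Real.rpow_sub_one hpos.ne']
    ring
  have hdilate := integral_comp_const_mul (fun ω => ‖ω‖ ^ p * ‖ω - (w - u)‖⁻¹) (w - u)
  simp only [hscale, integral_const_mul] at hdilate
  rw [← rieszConst, smul_eq_mul, eq_inv_mul_iff_mul_eq₀ (by positivity)] at hdilate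
  calc ∫ ω : ℂ, ‖ω - u‖ ^ p * ‖ω - w‖⁻¹ = ∫ ω : ℂ, ‖ω‖ ^ p * ‖ω - (w - u)‖⁻¹ := by
        simpa only [sub_sub_sub_cancel_right] using
          integral_sub_right_eq_self (fun ω => ‖ω‖ ^ p * ‖ω - (w - u)‖⁻¹) u
    _ = rieszConst p * ‖w - u‖ ^ (p + 1) := by
        rw [← hdilate, show p + 1 = p - 1 + (2 : ℕ) by push_cast; ring, Real.rpow_add hpos,
          Real.rpow_natCast]
        ring

theorem integrable_norm_rpow_mul_inv_norm_sub (hp : -2 < p) (hp' : p < -1) (hw : w ≠ 0) :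
    Integrable fun ω : ℂ => ‖ω‖ ^ p * ‖ω - w‖⁻¹ := by
  simpa only [sub_zero] using integrable_norm_sub_rpow_mul_inv_norm_sub hp hp' hw.symm

theorem integral_norm_rpow_mul_inv_norm_sub (hw : w ≠ 0) :
    ∫ ω : ℂ, ‖ω‖ ^ p * ‖ω - w‖⁻¹ = rieszConst p * ‖w‖ ^ (p + 1) := by
  simpa only [sub_zero] using integral_norm_sub_rpow_mul_inv_norm_sub (p := p) hw.symm

theorem rpow_mul_inv_le_of_le_add {x y d : ℝ} (hx : 0 ≤ x) (hy : 0 ≤ y) (hd : 0 < d)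
    (hdxy : d ≤ x + y) (hp : p < -1) : x ^ p * y⁻¹ ≤ 2 / d * (x ^ p + y ^ p) := by
  rcases hy.eq_or_lt with rfl | hy
  · simp only [inv_zero, mul_zero]; positivity
  rcases hx.eq_or_lt with rfl | hx
  · rw [Real.zero_rpow (by linarith), zero_mul]; positivity
  have hmix : x ^ (p + 1) * y⁻¹ ≤ x ^ p + y ^ p := by
    rcases le_total x y with h | h
    · calc x ^ (p + 1) * y⁻¹ ≤ x ^ (p + 1) * x⁻¹ := by gcongr
        _ = x ^ p := by rw [Real.rpow_add_one hx.ne']; field_simp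
        _ ≤ x ^ p + y ^ p := le_add_of_nonneg_right (by positivity)
    · calc x ^ (p + 1) * y⁻¹ ≤ y ^ (p + 1) * y⁻¹ := by
            gcongr ?_ * _
            exact Real.rpow_le_rpow_of_nonpos hy h (by linarith)
        _ = y ^ p := by rw [Real.rpow_add_one hy.ne']; field_simp
        _ ≤ x ^ p + y ^ p := le_add_of_nonneg_left (by positivity)
  rw [div_mul_eq_mul_div, le_div_iff₀ hd]
  calc x ^ p * y⁻¹ * d ≤ x ^ p * y⁻¹ * (x + y) := by gcongr
    _ = x ^ (p + 1) * y⁻¹ + x ^ p := by rw [Real.rpow_add_one hx.ne']; field_simp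
    _ ≤ 2 * (x ^ p + y ^ p) := by linarith [Real.rpow_nonneg hy.le p]

theorem norm_rpow_mul_inv_norm_sub_mul_inv_norm_sub_le (hp : p < -1) (hw : w ≠ 0) (ω : ℂ) :
    ‖ω‖ ^ p * ‖ω - w‖⁻¹ * ‖ω - z‖⁻¹ ≤
      2 / ‖w‖ * (‖ω‖ ^ p * ‖ω - z‖⁻¹ + ‖ω - w‖ ^ p * ‖ω - z‖⁻¹) := by
  have htri : ‖w‖ ≤ ‖ω‖ + ‖ω - w‖ := by simpa using norm_sub_le ω (ω - w)
  rw [← add_mul, ← mul_assoc]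
  exact mul_le_mul_of_nonneg_right (rpow_mul_inv_le_of_le_add (norm_nonneg _) (norm_nonneg _)
    (norm_pos_iff.2 hw) htri hp) (by positivity)

theorem integrable_norm_rpow_mul_inv_norm_sub_mul_inv_norm_sub (hp : -2 < p) (hp' : p < -1)
    (hw : w ≠ 0) (hz : z ≠ 0) (hzw : w ≠ z) :
    Integrable fun ω : ℂ => ‖ω‖ ^ p * ‖ω - w‖⁻¹ * ‖ω - z‖⁻¹ := by
  refine (((integrable_norm_rpow_mul_inv_norm_sub hp hp' hz).add
    (integrable_norm_sub_rpow_mul_inv_norm_sub hp hp' hzw)).const_mul (2 / ‖w‖)).mono'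
    (by fun_prop : Measurable fun ω : ℂ => ‖ω‖ ^ p * ‖ω - w‖⁻¹ * ‖ω - z‖⁻¹).aestronglyMeasurable
    (ae_of_all _ fun ω => ?_)
  rw [Real.norm_of_nonneg (by positivity)]
  exact norm_rpow_mul_inv_norm_sub_mul_inv_norm_sub_le hp' hw ω

theorem integral_norm_rpow_mul_inv_norm_sub_mul_inv_norm_sub_le (hp : -2 < p) (hp' : p < -1)
    (hw : w ≠ 0) (hzw : w ≠ z) (hle : ‖z - w‖ ≤ ‖z‖) :
    ∫ ω : ℂ, ‖ω‖ ^ p * ‖ω - w‖⁻¹ * ‖ω - z‖⁻¹ ≤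
      4 * rieszConst p / ‖w‖ * ‖z - w‖ ^ (p + 1) := by
  have hpos : 0 < ‖z - w‖ := norm_pos_iff.2 (sub_ne_zero.2 hzw.symm)
  have hz : z ≠ 0 := norm_pos_iff.1 (hpos.trans_le hle)
  have horigin := integrable_norm_rpow_mul_inv_norm_sub hp hp' hz
  have hpole := integrable_norm_sub_rpow_mul_inv_norm_sub hp hp' hzw
  calc ∫ ω : ℂ, ‖ω‖ ^ p * ‖ω - w‖⁻¹ * ‖ω - z‖⁻¹
      ≤ ∫ ω : ℂ, 2 / ‖w‖ * (‖ω‖ ^ p * ‖ω - z‖⁻¹ + ‖ω - w‖ ^ p * ‖ω - z‖⁻¹) :=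
        integral_mono (integrable_norm_rpow_mul_inv_norm_sub_mul_inv_norm_sub hp hp' hw hz hzw)
          ((horigin.add hpole).const_mul _)
          fun ω => norm_rpow_mul_inv_norm_sub_mul_inv_norm_sub_le hp' hw ω
    _ = 2 / ‖w‖ * (rieszConst p * ‖z‖ ^ (p + 1) + rieszConst p * ‖z - w‖ ^ (p + 1)) := by
        rw [integral_const_mul, integral_add horigin hpole,
          integral_norm_rpow_mul_inv_norm_sub hz, integral_norm_sub_rpow_mul_inv_norm_sub hzw]
    _ ≤ 2 / ‖w‖ * (rieszConst p * ‖z - w‖ ^ (p + 1) + rieszConst p * ‖z - w‖ ^ (p + 1)) := by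
        gcongr 2 / ‖w‖ * (_ * ?_ + _)
        · exact rieszConst_nonneg p
        · exact Real.rpow_le_rpow_of_nonpos hpos hle (by linarith)
    _ = 4 * rieszConst p / ‖w‖ * ‖z - w‖ ^ (p + 1) := by ring

end RieszKernels

theorem hasFDerivAt_of_eventually_norm_sub_le_rpow {E F : Type*} [NormedAddCommGroup E]
    [NormedSpace ℝ E] [NormedAddCommGroup F] [NormedSpace ℝ F] {f : E → F} {L : E →L[ℝ] F} {x : E}
    {C a : ℝ} (ha : 1 < a) (h : ∀ᶠ z in 𝓝 x, ‖f z - f x - L (z - x)‖ ≤ C * ‖z - x‖ ^ a) :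
    HasFDerivAt f L x := by
  have hvanish : Tendsto (fun z => ‖z - x‖ ^ (a - 1)) (𝓝 x) (𝓝 0) := by
    have hcont : Continuous fun z => ‖z - x‖ ^ (a - 1) :=
      (by fun_prop : Continuous fun z => ‖z - x‖).rpow_const fun _ => Or.inr (by linarith)
    simpa [Real.zero_rpow (by linarith : a - 1 ≠ 0)] using hcont.tendsto x
  have hpow : (fun z => ‖z - x‖ ^ a) =o[𝓝 x] fun z => z - x := by
    refine (((isLittleO_one_iff ℝ).2 hvanish).mul_isBigO
      (isBigO_refl (fun z => ‖z - x‖) (𝓝 x))).norm_right.congr' ?_ ?_ |>.of_norm_right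
    · filter_upwards with z
      rw [← Real.rpow_add_one' (norm_nonneg _) (by linarith), sub_add_cancel]
    · filter_upwards with z
      simp
  refine .of_isLittleO ((IsBigO.of_bound C ?_).trans_isLittleO hpow)
  filter_upwards [h] with z hz
  rwa [Real.norm_of_nonneg (by positivity)]

section ConverseTaylor

variable {E F : Type*} [NormedAddCommGroup E] [NormedSpace ℝ E] [NormedAddCommGroup F]
  [NormedSpace ℝ F] {f : E → F} {L : E → E →L[ℝ] F} {s : Set E} {C a : ℝ}

theorem norm_sub_le_of_norm_sub_sub_le_rpow
    (h : ∀ w ∈ s, ∀ z ∈ s, ‖f z - f w - L w (z - w)‖ ≤ C * ‖z - w‖ ^ a) (hC : 0 ≤ C) (ha : 0 ≤ a)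
    {w z : E} (hw : w ∈ s) (hz : closedBall z ‖z - w‖ ⊆ s) :
    ‖L z - L w‖ ≤ C * (2 + 2 ^ a) * ‖z - w‖ ^ (a - 1) := by
  rcases eq_or_ne z w with rfl | hzw
  · simpa using by positivity
  set d := ‖z - w‖
  have hd : 0 < d := norm_pos_iff.2 (sub_ne_zero.2 hzw)
  refine ContinuousLinearMap.opNorm_le_of_unit_norm (by positivity) fun u hu => ?_
  have hdu : ‖d • u‖ = d := by rw [norm_smul, hu, mul_one, norm_norm]
  have hz' : z ∈ s := hz (mem_closedBall_self hd.le)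
  have hzu : z + d • u ∈ s := hz (by rw [mem_closedBall_iff_norm, add_sub_cancel_left, hdu])
  have htwo : ‖z + d • u - w‖ ≤ 2 * d := by
    have := norm_add_le (z - w) (d • u)
    rw [hdu, sub_add_eq_add_sub] at this
    linarith
  have hsplit : d • (L z - L w) u = (f (z + d • u) - f w - L w (z + d • u - w)) -
      (f (z + d • u) - f z - L z (z + d • u - z)) - (f z - f w - L w (z - w)) := by
    simp only [sub_apply, map_sub, map_add, map_smul]
    module
  have hbound : d * ‖(L z - L w) u‖ ≤ C * (2 * d) ^ a + C * d ^ a + C * d ^ a := by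
    rw [← Real.norm_of_nonneg hd.le, ← norm_smul, Real.norm_of_nonneg hd.le, hsplit]
    refine (norm_sub_le _ _).trans (add_le_add ((norm_sub_le _ _).trans (add_le_add ?_ ?_)) ?_)
    · exact (h w hw _ hzu).trans (by gcongr)
    · simpa only [add_sub_cancel_left, hdu] using h z hz' _ hzu
    · exact h w hw z hz'
  rw [Real.mul_rpow zero_le_two hd.le] at hbound
  rw [Real.rpow_sub_one hd.ne', mul_div_assoc', le_div_iff₀' hd]
  linarith

theorem contDiffOn_one_of_norm_sub_sub_le_rpow (ha : 1 < a) (hs : IsOpen s)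
    (h : ∀ w ∈ s, ∀ z ∈ s, ‖f z - f w - L w (z - w)‖ ≤ C * ‖z - w‖ ^ a) (hC : 0 ≤ C) :
    ContDiffOn ℝ 1 f s := by
  have hderiv : ∀ w ∈ s, HasFDerivAt f (L w) w := fun w hw =>
    hasFDerivAt_of_eventually_norm_sub_le_rpow ha (eventually_of_mem (hs.mem_nhds hw) (h w hw))
  have hcont : ∀ w ∈ s, ContinuousAt L w := fun w hw => by
    have hvanish : Tendsto (fun z => C * (2 + 2 ^ a) * ‖z - w‖ ^ (a - 1)) (𝓝 w) (𝓝 0) := by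
      have hpow : Continuous fun z => C * (2 + 2 ^ a) * ‖z - w‖ ^ (a - 1) :=
        continuous_const.mul ((by fun_prop : Continuous fun z => ‖z - w‖).rpow_const
          fun _ => Or.inr (by linarith))
      simpa [Real.zero_rpow (by linarith : a - 1 ≠ 0)] using hpow.tendsto w
    obtain ⟨ε, hε, hball⟩ := Metric.isOpen_iff.1 hs w hw
    rw [ContinuousAt, tendsto_iff_norm_sub_tendsto_zero]
    refine squeeze_zero' (Eventually.of_forall fun _ => norm_nonneg _) ?_ hvanish
    filter_upwards [ball_mem_nhds w (half_pos hε)] with z hz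
    refine norm_sub_le_of_norm_sub_sub_le_rpow h hC (by linarith) hw
      ((closedBall_subset_ball' ?_).trans hball)
    rw [mem_ball, dist_eq_norm] at hz
    rw [dist_eq_norm]
    linarith
  exact fun w hw => (contDiffAt_one_iff.2 ⟨L, s, hs.mem_nhds hw,
    fun z hz => (hcont z hz).continuousWithinAt, hderiv⟩).contDiffWithinAt

end ConverseTaylor

theorem abs_log_sub_log_le {a b : ℝ} (ha : 0 < a) (hb : 0 < b) :
    |Real.log a - Real.log b| ≤ |a - b| * (a⁻¹ + b⁻¹) := by
  have hdiff {a b : ℝ} (ha : 0 < a) (hb : 0 < b) :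
      Real.log a - Real.log b ≤ |a - b| * (a⁻¹ + b⁻¹) :=
    calc Real.log a - Real.log b ≤ a / b - 1 := by
          rw [← Real.log_div ha.ne' hb.ne']
          exact Real.log_le_sub_one_of_pos (by positivity)
      _ = (a - b) * b⁻¹ := by field_simp
      _ ≤ |a - b| * (a⁻¹ + b⁻¹) := by
          gcongr
          · exact le_abs_self _
          · exact le_add_of_nonneg_left (by positivity)
  refine abs_sub_le_iff.2 ⟨hdiff ha hb, ?_⟩
  simpa only [abs_sub_comm, add_comm] using hdiff hb ha

/- Writing `y = |1 + x|` and `q = |x|`, one has `2 Re x = y² - 1 - q²`, so the estimate only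
involves `log y`, which is squeezed between `1 - 1 / y` and `y - 1`. -/
theorem abs_log_norm_one_add_sub_re_le {x : ℂ} (hx : 1 + x ≠ 0) :
    |Real.log ‖1 + x‖ - x.re| ≤ 4 * (‖x‖ ^ 2 / ‖1 + x‖) := by
  have hre : x.re = (‖1 + x‖ ^ 2 - 1 - ‖x‖ ^ 2) / 2 := by
    simp only [Complex.sq_norm, normSq_apply, add_re, add_im, one_re, one_im]; ring
  have hle : ‖1 + x‖ ≤ 1 + ‖x‖ := by simpa using norm_add_le 1 x
  have hle' : 1 ≤ ‖1 + x‖ + ‖x‖ := by simpa using norm_sub_le (1 + x) x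
  have hle'' : ‖x‖ ≤ ‖1 + x‖ + 1 := by simpa using norm_sub_le (1 + x) 1
  have hy : 0 < ‖1 + x‖ := norm_pos_iff.2 hx
  rw [hre]
  generalize ‖1 + x‖ = y at *
  have hq := norm_nonneg x
  generalize ‖x‖ = q at *
  have hlog : y * Real.log y ≤ y * (y - 1) := by gcongr; exact Real.log_le_sub_one_of_pos hy
  have hlog' : y - 1 ≤ y * Real.log y := by
    calc y - 1 = y * (1 - y⁻¹) := by field_simp
      _ ≤ y * Real.log y := by gcongr; exact Real.one_sub_inv_le_log_of_pos hy
  have hsq : (y - 1) ^ 2 ≤ q ^ 2 := sq_le_sq' (by linarith) (by linarith)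
  rw [← mul_div_assoc, le_div_iff₀ hy, ← abs_of_pos hy, ← abs_mul, abs_of_pos hy, abs_le]
  constructor
  · nlinarith [mul_le_mul_of_nonneg_left hsq (by linarith : 0 ≤ y + 2)]
  · rcases le_total y 2 with hy2 | hy2
    · nlinarith [mul_nonneg hy.le (sq_nonneg (y - 1)), mul_nonneg (sub_nonneg.2 hy2) (sq_nonneg q)]
    · have hprod : (q - (y - 1)) * (q + (y - 1)) ≤ 2 * (2 * q) := by
        gcongr <;> linarith
      nlinarith [mul_le_mul_of_nonneg_left hprod hy.le,
        mul_nonneg hq (by linarith : 0 ≤ 2 * q - y)]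

theorem abs_log_norm_sub_sub_log_norm_sub_sub_re_le {w z ω : ℂ} (hw : ω ≠ w) (hz : ω ≠ z) :
    |Real.log ‖ω - z‖ - Real.log ‖ω - w‖ - ((z - w) / (w - ω)).re| ≤
      4 * ‖z - w‖ ^ 2 * (‖ω - w‖⁻¹ * ‖ω - z‖⁻¹) := by
  have hw0 : w - ω ≠ 0 := sub_ne_zero.2 hw.symm
  have hz0 : z - ω ≠ 0 := sub_ne_zero.2 hz.symm
  have hsum : 1 + (z - w) / (w - ω) = (z - ω) / (w - ω) := by field_simp; ring
  have hmain := abs_log_norm_one_add_sub_re_le (x := (z - w) / (w - ω))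
    (by rw [hsum]; exact div_ne_zero hz0 hw0)
  rw [hsum, norm_div, norm_div, Real.log_div (norm_ne_zero_iff.2 hz0) (norm_ne_zero_iff.2 hw0)]
    at hmain
  rw [norm_sub_rev ω z, norm_sub_rev ω w]
  refine hmain.trans_eq ?_
  have := norm_ne_zero_iff.2 hw0
  have := norm_ne_zero_iff.2 hz0
  field_simp

section RieszDensity

/-- A measurable density on the plane dominated by `A * |ω| ^ p` with `-2 < p < -1`: the range of
exponents in which the gradient of its logarithmic potential converges both at `0` and at `∞`. -/
structure IsRieszDensity {E : Type*} [NormedAddCommGroup E] (g : ℂ → E) (A p : ℝ) : Prop where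
  aestronglyMeasurable : AEStronglyMeasurable g
  neg_two_lt : -2 < p
  lt_neg_one : p < -1
  norm_le : ∀ ω, ‖g ω‖ ≤ A * ‖ω‖ ^ p

/-- The Cauchy transform `∫ g ω / (w - ω)` of a planar density. -/
def cauchyTransform (g : ℂ → ℂ) (w : ℂ) : ℂ := ∫ ω : ℂ, g ω / (w - ω)

/-- The logarithmic potential `∫ log |ω - w| g ω` of a planar density, normalised to vanish at `1`
because the integral without the subtracted term diverges at infinity. -/
def logPotential (g : ℂ → ℝ) (w : ℂ) : ℝ :=
  ∫ ω : ℂ, (Real.log ‖ω - w‖ - Real.log ‖ω - 1‖) * g ω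

/-- The real functional `t ↦ Re (a t)`, the differential of a real function with complex gradient
`a = 2 ∂f = ∂₁f - i ∂₂f`. -/
def reMulCLM (a : ℂ) : ℂ →L[ℝ] ℝ := reCLM ∘L ContinuousLinearMap.mul ℝ ℂ a

theorem reMulCLM_apply (a t : ℂ) : reMulCLM a t = (a * t).re := rfl

variable {A p : ℝ} {w z : ℂ}

theorem norm_div_sub_eq (a w ω : ℂ) : ‖a / (w - ω)‖ = ‖a‖ * ‖ω - w‖⁻¹ := by
  rw [norm_div, norm_sub_rev, div_eq_mul_inv]

namespace IsRieszDensity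

theorem const_nonneg {E : Type*} [NormedAddCommGroup E] {g : ℂ → E} (hg : IsRieszDensity g A p) :
    0 ≤ A := by
  simpa using (norm_nonneg _).trans (hg.norm_le 1)

theorem ofReal {g : ℂ → ℝ} (hg : IsRieszDensity g A p) :
    IsRieszDensity (fun ω => (g ω : ℂ)) A p where
  aestronglyMeasurable := continuous_ofReal.comp_aestronglyMeasurable hg.aestronglyMeasurable
  neg_two_lt := hg.neg_two_lt
  lt_neg_one := hg.lt_neg_one
  norm_le ω := by simpa using hg.norm_le ω

section Complex

variable {g : ℂ → ℂ}

theorem norm_div_sub_le (hg : IsRieszDensity g A p) (w ω : ℂ) :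
    ‖g ω / (w - ω)‖ ≤ A * (‖ω‖ ^ p * ‖ω - w‖⁻¹) := by
  rw [norm_div_sub_eq, ← mul_assoc]
  gcongr
  exact hg.norm_le ω

theorem integrable_div_sub (hg : IsRieszDensity g A p) (hw : w ≠ 0) :
    Integrable fun ω => g ω / (w - ω) := by
  refine ((integrable_norm_rpow_mul_inv_norm_sub hg.neg_two_lt hg.lt_neg_one hw).const_mul A).mono'
    ?_ (ae_of_all _ (hg.norm_div_sub_le w))
  simp only [div_eq_mul_inv]
  exact hg.aestronglyMeasurable.mul
    (by fun_prop : Measurable fun ω => (w - ω)⁻¹).aestronglyMeasurable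

theorem norm_cauchyTransform_le (hg : IsRieszDensity g A p) (hw : w ≠ 0) :
    ‖cauchyTransform g w‖ ≤ A * rieszConst p * ‖w‖ ^ (p + 1) := by
  rw [mul_assoc, ← integral_norm_rpow_mul_inv_norm_sub hw, ← integral_const_mul]
  exact norm_integral_le_of_norm_le ((integrable_norm_rpow_mul_inv_norm_sub
    hg.neg_two_lt hg.lt_neg_one hw).const_mul A) (ae_of_all _ (hg.norm_div_sub_le w))

end Complex

variable {g : ℂ → ℝ}

theorem ae_norm_log_sub_log_mul_le (hg : IsRieszDensity g A p) (w z : ℂ) :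
    ∀ᵐ ω : ℂ, ‖(Real.log ‖ω - w‖ - Real.log ‖ω - z‖) * g ω‖ ≤
      A * ‖w - z‖ * (‖ω‖ ^ p * ‖ω - w‖⁻¹ + ‖ω‖ ^ p * ‖ω - z‖⁻¹) := by
  filter_upwards [Measure.ae_ne volume w, Measure.ae_ne volume z] with ω hw hz
  have hdist : |‖ω - w‖ - ‖ω - z‖| ≤ ‖w - z‖ := by
    simpa [norm_sub_rev] using abs_norm_sub_norm_le (ω - w) (ω - z)
  rw [norm_mul, Real.norm_eq_abs]
  calc |Real.log ‖ω - w‖ - Real.log ‖ω - z‖| * ‖g ω‖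
      ≤ |‖ω - w‖ - ‖ω - z‖| * (‖ω - w‖⁻¹ + ‖ω - z‖⁻¹) * (A * ‖ω‖ ^ p) := by
        gcongr
        · exact abs_log_sub_log_le (norm_pos_iff.2 (sub_ne_zero.2 hw))
            (norm_pos_iff.2 (sub_ne_zero.2 hz))
        · exact hg.norm_le ω
    _ ≤ ‖w - z‖ * (‖ω - w‖⁻¹ + ‖ω - z‖⁻¹) * (A * ‖ω‖ ^ p) := by
        have := hg.const_nonneg
        gcongr
    _ = A * ‖w - z‖ * (‖ω‖ ^ p * ‖ω - w‖⁻¹ + ‖ω‖ ^ p * ‖ω - z‖⁻¹) := by ring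

theorem integrable_norm_rpow_mul_add (hg : IsRieszDensity g A p) (hw : w ≠ 0) (hz : z ≠ 0) (C : ℝ) :
    Integrable fun ω : ℂ => C * (‖ω‖ ^ p * ‖ω - w‖⁻¹ + ‖ω‖ ^ p * ‖ω - z‖⁻¹) :=
  ((integrable_norm_rpow_mul_inv_norm_sub hg.neg_two_lt hg.lt_neg_one hw).add
    (integrable_norm_rpow_mul_inv_norm_sub hg.neg_two_lt hg.lt_neg_one hz)).const_mul C

theorem integrable_log_sub_log_mul (hg : IsRieszDensity g A p) (hw : w ≠ 0) (hz : z ≠ 0) :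
    Integrable fun ω : ℂ => (Real.log ‖ω - w‖ - Real.log ‖ω - z‖) * g ω :=
  (hg.integrable_norm_rpow_mul_add hw hz (A * ‖w - z‖)).mono'
    ((by fun_prop : Measurable fun ω : ℂ => Real.log ‖ω - w‖ - Real.log ‖ω - z‖
      ).aestronglyMeasurable.mul hg.aestronglyMeasurable) (hg.ae_norm_log_sub_log_mul_le w z)

theorem logPotential_sub (hg : IsRieszDensity g A p) (hw : w ≠ 0) (hz : z ≠ 0) :
    logPotential g w - logPotential g z =
      ∫ ω : ℂ, (Real.log ‖ω - w‖ - Real.log ‖ω - z‖) * g ω := by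
  rw [logPotential, logPotential, ← integral_sub (hg.integrable_log_sub_log_mul hw one_ne_zero)
    (hg.integrable_log_sub_log_mul hz one_ne_zero)]
  congr 1 with ω
  ring

theorem abs_logPotential_sub_le (hg : IsRieszDensity g A p) (hw : w ≠ 0) (hz : z ≠ 0) :
    |logPotential g w - logPotential g z| ≤
      A * rieszConst p * ‖w - z‖ * (‖w‖ ^ (p + 1) + ‖z‖ ^ (p + 1)) := by
  rw [hg.logPotential_sub hw hz]
  refine (norm_integral_le_of_norm_le (hg.integrable_norm_rpow_mul_add hw hz (A * ‖w - z‖))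
    (hg.ae_norm_log_sub_log_mul_le w z)).trans_eq ?_
  rw [integral_const_mul,
    integral_add (integrable_norm_rpow_mul_inv_norm_sub hg.neg_two_lt hg.lt_neg_one hw)
      (integrable_norm_rpow_mul_inv_norm_sub hg.neg_two_lt hg.lt_neg_one hz),
    integral_norm_rpow_mul_inv_norm_sub hw, integral_norm_rpow_mul_inv_norm_sub hz]
  ring

theorem logPotential_sub_sub_reMulCLM (hg : IsRieszDensity g A p) (hw : w ≠ 0) (hz : z ≠ 0) :
    logPotential g z - logPotential g w -
        reMulCLM (cauchyTransform (fun ω => g ω) w) (z - w) =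
      ∫ ω : ℂ, (Real.log ‖ω - z‖ - Real.log ‖ω - w‖ - ((z - w) / (w - ω)).re) * g ω := by
  have hcauchy := (hg.ofReal.integrable_div_sub hw).mul_const (z - w)
  have hre : reMulCLM (cauchyTransform (fun ω => g ω) w) (z - w) =
      ∫ ω : ℂ, RCLike.re ((g ω : ℂ) / (w - ω) * (z - w)) := by
    rw [reMulCLM_apply, cauchyTransform, ← integral_mul_const]
    exact (integral_re hcauchy).symm
  rw [hre, hg.logPotential_sub hz hw,
    ← integral_sub (hg.integrable_log_sub_log_mul hz hw) hcauchy.re]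
  congr 1 with ω
  rw [RCLike.re_to_complex, div_mul_eq_mul_div, mul_div_assoc, re_ofReal_mul]
  ring

theorem norm_logPotential_sub_sub_le (hg : IsRieszDensity g A p) (hw : w ≠ 0) (hwz : w ≠ z)
    (hle : ‖z - w‖ ≤ ‖z‖) :
    ‖logPotential g z - logPotential g w -
        reMulCLM (cauchyTransform (fun ω => g ω) w) (z - w)‖ ≤
      16 * A * rieszConst p / ‖w‖ * ‖z - w‖ ^ (p + 3) := by
  have hpos : 0 < ‖z - w‖ := norm_pos_iff.2 (sub_ne_zero.2 hwz.symm)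
  have hz : z ≠ 0 := norm_pos_iff.1 (hpos.trans_le hle)
  have hbound : ∀ᵐ ω : ℂ,
      ‖(Real.log ‖ω - z‖ - Real.log ‖ω - w‖ - ((z - w) / (w - ω)).re) * g ω‖ ≤
        4 * A * ‖z - w‖ ^ 2 * (‖ω‖ ^ p * ‖ω - w‖⁻¹ * ‖ω - z‖⁻¹) := by
    filter_upwards [Measure.ae_ne volume w, Measure.ae_ne volume z] with ω hωw hωz
    rw [norm_mul]
    refine (mul_le_mul (abs_log_norm_sub_sub_log_norm_sub_sub_re_le hωw hωz) (hg.norm_le ω)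
      (norm_nonneg _) (by positivity)).trans_eq ?_
    ring
  have hA := hg.const_nonneg
  rw [hg.logPotential_sub_sub_reMulCLM hw hz]
  calc _ ≤ ∫ ω : ℂ, 4 * A * ‖z - w‖ ^ 2 * (‖ω‖ ^ p * ‖ω - w‖⁻¹ * ‖ω - z‖⁻¹) :=
        norm_integral_le_of_norm_le
          ((integrable_norm_rpow_mul_inv_norm_sub_mul_inv_norm_sub hg.neg_two_lt hg.lt_neg_one
            hw hz hwz).const_mul _) hbound
    _ ≤ 4 * A * ‖z - w‖ ^ 2 * (4 * rieszConst p / ‖w‖ * ‖z - w‖ ^ (p + 1)) := by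
        rw [integral_const_mul]
        gcongr
        exact integral_norm_rpow_mul_inv_norm_sub_mul_inv_norm_sub_le hg.neg_two_lt hg.lt_neg_one
          hw hwz hle
    _ = 16 * A * rieszConst p / ‖w‖ * ‖z - w‖ ^ (p + 3) := by
        rw [show p + 3 = (p + 1) + (2 : ℕ) by push_cast; ring, Real.rpow_add hpos (p + 1),
          Real.rpow_natCast]
        ring

theorem hasFDerivAt_logPotential (hg : IsRieszDensity g A p) (hw : w ≠ 0) :
    HasFDerivAt (logPotential g) (reMulCLM (cauchyTransform (fun ω => g ω) w)) w := by
  refine hasFDerivAt_of_eventually_norm_sub_le_rpow (a := p + 3)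
    (C := 16 * A * rieszConst p / ‖w‖) (by linarith [hg.neg_two_lt]) ?_
  filter_upwards [ball_mem_nhds w (half_pos (norm_pos_iff.2 hw))] with z hz
  rcases eq_or_ne w z with rfl | hwz
  · simp [Real.zero_rpow (by linarith [hg.neg_two_lt] : p + 3 ≠ 0)]
  · rw [mem_ball_iff_norm] at hz
    have htri : ‖w‖ ≤ ‖z‖ + ‖z - w‖ := by simpa using norm_sub_le z (z - w)
    exact hg.norm_logPotential_sub_sub_le hw hwz (by linarith)

end IsRieszDensity

end RieszDensity

section CircleAverage

theorem integrableOn_comp_polarCoord_symm {E : Type*} [NormedAddCommGroup E] [NormedSpace ℝ E]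
    {f : ℂ → E} (hf : Integrable f) :
    IntegrableOn (fun p : ℝ × ℝ => p.1 • f (Complex.polarCoord.symm p)) polarCoord.target := by
  have hprod : Integrable (f ∘ measurableEquivRealProd.symm) :=
    volume_preserving_equiv_real_prod.symm.integrable_comp_of_integrable hf
  have himage := (integrableOn_image_iff_integrableOn_abs_det_fderiv_smul volume
    polarCoord.open_target.measurableSet
    (fun p _ => (hasFDerivAt_polarCoord_symm p).hasFDerivWithinAt) polarCoord.symm.injOn
    (f ∘ measurableEquivRealProd.symm)).1 hprod.integrableOn
  refine himage.congr_fun (fun p hp => ?_) polarCoord.open_target.measurableSet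
  simp only [det_fderivPolarCoordSymm, abs_of_pos (mem_Ioi.1 hp.1), Function.comp_apply,
    measurableEquivRealProd_symm_polarCoord_symm_apply]

theorem setIntegral_polarCoord_symm_eq_circleAverage {E : Type*} [NormedAddCommGroup E]
    [NormedSpace ℝ E] (f : ℂ → E) (r : ℝ) :
    ∫ θ in Ioo (-π) π, r • f (Complex.polarCoord.symm (r, θ)) =
      (2 * π * r) • Real.circleAverage f 0 r := by
  have hshift := Real.circleAverage_eq_integral_add (f := f) (c := 0) (R := r) (-π)
  rw [intervalIntegral.integral_comp_add_right (fun θ => f (circleMap 0 r θ)), zero_add,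
    two_mul, add_neg_cancel_right, intervalIntegral.integral_of_le (by linarith [Real.pi_pos]),
    integral_Ioc_eq_integral_Ioo] at hshift
  rw [integral_smul, hshift, smul_smul]
  congr 1
  · field_simp
    ring
  · refine integral_congr_ae (ae_of_all _ fun θ => ?_)
    simp [circleMap, exp_mul_I]

theorem integral_eq_integral_circleAverage {E : Type*} [NormedAddCommGroup E] [NormedSpace ℝ E]
    {f : ℂ → E} (hf : Integrable f) :
    ∫ ω, f ω = ∫ r in Ioi (0 : ℝ), (2 * π * r) • Real.circleAverage f 0 r := by
  have hpolar := integrableOn_comp_polarCoord_symm hf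
  rw [polarCoord_target] at hpolar
  rw [← Complex.integral_comp_polarCoord_symm, polarCoord_target, Measure.volume_eq_prod,
    setIntegral_prod _ hpolar]
  simp only [setIntegral_polarCoord_symm_eq_circleAverage]

theorem circleAverage_inv_sub_of_lt_norm {t : ℂ} {r : ℝ} (h : |r| < ‖t‖) :
    Real.circleAverage (fun z => (t - z)⁻¹) 0 r = t⁻¹ := by
  have hne : ∀ z ∈ closedBall (0 : ℂ) |r|, t - z ≠ 0 := fun z hz hzt => by
    rw [mem_closedBall_zero_iff, ← sub_eq_zero.1 hzt] at hz
    exact hz.not_gt h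
  have hdiff : DifferentiableOn ℂ (fun z => (t - z)⁻¹) (closedBall (0 : ℂ) |r|) :=
    (differentiableOn_id.const_sub t).inv hne
  simpa using (hdiff.mono closure_ball_subset_closedBall).diffContOnCl.circleAverage

/- On the circle `|z| = r` the inversion `z ↦ r² / z` turns `(t - z)⁻¹` into a function that is
holomorphic in the disc and vanishes at the centre. -/
theorem circleAverage_inv_sub_of_norm_lt {t : ℂ} {r : ℝ} (h : ‖t‖ < r) :
    Real.circleAverage (fun z => (t - z)⁻¹) 0 r = 0 := by
  have hr : 0 < r := (norm_nonneg t).trans_lt h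
  have hne : ∀ z ∈ closedBall (0 : ℂ) |1|, t * z - r ≠ 0 := fun z hz hzr => by
    rw [mem_closedBall_zero_iff, abs_one] at hz
    have hnorm : ‖t‖ * ‖z‖ = r := by
      rw [← norm_mul, sub_eq_zero.1 hzr, norm_real, Real.norm_of_nonneg hr.le]
    nlinarith [norm_nonneg t]
  have hdiff : DifferentiableOn ℂ (fun z => z / (t * z - r)) (closedBall (0 : ℂ) |1|) :=
    differentiableOn_id.div (by fun_prop) hne
  have hsphere : EqOn (fun z : ℂ => (t - (r * z⁻¹ + 0))⁻¹) (fun z => z / (t * z - r))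
      (sphere 0 |1|) := fun z hz => by
    beta_reduce
    have hz0 : z ≠ 0 := ne_zero_of_mem_sphere (by norm_num) ⟨z, hz⟩
    have hzr := hne z (sphere_subset_closedBall hz)
    rw [inv_eq_one_div, div_eq_div_iff (fun h0 => hzr ?_) hzr]
    · field_simp
      ring
    · linear_combination z * h0 + r * mul_inv_cancel₀ hz0
  rw [Real.circleAverage_eq_circleAverage_zero_one, ← Real.circleAverage_zero_one_congr_inv,
    Real.circleAverage_congr_sphere hsphere]
  simpa using (hdiff.mono closure_ball_subset_closedBall).diffContOnCl.circleAverage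

theorem integrableOn_norm_sub_rpow_ball {p : ℝ} (hp : -2 < p) (v c : ℂ) (R : ℝ) :
    IntegrableOn (fun ω => ‖ω - v‖ ^ p) (ball c R) :=
  ((locallyIntegrable_norm_sub_rpow (by simpa using hp) v).integrableOn_isCompact
    (isCompact_closedBall c R)).mono_set ball_subset_closedBall

theorem integrableOn_inv_sub_ball (w c : ℂ) (R : ℝ) :
    IntegrableOn (fun ω : ℂ => (w - ω)⁻¹) (ball c R) := by
  refine (integrableOn_norm_sub_rpow_ball (p := -1) (by norm_num) w c R).mono'
    (by fun_prop : Measurable fun ω : ℂ => (w - ω)⁻¹).aestronglyMeasurable (ae_of_all _ fun ω => ?_)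
  rw [norm_inv, norm_sub_rev, Real.rpow_neg_one]

theorem setIntegral_ball_eq_integral_circleAverage {E : Type*} [NormedAddCommGroup E]
    [NormedSpace ℝ E] {f : ℂ → E} {R : ℝ} (hf : IntegrableOn f (ball 0 R)) :
    ∫ ω in ball 0 R, f ω = ∫ r in Ioo 0 R, (2 * π * r) • Real.circleAverage f 0 r := by
  have haverage : ∀ r ∈ Ioi (0 : ℝ), (2 * π * r) • Real.circleAverage ((ball 0 R).indicator f) 0 r =
      (Iio R).indicator (fun r => (2 * π * r) • Real.circleAverage f 0 r) r := fun r hr => by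
    have hnorm : ∀ z ∈ sphere (0 : ℂ) |r|, ‖z‖ = r := fun z hz => by
      rw [mem_sphere_zero_iff_norm.1 hz, abs_of_pos hr]
    by_cases hrR : r < R
    · rw [indicator_of_mem (mem_Iio.2 hrR)]
      refine congrArg _ (Real.circleAverage_congr_sphere fun z hz => indicator_of_mem ?_ f)
      rwa [mem_ball_zero_iff, hnorm z hz]
    · rw [indicator_of_notMem (notMem_Iio.2 (not_lt.1 hrR)),
        Real.circleAverage_congr_sphere (f₂ := 0) fun z hz => indicator_of_notMem ?_ f]
      · simp [Real.circleAverage_def]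
      · rwa [mem_ball_zero_iff, hnorm z hz]
  rw [← integral_indicator measurableSet_ball,
    integral_eq_integral_circleAverage ((integrable_indicator_iff measurableSet_ball).2 hf),
    setIntegral_congr_fun measurableSet_Ioi haverage, setIntegral_indicator measurableSet_Iio,
    Ioi_inter_Iio]

theorem integral_ball_zero_inv_sub {t : ℂ} {R : ℝ} (ht : ‖t‖ < R) :
    ∫ ω in ball (0 : ℂ) R, (t - ω)⁻¹ = π * conj t := by
  have haverage : ∀ᵐ r : ℝ, r ∈ Ioo 0 R →
      (2 * π * r) • Real.circleAverage (fun ω => (t - ω)⁻¹) 0 r =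
        (Iio ‖t‖).indicator (fun r => (2 * π * r) • t⁻¹) r := by
    filter_upwards [Measure.ae_ne volume ‖t‖] with r hrt hr
    rcases hrt.lt_or_gt with h | h
    · rw [circleAverage_inv_sub_of_lt_norm (by rwa [abs_of_pos hr.1]),
        indicator_of_mem (mem_Iio.2 h)]
    · rw [circleAverage_inv_sub_of_norm_lt h, indicator_of_notMem (notMem_Iio.2 h.le), smul_zero]
  have hradial : ∫ r in Ioo 0 ‖t‖, 2 * π * r = π * ‖t‖ ^ 2 := by
    rw [← integral_Ioc_eq_integral_Ioo, ← intervalIntegral.integral_of_le (norm_nonneg t),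
      intervalIntegral.integral_const_mul, integral_id]
    ring
  rw [setIntegral_ball_eq_integral_circleAverage (integrableOn_inv_sub_ball t 0 R),
    setIntegral_congr_ae measurableSet_Ioo haverage, setIntegral_indicator measurableSet_Iio,
    Ioo_inter_Iio, min_eq_right ht.le, integral_smul_const, hradial, real_smul, ofReal_mul,
    ofReal_pow, ← mul_conj', mul_assoc, mul_right_comm]
  rcases eq_or_ne t 0 with rfl | h0
  · simp
  · rw [mul_inv_cancel₀ h0, one_mul]

theorem integral_ball_inv_sub {c w : ℂ} {R : ℝ} (hw : w ∈ ball c R) :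
    ∫ ω in ball c R, (w - ω)⁻¹ = π * conj (w - c) := by
  rw [mem_ball_iff_norm] at hw
  rw [← integral_ball_zero_inv_sub hw, ← integral_indicator measurableSet_ball,
    ← integral_indicator measurableSet_ball, ← integral_add_left_eq_self _ c]
  congr 1 with ω
  simp only [indicator, mem_ball_iff_norm, add_sub_cancel_left, sub_zero]
  congr 2
  ring

end CircleAverage

section HolderDensity

/-- The real-linear map `t ↦ a t + b t̄` of the plane: the differential of a map with Wirtinger
derivatives `∂ = a` and `∂̄ = b`. -/
def wirtingerCLM (a b : ℂ) : ℂ →L[ℝ] ℂ :=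
  ContinuousLinearMap.mul ℝ ℂ a + b • (conjCLE : ℂ →L[ℝ] ℂ)

theorem wirtingerCLM_apply (a b t : ℂ) : wirtingerCLM a b t = a * t + b * conj t := rfl

/-- The Beurling transform over the ball `B(c, R)`, regularised by subtracting the value of the
density: the `∂`-derivative at `w` of the Cauchy transform of `g` restricted to that ball. -/
def beurlingTransformBall (g : ℂ → ℂ) (c : ℂ) (R : ℝ) (w : ℂ) : ℂ :=
  -∫ ω in ball c R, (g ω - g w) / (w - ω) ^ 2

variable {g : ℂ → ℂ} {c w z : ℂ} {R : ℝ} {K γ : ℝ≥0}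

theorem aestronglyMeasurable_sub_div (hg : HolderOnWith K γ g (ball c R)) (hγ : 0 < γ) (a : ℂ)
    {k : ℂ → ℂ} (hk : Measurable k) :
    AEStronglyMeasurable (fun ω => (g ω - a) / k ω) (volume.restrict (ball c R)) :=
  ((hg.continuousOn hγ).sub continuousOn_const |>.aestronglyMeasurable measurableSet_ball).div₀
    hk.aestronglyMeasurable

theorem norm_sub_div_sub_sq_le (hg : HolderOnWith K γ g (ball c R)) (hw : w ∈ ball c R) {ω : ℂ}
    (hω : ω ∈ ball c R) (hne : ω ≠ w) :
    ‖(g ω - g w) / (w - ω) ^ 2‖ ≤ K * ‖ω - w‖ ^ ((γ : ℝ) - 2) := by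
  have hpos : 0 < ‖ω - w‖ := norm_pos_iff.2 (sub_ne_zero.2 hne)
  rw [norm_div, norm_pow, norm_sub_rev w, Real.rpow_sub hpos, Real.rpow_two, ← mul_div_assoc]
  gcongr
  simpa only [dist_eq_norm] using hg.dist_le hω hw

theorem integrableOn_sub_div_sub_sq (hg : HolderOnWith K γ g (ball c R)) (hγ : 0 < γ)
    (hw : w ∈ ball c R) : IntegrableOn (fun ω => (g ω - g w) / (w - ω) ^ 2) (ball c R) := by
  refine ((integrableOn_norm_sub_rpow_ball (p := (γ : ℝ) - 2) (by simpa using hγ) w c R).const_mul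
    K).mono' (aestronglyMeasurable_sub_div hg hγ _ (by fun_prop)) ?_
  filter_upwards [ae_restrict_mem measurableSet_ball, ae_restrict_of_ae (Measure.ae_ne volume w)]
    with ω hω hne
  exact norm_sub_div_sub_sq_le hg hw hω hne

theorem integrableOn_sub_div_sub (hg : HolderOnWith K γ g (ball c R)) (hγ : 0 < γ)
    (hw : w ∈ ball c R) (z : ℂ) : IntegrableOn (fun ω => (g ω - g w) / (z - ω)) (ball c R) := by
  refine (integrableOn_inv_sub_ball z c R).bdd_mul (c := K * (2 * R) ^ (γ : ℝ))
    ((hg.continuousOn hγ).sub continuousOn_const |>.aestronglyMeasurable measurableSet_ball) ?_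
  filter_upwards [ae_restrict_mem measurableSet_ball] with ω hω
  rw [← dist_eq_norm]
  refine (hg.dist_le hω hw).trans ?_
  gcongr
  linarith [dist_triangle_right ω w c, mem_ball.1 hω, mem_ball.1 hw]

theorem integral_ball_div_sub (hg : HolderOnWith K γ g (ball c R)) (hγ : 0 < γ)
    (hw : w ∈ ball c R) (hz : z ∈ ball c R) :
    ∫ ω in ball c R, g ω / (z - ω) =
      (∫ ω in ball c R, (g ω - g w) / (z - ω)) + π * g w * conj (z - c) := by
  rw [mul_assoc, mul_left_comm, ← integral_ball_inv_sub hz, ← integral_const_mul,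
    ← integral_add (integrableOn_sub_div_sub hg hγ hw z)
      ((integrableOn_inv_sub_ball z c R).const_mul _)]
  congr 1 with ω
  ring

theorem integral_ball_div_sub_sub_wirtingerCLM (hg : HolderOnWith K γ g (ball c R)) (hγ : 0 < γ)
    (hw : w ∈ ball c R) (hz : z ∈ ball c R) :
    (∫ ω in ball c R, g ω / (z - ω)) - (∫ ω in ball c R, g ω / (w - ω)) -
        wirtingerCLM (beurlingTransformBall g c R w) (π * g w) (z - w) =
      ∫ ω in ball c R, (z - w) ^ 2 * ((g ω - g w) / (w - ω) ^ 2 / (z - ω)) := by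
  have hsq := (integrableOn_sub_div_sub_sq hg hγ hw).mul_const (z - w)
  have hsub : IntegrableOn (fun ω => (g ω - g w) / (z - ω) - (g ω - g w) / (w - ω)) (ball c R) :=
    (integrableOn_sub_div_sub hg hγ hw z).sub (integrableOn_sub_div_sub hg hγ hw w)
  calc _ = (∫ ω in ball c R, (g ω - g w) / (z - ω)) - (∫ ω in ball c R, (g ω - g w) / (w - ω)) +
        (∫ ω in ball c R, (g ω - g w) / (w - ω) ^ 2) * (z - w) := by
        rw [integral_ball_div_sub hg hγ hw hz, integral_ball_div_sub hg hγ hw hw,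
          wirtingerCLM_apply, beurlingTransformBall]
        simp only [map_sub]
        ring
    _ = ∫ ω in ball c R, ((g ω - g w) / (z - ω) - (g ω - g w) / (w - ω) +
        (g ω - g w) / (w - ω) ^ 2 * (z - w)) := by
        rw [← integral_sub (integrableOn_sub_div_sub hg hγ hw z)
          (integrableOn_sub_div_sub hg hγ hw w), ← integral_mul_const, ← integral_add hsub hsq]
    _ = _ := by
        refine integral_congr_ae (ae_restrict_of_ae ?_)
        filter_upwards [Measure.ae_ne volume w, Measure.ae_ne volume z] with ω hωw hωz
        have hw' : w - ω ≠ 0 := sub_ne_zero.2 hωw.symm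
        have hz' : z - ω ≠ 0 := sub_ne_zero.2 hωz.symm
        field_simp
        ring

theorem norm_integral_ball_div_sub_sub_le (hg : HolderOnWith K γ g (ball c R)) (hγ : 0 < γ)
    (hγ1 : γ < 1) (hw : w ∈ ball c R) (hz : z ∈ ball c R) :
    ‖(∫ ω in ball c R, g ω / (z - ω)) - (∫ ω in ball c R, g ω / (w - ω)) -
        wirtingerCLM (beurlingTransformBall g c R w) (π * g w) (z - w)‖ ≤
      K * rieszConst (γ - 2) * ‖z - w‖ ^ (γ + 1 : ℝ) := by
  rcases eq_or_ne w z with rfl | hwz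
  · have := rieszConst_nonneg (γ - 2)
    simpa only [sub_self, map_zero, norm_zero] using by positivity
  have hpos : 0 < ‖z - w‖ := norm_pos_iff.2 (sub_ne_zero.2 hwz.symm)
  have hγ' : (γ : ℝ) - 2 < -1 := by linarith [NNReal.coe_lt_one.2 hγ1]
  have hkernel := (integrable_norm_sub_rpow_mul_inv_norm_sub (p := (γ : ℝ) - 2) (by simpa using hγ)
    hγ' hwz).const_mul (‖z - w‖ ^ 2 * K)
  rw [integral_ball_div_sub_sub_wirtingerCLM hg hγ hw hz]
  calc _ ≤ ∫ ω in ball c R, ‖z - w‖ ^ 2 * K * (‖ω - w‖ ^ ((γ : ℝ) - 2) * ‖ω - z‖⁻¹) := by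
        refine norm_integral_le_of_norm_le hkernel.integrableOn ?_
        filter_upwards [ae_restrict_mem measurableSet_ball,
          ae_restrict_of_ae (Measure.ae_ne volume w)] with ω hω hne
        rw [norm_mul, norm_pow, norm_div_sub_eq, mul_assoc, ← mul_assoc (K : ℝ)]
        gcongr
        exact norm_sub_div_sub_sq_le hg hw hω hne
    _ ≤ ∫ ω, ‖z - w‖ ^ 2 * K * (‖ω - w‖ ^ ((γ : ℝ) - 2) * ‖ω - z‖⁻¹) :=
        setIntegral_le_integral hkernel (ae_of_all _ fun ω => by positivity)
    _ = K * rieszConst (γ - 2) * ‖z - w‖ ^ (γ + 1 : ℝ) := by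
        rw [integral_const_mul, integral_norm_sub_rpow_mul_inv_norm_sub hwz,
          show (γ + 1 : ℝ) = (γ - 2 + 1) + (2 : ℕ) by push_cast; ring,
          Real.rpow_add hpos (γ - 2 + 1 : ℝ), Real.rpow_natCast]
        ring

theorem hasFDerivAt_integral_ball_div_sub (hg : HolderOnWith K γ g (ball c R)) (hγ : 0 < γ)
    (hγ1 : γ < 1) (hw : w ∈ ball c R) :
    HasFDerivAt (fun z => ∫ ω in ball c R, g ω / (z - ω))
      (wirtingerCLM (beurlingTransformBall g c R w) (π * g w)) w :=
  hasFDerivAt_of_eventually_norm_sub_le_rpow (by simpa using hγ)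
    (eventually_of_mem (isOpen_ball.mem_nhds hw) fun _ hz =>
      norm_integral_ball_div_sub_sub_le hg hγ hγ1 hw hz)

theorem contDiffOn_integral_ball_div_sub (hg : HolderOnWith K γ g (ball c R)) (hγ : 0 < γ)
    (hγ1 : γ < 1) : ContDiffOn ℝ 1 (fun z => ∫ ω in ball c R, g ω / (z - ω)) (ball c R) :=
  contDiffOn_one_of_norm_sub_sub_le_rpow (by simpa using hγ) isOpen_ball
    (fun _ hw _ hz => norm_integral_ball_div_sub_sub_le hg hγ hγ1 hw hz)
    (mul_nonneg K.2 (rieszConst_nonneg _))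

theorem norm_div_sub_sq_le_of_le {a ω : ℂ} {d : ℝ} (hd : 0 < d) (hz : ‖z - w‖ ≤ d)
    (hω : 2 * d ≤ ‖ω - w‖) : ‖a / (z - ω) ^ 2‖ ≤ 2 / d * ‖a / (w - ω)‖ := by
  have htri : ‖ω - w‖ ≤ ‖z - ω‖ + ‖z - w‖ := by
    simpa [norm_sub_rev, add_comm] using norm_sub_le (z - w) (z - ω)
  have hzω : d ≤ ‖z - ω‖ := by linarith
  rw [norm_div, norm_pow, norm_div, norm_sub_rev w, div_mul_div_comm,
    div_le_div_iff₀ (pow_pos (hd.trans_le hzω) 2) (mul_pos hd (by linarith))]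
  nlinarith [norm_nonneg a, mul_le_mul hzω (by linarith : ‖ω - w‖ ≤ 2 * ‖z - ω‖)
    (norm_nonneg _) (by linarith)]

theorem differentiableAt_cauchyTransform {d : ℝ} (hg : AEStronglyMeasurable g)
    (hint : Integrable fun ω => g ω / (w - ω)) (hd : 0 < d)
    (hzero : ∀ ω ∈ ball w (2 * d), g ω = 0) : DifferentiableAt ℂ (cauchyTransform g) w := by
  have hbound : ∀ ω, ∀ z ∈ ball w d, ‖-g ω / (z - ω) ^ 2‖ ≤ 2 / d * ‖g ω / (w - ω)‖ := by
    intro ω z hz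
    by_cases hω : ω ∈ ball w (2 * d)
    · simp [hzero ω hω]
    · rw [mem_ball_iff_norm, not_lt] at hω
      rw [neg_div, norm_neg]
      exact norm_div_sub_sq_le_of_le hd (mem_ball_iff_norm.1 hz).le hω
  have hderiv : ∀ ω, ∀ z ∈ ball w d,
      HasDerivAt (fun z => g ω / (z - ω)) (-g ω / (z - ω) ^ 2) z := by
    intro ω z hz
    by_cases hω : ω ∈ ball w (2 * d)
    · simpa [hzero ω hω] using hasDerivAt_const z (0 : ℂ)
    · have hne : z - ω ≠ 0 := sub_ne_zero.2 fun h =>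
        hω (h ▸ ball_subset_ball (by linarith) hz)
      simpa using (hasDerivAt_const z (g ω)).fun_div ((hasDerivAt_id z).sub_const ω) hne
  exact (hasDerivAt_integral_of_dominated_loc_of_deriv_le (ball_mem_nhds w hd)
    (Eventually.of_forall fun z => hg.div₀ (by fun_prop)) hint (hg.neg.div₀ (by fun_prop))
    (ae_of_all _ hbound) (hint.norm.const_mul _) (ae_of_all _ hderiv)).2.differentiableAt

theorem hasFDerivAt_wirtingerCLM_of_hasDerivAt {f : ℂ → ℂ} {a : ℂ} (hf : HasDerivAt f a z) :
    HasFDerivAt f (wirtingerCLM a 0) z := by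
  refine (hf.hasFDerivAt.restrictScalars ℝ).congr_fderiv ?_
  ext t
  simp [wirtingerCLM_apply, mul_comm]

theorem wirtingerCLM_add (a b a' b' : ℂ) :
    wirtingerCLM a b + wirtingerCLM a' b' = wirtingerCLM (a + a') (b + b') := by
  ext t
  simp only [add_apply, wirtingerCLM_apply]
  ring

namespace IsRieszDensity

variable {A p : ℝ}

theorem indicator (hg : IsRieszDensity g A p) {s : Set ℂ} (hs : MeasurableSet s) :
    IsRieszDensity (s.indicator g) A p where
  aestronglyMeasurable := hg.aestronglyMeasurable.indicator hs
  neg_two_lt := hg.neg_two_lt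
  lt_neg_one := hg.lt_neg_one
  norm_le ω := (norm_indicator_le_norm_self g ω).trans (hg.norm_le ω)

theorem differentiableAt_cauchyTransform_indicator_compl_ball (hg : IsRieszDensity g A p)
    (hw : w ∈ ball c R) (hw0 : w ≠ 0) :
    DifferentiableAt ℂ (cauchyTransform ((ball c R)ᶜ.indicator g)) w := by
  have hout := hg.indicator (measurableSet_ball (x := c) (ε := R)).compl
  rw [mem_ball] at hw
  refine differentiableAt_cauchyTransform (d := (R - dist w c) / 2) hout.aestronglyMeasurable
    (hout.integrable_div_sub hw0) (by linarith) fun ω hω => ?_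
  refine indicator_of_notMem (notMem_compl_iff.2 (ball_subset_ball' ?_ hω)) g
  linarith

theorem cauchyTransform_eq_add (hg : IsRieszDensity g A p) (hw0 : w ≠ 0) :
    cauchyTransform g w = (∫ ω in ball c R, g ω / (w - ω)) +
      cauchyTransform ((ball c R)ᶜ.indicator g) w := by
  rw [cauchyTransform, ← integral_add_compl (measurableSet_ball (x := c) (ε := R))
    (hg.integrable_div_sub hw0), cauchyTransform, ← integral_indicator measurableSet_ball.compl]
  congr 2 with ω
  by_cases hω : ω ∈ (ball c R)ᶜ <;> simp [hω]

theorem cauchyTransform_eventuallyEq (hg : IsRieszDensity g A p) (hw0 : w ≠ 0) :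
    cauchyTransform g =ᶠ[𝓝 w] fun z => (∫ ω in ball c R, g ω / (z - ω)) +
      cauchyTransform ((ball c R)ᶜ.indicator g) z :=
  eventually_of_mem (isOpen_ne.mem_nhds hw0) fun _ hz => hg.cauchyTransform_eq_add hz

theorem exists_hasFDerivAt_cauchyTransform (hg : IsRieszDensity g A p)
    (hH : HolderOnWith K γ g (ball c R)) (hγ : 0 < γ) (hγ1 : γ < 1) (hw : w ∈ ball c R)
    (hw0 : w ≠ 0) :
    ∃ a, HasFDerivAt (cauchyTransform g) (wirtingerCLM a (π * g w)) w := by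
  obtain ⟨a, ha⟩ := hg.differentiableAt_cauchyTransform_indicator_compl_ball hw hw0
  have hsum := (hasFDerivAt_integral_ball_div_sub hH hγ hγ1 hw).fun_add
    (hasFDerivAt_wirtingerCLM_of_hasDerivAt ha.hasDerivAt)
  rw [wirtingerCLM_add, add_zero] at hsum
  exact ⟨_, hsum.congr_of_eventuallyEq (hg.cauchyTransform_eventuallyEq hw0)⟩

theorem contDiffAt_cauchyTransform (hg : IsRieszDensity g A p)
    (hH : HolderOnWith K γ g (ball c R)) (hγ : 0 < γ) (hγ1 : γ < 1) (hw : w ∈ ball c R)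
    (hw0 : w ≠ 0) : ContDiffAt ℝ 1 (cauchyTransform g) w := by
  have hout : AnalyticAt ℂ (cauchyTransform ((ball c R)ᶜ.indicator g)) w := by
    refine analyticAt_iff_eventually_differentiableAt.2 ?_
    filter_upwards [isOpen_ball.mem_nhds hw, isOpen_ne.mem_nhds hw0] with z hz hz0
    exact hg.differentiableAt_cauchyTransform_indicator_compl_ball hz hz0
  exact (((contDiffOn_integral_ball_div_sub hH hγ hγ1).contDiffAt (isOpen_ball.mem_nhds hw)).add
    (hout.contDiffAt.restrict_scalars ℝ)).congr_of_eventuallyEq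
      (hg.cauchyTransform_eventuallyEq hw0)

end IsRieszDensity

end HolderDensity

section OddDensity

variable {g : ℂ → ℝ} {A p : ℝ}

theorem logPotential_conj (hodd : ∀ ω, g (conj ω) = -g ω) (w : ℂ) :
    logPotential g (conj w) = -logPotential g w := by
  have hreflect := conjLIE.measurePreserving.integral_comp conjLIE.toHomeomorph.measurableEmbedding
    fun ω => (Real.log ‖ω - conj w‖ - Real.log ‖ω - 1‖) * g ω
  have hnorm (a : ℂ) (ω : ℂ) : ‖conj ω - conj a‖ = ‖ω - a‖ := by
    rw [← map_sub, RCLike.norm_conj]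
  rw [logPotential, ← hreflect, logPotential, ← integral_neg]
  congr with ω
  have hone := hnorm 1 ω
  rw [map_one] at hone
  rw [conjLIE_apply, hodd, hnorm, hone, mul_neg]

theorem logPotential_ofReal (hodd : ∀ ω, g (conj ω) = -g ω) (x : ℝ) : logPotential g x = 0 := by
  have hconj := logPotential_conj hodd x
  rw [conj_ofReal] at hconj
  linarith

namespace IsRieszDensity

theorem abs_logPotential_le (hg : IsRieszDensity g A p) (hodd : ∀ ω, g (conj ω) = -g ω) (w : ℂ) :
    |logPotential g w| ≤ 4 * A * rieszConst p * ‖w‖ ^ (p + 2) := by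
  have hA := hg.const_nonneg
  have hc := rieszConst_nonneg p
  rcases eq_or_ne w 0 with rfl | hw
  · rw [← ofReal_zero, logPotential_ofReal hodd, abs_zero]
    positivity
  have hpos : 0 < ‖w‖ := norm_pos_iff.2 hw
  have hdist : ‖w - (‖w‖ : ℂ)‖ ≤ 2 * ‖w‖ := by
    refine (norm_sub_le _ _).trans_eq ?_
    rw [norm_real, norm_norm, two_mul]
  have hsub := hg.abs_logPotential_sub_le hw (ofReal_ne_zero.2 hpos.ne')
  rw [logPotential_ofReal hodd, sub_zero, norm_real, norm_norm] at hsub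
  calc |logPotential g w|
      ≤ A * rieszConst p * (2 * ‖w‖) * (‖w‖ ^ (p + 1) + ‖w‖ ^ (p + 1)) := hsub.trans (by gcongr)
    _ = 4 * A * rieszConst p * (‖w‖ ^ (p + 1) * ‖w‖) := by ring
    _ = 4 * A * rieszConst p * ‖w‖ ^ (p + 2) := by
        rw [← Real.rpow_add_one hpos.ne', add_assoc, one_add_one_eq_two]

theorem continuous_logPotential (hg : IsRieszDensity g A p) (hodd : ∀ ω, g (conj ω) = -g ω) :
    Continuous (logPotential g) := by
  refine continuous_iff_continuousAt.2 fun w => ?_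
  rcases eq_or_ne w 0 with rfl | hw
  · have hp : 0 < p + 2 := by linarith [hg.neg_two_lt]
    have hbound : Continuous fun w : ℂ => 4 * A * rieszConst p * ‖w‖ ^ (p + 2) :=
      continuous_const.mul (continuous_norm.rpow_const fun _ => Or.inr hp.le)
    have hzero : logPotential g 0 = 0 := by simpa using logPotential_ofReal hodd 0
    rw [ContinuousAt, hzero]
    refine squeeze_zero_norm (hg.abs_logPotential_le hodd) ?_
    simpa [Real.zero_rpow hp.ne'] using hbound.tendsto 0
  · exact (hg.hasFDerivAt_logPotential hw).continuousAt

end IsRieszDensity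

end OddDensity

section LocallyHolder

/-- `f` is locally Hölder continuous on `s`: near every point of `s` it is Hölder continuous on `s`
for some positive exponent, which may depend on the point. -/
def LocallyHolderOn {X Y : Type*} [PseudoEMetricSpace X] [PseudoEMetricSpace Y] (f : X → Y)
    (s : Set X) : Prop :=
  ∀ x ∈ s, ∃ C r : ℝ≥0, 0 < r ∧ ∃ t ∈ 𝓝[s] x, HolderOnWith C r f t

variable {X Y Z : Type*} {f : X → Y} {s : Set X} {x : X}

theorem holderOnWith_mul [PseudoEMetricSpace X] [SeminormedRing Y] {f g : X → Y} {A B C D r : ℝ≥0}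
    (hf : HolderOnWith C r f s) (hg : HolderOnWith D r g s) (hA : ∀ x ∈ s, ‖f x‖₊ ≤ A)
    (hB : ∀ x ∈ s, ‖g x‖₊ ≤ B) : HolderOnWith (C * B + A * D) r (fun x => f x * g x) s := by
  intro x hx y hy
  have hfxy := hf x hx y hy
  have hgxy := hg x hx y hy
  rw [edist_eq_enorm_sub] at hfxy hgxy
  have hfy : ‖f y‖ₑ ≤ A := ENNReal.coe_le_coe.2 (hA y hy)
  have hgx : ‖g x‖ₑ ≤ B := ENNReal.coe_le_coe.2 (hB x hx)
  have hmul (a b : Y) : ‖a * b‖ₑ ≤ ‖a‖ₑ * ‖b‖ₑ := by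
    simp only [enorm_eq_nnnorm, ← ENNReal.coe_mul]
    exact ENNReal.coe_le_coe.2 (nnnorm_mul_le a b)
  calc edist (f x * g x) (f y * g y)
      ≤ edist (f x * g x) (f y * g x) + edist (f y * g x) (f y * g y) := edist_triangle _ _ _
    _ = ‖(f x - f y) * g x‖ₑ + ‖f y * (g x - g y)‖ₑ := by
        rw [edist_eq_enorm_sub, edist_eq_enorm_sub, sub_mul, mul_sub]
    _ ≤ ‖f x - f y‖ₑ * ‖g x‖ₑ + ‖f y‖ₑ * ‖g x - g y‖ₑ := add_le_add (hmul _ _) (hmul _ _)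
    _ ≤ C * edist x y ^ (r : ℝ) * B + A * (D * edist x y ^ (r : ℝ)) := by gcongr
    _ = (C * B + A * D : ℝ≥0) * edist x y ^ (r : ℝ) := by push_cast; ring

namespace LocallyHolderOn

section PseudoEMetricSpace

variable [PseudoEMetricSpace X] [PseudoEMetricSpace Y] [PseudoEMetricSpace Z]

theorem continuousOn (hf : LocallyHolderOn f s) : ContinuousOn f s := fun x hx => by
  obtain ⟨C, r, hr, t, ht, hft⟩ := hf x hx
  exact (hft.continuousOn hr x (mem_of_mem_nhdsWithin hx ht)).mono_of_mem_nhdsWithin ht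

theorem comp {g : Y → Z} {u : Set Y} (hg : LocallyHolderOn g u) (hf : LocallyHolderOn f s)
    (hsu : MapsTo f s u) : LocallyHolderOn (fun x => g (f x)) s := by
  intro x hx
  obtain ⟨C, r, hr, t, ht, hft⟩ := hf x hx
  obtain ⟨D, q, hq, v, hv, hgv⟩ := hg (f x) (hsu hx)
  have hmem : f ⁻¹' v ∈ 𝓝[s] x := (hf.continuousOn x hx).tendsto_nhdsWithin hsu hv
  exact ⟨_, q * r, mul_pos hq hr, t ∩ f ⁻¹' v, inter_mem ht hmem,
    hgv.comp (hft.mono inter_subset_left) fun _ h => h.2⟩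

theorem congr {g : X → Y} (hf : LocallyHolderOn f s) (hgf : EqOn g f s) : LocallyHolderOn g s := by
  intro x hx
  obtain ⟨C, r, hr, t, ht, hft⟩ := hf x hx
  refine ⟨C, r, hr, t ∩ s, inter_mem ht self_mem_nhdsWithin, fun y hy z hz => ?_⟩
  rw [hgf hy.2, hgf hz.2]
  exact hft y hy.1 z hz.1

theorem exists_holderOnWith_of_le (hf : LocallyHolderOn f s) (hx : x ∈ s) :
    ∃ r₀ : ℝ≥0, 0 < r₀ ∧ ∀ r ≤ r₀, ∃ C : ℝ≥0, ∃ t ∈ 𝓝[s] x, HolderOnWith C r f t := by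
  obtain ⟨C, r₀, hr₀, t, ht, hft⟩ := hf x hx
  have hball : eball x 1 ∈ 𝓝[s] x := mem_nhdsWithin_of_mem_nhds (eball_mem_nhds x one_pos)
  refine ⟨r₀, hr₀, fun r hr => ⟨_, t ∩ eball x 1, inter_mem ht hball,
    (hft.mono inter_subset_left).of_le (D := 2) (fun y hy z hz => ?_) hr⟩⟩
  calc edist y z ≤ edist y x + edist z x := edist_triangle_right _ _ _
    _ ≤ 1 + 1 := add_le_add (mem_eball.1 hy.2).le (mem_eball.1 hz.2).le
    _ = (2 : ℝ≥0) := by norm_num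

end PseudoEMetricSpace

theorem mul [PseudoEMetricSpace X] [SeminormedRing Y] {g : X → Y} (hf : LocallyHolderOn f s)
    (hg : LocallyHolderOn g s) : LocallyHolderOn (fun x => f x * g x) s := by
  intro x hx
  obtain ⟨r, hr, hfr⟩ := hf.exists_holderOnWith_of_le hx
  obtain ⟨q, hq, hgq⟩ := hg.exists_holderOnWith_of_le hx
  obtain ⟨C, t, ht, hft⟩ := hfr (min r q) (min_le_left r q)
  obtain ⟨D, u, hu, hgu⟩ := hgq (min r q) (min_le_right r q)
  have hbdd {k : X → Y} (hk : ContinuousOn k s) : {y | ‖k y‖₊ < ‖k x‖₊ + 1} ∈ 𝓝[s] x :=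
    (hk x hx).nnnorm.eventually_lt_const (lt_add_one _)
  refine ⟨_, min r q, lt_min hr hq, _, inter_mem (inter_mem ht hu)
    (inter_mem (hbdd hf.continuousOn) (hbdd hg.continuousOn)), holderOnWith_mul
    (hft.mono fun _ h => h.1.1) (hgu.mono fun _ h => h.1.2) (fun _ h => h.2.1.le)
    fun _ h => h.2.2.le⟩

theorem of_contDiffAt {E F : Type*} [NormedAddCommGroup E] [NormedSpace ℝ E]
    [NormedAddCommGroup F] [NormedSpace ℝ F] {f : E → F} {s : Set E}
    (hf : ∀ x ∈ s, ContDiffAt ℝ 1 f x) : LocallyHolderOn f s := fun x hx => by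
  obtain ⟨K, t, ht, hft⟩ := (hf x hx).exists_lipschitzOnWith
  exact ⟨K, 1, one_pos, t, mem_nhdsWithin_of_mem_nhds ht, holderOnWith_one.2 hft⟩

theorem exists_holderOnWith_ball [PseudoMetricSpace X] [PseudoEMetricSpace Y]
    (hf : LocallyHolderOn f s) (hs : s ∈ 𝓝 x) :
    ∃ C r : ℝ≥0, 0 < r ∧ r < 1 ∧ ∃ R > 0, HolderOnWith C r f (ball x R) := by
  obtain ⟨r, hr, hfr⟩ := hf.exists_holderOnWith_of_le (mem_of_mem_nhds hs)
  obtain ⟨C, t, ht, hft⟩ := hfr (min r 2⁻¹) (min_le_left _ _)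
  rw [nhdsWithin_eq_nhds.2 hs] at ht
  obtain ⟨R, hR, hRt⟩ := Metric.mem_nhds_iff.1 ht
  exact ⟨C, min r 2⁻¹, lt_min hr (by positivity), (min_le_right _ _).trans_lt two_inv_lt_one, R, hR,
    hft.mono hRt⟩

theorem of_norm_sub_le_rpow [PseudoMetricSpace X] [SeminormedAddCommGroup Y]
    (h : ∀ x ∈ s, ∃ ε > (0 : ℝ), ∃ K γ : ℝ, 0 < γ ∧
      ∀ y ∈ s ∩ ball x ε, ∀ z ∈ s ∩ ball x ε, ‖f y - f z‖ ≤ K * dist y z ^ γ) :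
    LocallyHolderOn f s := by
  intro x hx
  obtain ⟨ε, hε, K, γ, hγ, hK⟩ := h x hx
  refine ⟨K.toNNReal, γ.toNNReal, Real.toNNReal_pos.2 hγ, s ∩ ball x ε,
    inter_mem self_mem_nhdsWithin (mem_nhdsWithin_of_mem_nhds (ball_mem_nhds x hε)),
    fun y hy z hz => ?_⟩
  rw [edist_nndist, edist_nndist, ← ENNReal.coe_rpow_of_nonneg _ NNReal.zero_le_coe,
    ← ENNReal.coe_mul, ENNReal.coe_le_coe, ← NNReal.coe_le_coe]
  push_cast
  rw [Real.coe_toNNReal γ hγ.le, dist_eq_norm (f y)]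
  exact (hK y hy z hz).trans (by gcongr; exact Real.le_coe_toNNReal K)

end LocallyHolderOn

end LocallyHolder

section ComplexGradient

variable {U : Set ℂ} {Ψ V : ℂ → ℝ} {F G P φ φ' : ℂ → ℂ} {a b c d z : ℂ}

theorem norm_reMulCLM_le (a : ℂ) : ‖reMulCLM a‖ ≤ ‖a‖ :=
  ContinuousLinearMap.opNorm_le_bound _ (norm_nonneg a) fun t =>
    (abs_re_le_norm (a * t)).trans_eq (norm_mul a t)

theorem contDiffOn_two_of_hasFDerivAt_reMulCLM (hU : IsOpen U)
    (hΨ : ∀ z ∈ U, HasFDerivAt Ψ (reMulCLM (P z)) z) (hP : ContDiffOn ℝ 1 P U) :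
    ContDiffOn ℝ 2 Ψ U := by
  have hreMul : ContDiff ℝ 1 reMulCLM :=
    (ContinuousLinearMap.compL ℝ ℂ ℂ ℝ reCLM ∘L ContinuousLinearMap.mul ℝ ℂ).contDiff
  rw [← one_add_one_eq_two, contDiffOn_succ_iff_fderiv_of_isOpen hU]
  exact ⟨fun z hz => (hΨ z hz).differentiableAt.differentiableWithinAt, by simp,
    (hreMul.comp_contDiffOn hP).congr fun z hz => (hΨ z hz).fderiv⟩

theorem lap_eq_of_hasFDerivAt_wirtingerCLM (hU : IsOpen U) (hz : z ∈ U)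
    (hΨ : ∀ z ∈ U, HasFDerivAt Ψ (reMulCLM (P z)) z) (hP : HasFDerivAt P (wirtingerCLM a b) z) :
    lap Ψ z = 2 * b.re := by
  have hsecond (e : ℂ) : fderiv ℝ (fun w => fderiv ℝ Ψ w e) z e = (wirtingerCLM a b e * e).re := by
    have heq : (fun w => fderiv ℝ Ψ w e) =ᶠ[𝓝 z] fun w => (P w * e).re :=
      eventually_of_mem (hU.mem_nhds hz) fun w hw => by
        simp only [(hΨ w hw).fderiv, reMulCLM_apply]
    have hderiv : HasFDerivAt (fun w => (P w * e).re) _ z :=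
      reCLM.hasFDerivAt.comp z (hP.mul_const' e)
    rw [heq.fderiv_eq, hderiv.fderiv]
    rfl
  have hone : wirtingerCLM a b 1 * 1 = a + b := by
    rw [wirtingerCLM_apply, map_one, mul_one, mul_one, mul_one]
  have hI : wirtingerCLM a b I * I = b - a := by
    rw [wirtingerCLM_apply, conj_I]
    linear_combination (a - b) * I_mul_I
  rw [lap, hsecond, hsecond, hone, hI, add_re, sub_re]
  ring

theorem hasFDerivAt_wirtingerCLM_comp (hF : HasFDerivAt F (wirtingerCLM a b) (φ z))
    (hφ : HasDerivAt φ c z) :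
    HasFDerivAt (fun z => F (φ z)) (wirtingerCLM (a * c) (b * conj c)) z := by
  refine (hF.comp z (hasFDerivAt_wirtingerCLM_of_hasDerivAt hφ)).congr_fderiv ?_
  ext t
  simp only [ContinuousLinearMap.comp_apply, wirtingerCLM_apply, map_mul, zero_mul, add_zero]
  ring

theorem hasFDerivAt_wirtingerCLM_mul (hF : HasFDerivAt F (wirtingerCLM a b) z)
    (hG : HasFDerivAt G (wirtingerCLM c d) z) :
    HasFDerivAt (fun z => F z * G z) (wirtingerCLM (a * G z + F z * c) (b * G z + F z * d)) z := by
  refine (hF.mul hG).congr_fderiv ?_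
  ext t
  simp only [add_apply, smul_apply, smul_eq_mul, wirtingerCLM_apply]
  ring

theorem hasFDerivAt_reMulCLM_comp (hV : HasFDerivAt V (reMulCLM a) (φ z)) (hφ : HasDerivAt φ c z) :
    HasFDerivAt (fun z => V (φ z)) (reMulCLM (a * c)) z := by
  refine (hV.comp z (hasFDerivAt_wirtingerCLM_of_hasDerivAt hφ)).congr_fderiv ?_
  ext t
  simp only [ContinuousLinearMap.comp_apply, wirtingerCLM_apply, reMulCLM_apply, zero_mul, add_zero,
    mul_assoc]

theorem lap_comp_eq (hU : IsOpen U) (hz : z ∈ U)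
    (hV : ∀ z ∈ U, HasFDerivAt V (reMulCLM (G (φ z))) (φ z))
    (hφ : ∀ z ∈ U, HasDerivAt φ (φ' z) z) (hφ' : HasDerivAt φ' c z)
    (hG : HasFDerivAt G (wirtingerCLM a b) (φ z)) :
    lap (fun z => V (φ z)) z = 2 * b.re * ‖φ' z‖ ^ 2 := by
  have hP := hasFDerivAt_wirtingerCLM_mul (hasFDerivAt_wirtingerCLM_comp hG (hφ z hz))
    (hasFDerivAt_wirtingerCLM_of_hasDerivAt hφ')
  rw [lap_eq_of_hasFDerivAt_wirtingerCLM hU hz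
    (fun z hz => hasFDerivAt_reMulCLM_comp (hV z hz) (hφ z hz)) hP, mul_zero, add_zero, mul_assoc b,
    conj_mul', ← ofReal_pow, re_mul_ofReal, mul_assoc]

end ComplexGradient

section OddReflection

/-- The extension of a density on the upper half-plane to a density on the plane that is odd under
conjugation, so that its logarithmic potential vanishes on the real axis. -/
def oddReflection (g : ℂ → ℝ) (w : ℂ) : ℝ :=
  upperHalfPlaneSet.indicator g w - upperHalfPlaneSet.indicator g (conj w)

variable {g : ℂ → ℝ} {A p : ℝ} {w : ℂ}

theorem oddReflection_conj (g : ℂ → ℝ) (w : ℂ) :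
    oddReflection g (conj w) = -oddReflection g w := by
  rw [oddReflection, oddReflection, conj_conj, neg_sub]

theorem oddReflection_of_im_pos (g : ℂ → ℝ) (hw : 0 < w.im) : oddReflection g w = g w := by
  have hconj : conj w ∉ upperHalfPlaneSet := by simpa using hw.le
  rw [oddReflection, indicator_of_mem (s := upperHalfPlaneSet) hw, indicator_of_notMem hconj,
    sub_zero]

theorem oddReflection_of_im_eq_zero (g : ℂ → ℝ) (hw : w.im = 0) : oddReflection g w = 0 := by
  rw [oddReflection, conj_eq_iff_im.2 hw, sub_self]

theorem isRieszDensity_oddReflection (hg : ContinuousOn g upperHalfPlaneSet) (hp : -2 < p)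
    (hp1 : p < -1) (hA : 0 ≤ A) (hle : ∀ w ∈ upperHalfPlaneSet, |g w| ≤ A * ‖w‖ ^ p) :
    IsRieszDensity (oddReflection g) A p where
  aestronglyMeasurable := by
    have hH : MeasurableSet upperHalfPlaneSet := isOpen_upperHalfPlaneSet.measurableSet
    have hind : AEStronglyMeasurable (upperHalfPlaneSet.indicator g) :=
      (aestronglyMeasurable_indicator_iff hH).2 (hg.aestronglyMeasurable hH)
    exact hind.sub (hind.comp_measurePreserving conjLIE.measurePreserving)
  neg_two_lt := hp
  lt_neg_one := hp1
  norm_le w := by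
    rw [Real.norm_eq_abs]
    rcases lt_trichotomy w.im 0 with him | him | him
    · have hpos : 0 < (conj w).im := by simpa using him
      rw [← abs_neg, ← oddReflection_conj, oddReflection_of_im_pos g hpos, ← RCLike.norm_conj w]
      exact hle _ hpos
    · rw [oddReflection_of_im_eq_zero g him, abs_zero]
      positivity
    · rw [oddReflection_of_im_pos g him]
      exact hle w him

theorem LocallyHolderOn.exists_holderOnWith_ball_oddReflection
    (hg : LocallyHolderOn g upperHalfPlaneSet) (hw : 0 < w.im) :
    ∃ K γ : ℝ≥0, 0 < γ ∧ γ < 1 ∧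
      ∃ R > 0, HolderOnWith K γ (fun w => (oddReflection g w : ℂ)) (ball w R) := by
  have hodd : LocallyHolderOn (oddReflection g) upperHalfPlaneSet :=
    hg.congr fun w hw => oddReflection_of_im_pos g hw
  have hofReal : LocallyHolderOn (fun x : ℝ => (x : ℂ)) univ :=
    .of_contDiffAt fun _ _ => ofRealCLM.contDiff.contDiffAt
  exact (hofReal.comp hodd fun _ _ => mem_univ _).exists_holderOnWith_ball
    (isOpen_upperHalfPlaneSet.mem_nhds hw)

end OddReflection

section SectorGeometry

variable {β : ℝ} {z w : ℂ}

theorem sector_subset_slitPlane (hβ : β ≤ 1) : Sector β ⊆ slitPlane := fun _ hz =>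
  mem_slitPlane_iff_arg.2
    ⟨(hz.2.2.trans_le (mul_le_of_le_one_left Real.pi_pos.le hβ)).ne, hz.1⟩

theorem isOpen_sector (hβ : β ≤ 1) : IsOpen (Sector β) := by
  have heq : Sector β = slitPlane ∩ arg ⁻¹' Ioo 0 (β * π) := Subset.antisymm
    (fun _ hz => ⟨sector_subset_slitPlane hβ hz, hz.2⟩)
    fun _ hz => ⟨slitPlane_ne_zero hz.1, hz.2⟩
  rw [heq]
  exact ContinuousOn.isOpen_inter_preimage
    (fun z hz => (continuousAt_arg hz).continuousWithinAt) isOpen_slitPlane isOpen_Ioo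

theorem continuousWithinAt_arg_of_im_nonneg (hz : z ≠ 0) :
    ContinuousWithinAt arg {w : ℂ | 0 ≤ w.im} z := by
  by_cases hslit : z ∈ slitPlane
  · exact (continuousAt_arg hslit).continuousWithinAt
  · simp only [mem_slitPlane_iff, not_or, not_lt, not_not] at hslit
    have hre : z.re < 0 := hslit.1.lt_of_ne fun h => hz (Complex.ext h hslit.2)
    exact continuousWithinAt_arg_of_re_neg_of_im_zero hre hslit.2

theorem arg_mem_Icc_of_mem_closure_sector (hz : z ∈ closure (Sector β)) (hz0 : z ≠ 0) :
    arg z ∈ Icc 0 (β * π) := by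
  have hcont : ContinuousWithinAt arg (Sector β) z :=
    (continuousWithinAt_arg_of_im_nonneg hz0).mono fun w hw => arg_nonneg_iff.1 hw.2.1.le
  exact closure_minimal Ioo_subset_Icc_self isClosed_Icc (hcont.mem_closure hz fun _ hw => hw.2)

theorem mem_slitPlane_of_mem_closure_sector (hβ : β < 1) (hz : z ∈ closure (Sector β))
    (hz0 : z ≠ 0) : z ∈ slitPlane :=
  mem_slitPlane_iff_arg.2 ⟨((arg_mem_Icc_of_mem_closure_sector hz hz0).2.trans_lt
    (mul_lt_of_lt_one_left Real.pi_pos hβ)).ne, hz0⟩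

theorem continuousOn_cpow_const_closure_sector {r : ℂ} (hβ : β < 1) (hr : 0 < r.re) :
    ContinuousOn (fun z => z ^ r) (closure (Sector β)) := fun z hz => by
  rcases eq_or_ne z 0 with rfl | hz0
  · exact (continuousAt_cpow_const_of_re_pos (Or.inl le_rfl) hr).continuousWithinAt
  · exact (continuousAt_cpow_const
      (mem_slitPlane_of_mem_closure_sector hβ hz hz0)).continuousWithinAt

theorem cpow_mem_sector (hβ0 : 0 < β) (hβ : β ≤ 1) (hw : 0 < w.im) : w ^ (β : ℂ) ∈ Sector β := by
  have hw0 : w ≠ 0 := fun h => hw.ne' (h ▸ zero_im)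
  have harg0 : 0 < arg w := (arg_nonneg_iff.2 hw.le).lt_of_ne fun h =>
    hw.ne' (arg_eq_zero_iff.1 h.symm).2
  have hargπ : arg w < π := arg_lt_pi_iff.2 (Or.inr hw.ne')
  have hlt : arg w * β < β * π := mul_comm β π ▸ mul_lt_mul_of_pos_right hargπ hβ0
  have hpos : 0 < arg w * β := mul_pos harg0 hβ0
  have harg : arg (w ^ (β : ℂ)) = arg w * β := by
    rw [cpow_ofReal, ofReal_cos, ofReal_sin]
    exact arg_mul_cos_add_sin_mul_I (Real.rpow_pos_of_pos (norm_pos_iff.2 hw0) _)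
      ⟨by linarith [Real.pi_pos], hlt.le.trans (mul_le_of_le_one_left Real.pi_pos.le hβ)⟩
  exact ⟨fun h => hw0 ((cpow_eq_zero_iff _ _).1 h).1, harg ▸ hpos, harg ▸ hlt⟩

theorem nonempty_sector (hβ0 : 0 < β) (hβ : β ≤ 1) : (Sector β).Nonempty :=
  ⟨I ^ (β : ℂ), cpow_mem_sector hβ0 hβ (by simp)⟩

end SectorGeometry

section SectorMap

/-- The conformal map `z ↦ z ^ (1 / β)` of the sector of angle `βπ` onto the upper half-plane. -/
def sectorMap (β : ℝ) (z : ℂ) : ℂ := z ^ ((β⁻¹ : ℝ) : ℂ)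

/-- The complex derivative of `sectorMap β`. -/
def sectorMapDeriv (β : ℝ) (z : ℂ) : ℂ := (β⁻¹ : ℝ) * z ^ ((β⁻¹ - 1 : ℝ) : ℂ)

variable {β : ℝ} {z : ℂ}

theorem norm_sectorMap (β : ℝ) (z : ℂ) : ‖sectorMap β z‖ = ‖z‖ ^ β⁻¹ := norm_cpow_real z β⁻¹

theorem norm_sectorMapDeriv (hβ0 : 0 < β) (z : ℂ) :
    ‖sectorMapDeriv β z‖ = β⁻¹ * ‖z‖ ^ (β⁻¹ - 1) := by
  rw [sectorMapDeriv, norm_mul, norm_cpow_real, norm_real, Real.norm_of_nonneg (by positivity)]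

theorem hasDerivAt_sectorMap (β : ℝ) (hz : z ∈ slitPlane) :
    HasDerivAt (sectorMap β) (sectorMapDeriv β z) z := by
  rw [sectorMapDeriv, ofReal_sub, ofReal_one]
  exact (hasStrictDerivAt_cpow_const hz).hasDerivAt

theorem differentiableAt_sectorMapDeriv (β : ℝ) (hz : z ∈ slitPlane) :
    DifferentiableAt ℂ (sectorMapDeriv β) z :=
  (hasStrictDerivAt_cpow_const hz).hasDerivAt.differentiableAt.const_mul _

theorem contDiffAt_cpow_const {r : ℂ} {n : WithTop ℕ∞} (hz : z ∈ slitPlane) :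
    ContDiffAt ℝ n (fun z : ℂ => z ^ r) z :=
  (analyticAt_id.cpow analyticAt_const hz).contDiffAt.restrict_scalars ℝ

theorem arg_mul_inv_mem_Ioo (hβ0 : 0 < β) (hz : z ∈ Sector β) : arg z * β⁻¹ ∈ Ioo 0 π :=
  ⟨mul_pos hz.2.1 (inv_pos.2 hβ0), (mul_inv_lt_iff₀' hβ0).2 hz.2.2⟩

theorem im_sectorMap_pos (hβ0 : 0 < β) (hz : z ∈ Sector β) : 0 < (sectorMap β z).im := by
  rw [sectorMap, cpow_ofReal_im]
  exact mul_pos (Real.rpow_pos_of_pos (norm_pos_iff.2 hz.1) _)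
    (Real.sin_pos_of_mem_Ioo (arg_mul_inv_mem_Ioo hβ0 hz))

theorem sectorMap_ne_zero (β : ℝ) (hz : z ≠ 0) : sectorMap β z ≠ 0 := fun h =>
  hz ((cpow_eq_zero_iff _ _).1 h).1

theorem sectorMap_cpow (hβ0 : 0 < β) (hz : z ∈ Sector β) : sectorMap β z ^ (β : ℂ) = z := by
  obtain ⟨hpos, hlt⟩ := arg_mul_inv_mem_Ioo hβ0 hz
  have him : (log z * ((β⁻¹ : ℝ) : ℂ)).im = arg z * β⁻¹ := by rw [im_mul_ofReal, log_im]
  rw [sectorMap, ← cpow_mul _ (him ▸ by linarith [Real.pi_pos]) (him ▸ hlt.le), ← ofReal_mul,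
    inv_mul_cancel₀ hβ0.ne', ofReal_one, cpow_one]

theorem im_sectorMap_of_mem_frontier (hβ0 : 0 < β) (hβ : β ≤ 1) (hz : z ∈ frontier (Sector β)) :
    (sectorMap β z).im = 0 := by
  rw [sectorMap, cpow_ofReal_im]
  rcases eq_or_ne z 0 with rfl | hz0
  · simp
  rw [(isOpen_sector hβ).frontier_eq] at hz
  obtain ⟨hnonneg, hle⟩ := arg_mem_Icc_of_mem_closure_sector hz.1 hz0
  rcases hnonneg.eq_or_lt with h0 | hpos
  · rw [← h0, zero_mul, Real.sin_zero, mul_zero]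
  rcases hle.eq_or_lt with hβπ | hlt
  · rw [hβπ, mul_right_comm, mul_inv_cancel₀ hβ0.ne', one_mul, Real.sin_pi, mul_zero]
  · exact absurd ⟨hz0, hpos, hlt⟩ hz.2

end SectorMap

section SectorPotential

/-- The density `|(w ^ β)'|² f(w ^ β) / 2π` on the upper half-plane. The factor `|(w ^ β)'|²` is the
conformal weight of the Laplacian, and `1 / 2π` normalises the logarithmic kernel. -/
def sectorDensity (β : ℝ) (f : ℂ → ℝ) (w : ℂ) : ℝ :=
  (2 * π)⁻¹ * β ^ 2 * ‖w‖ ^ (2 * β - 2) * f (w ^ (β : ℂ))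

/-- The logarithmic potential of the odd reflection of `sectorDensity β f`, transported to the
sector of angle `βπ` by `sectorMap β`. -/
def sectorPotential (β : ℝ) (f : ℂ → ℝ) (z : ℂ) : ℝ :=
  logPotential (oddReflection (sectorDensity β f)) (sectorMap β z)

/-- The complex gradient `∂₁Ψ - i ∂₂Ψ` of `Ψ = sectorPotential β f`. -/
def sectorGradient (β : ℝ) (f : ℂ → ℝ) (z : ℂ) : ℂ :=
  cauchyTransform (fun w => oddReflection (sectorDensity β f) w) (sectorMap β z) *
    sectorMapDeriv β z

variable {β M : ℝ} {f : ℂ → ℝ} {z : ℂ}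

theorem sectorDensity_sectorMap (hβ0 : 0 < β) (hz : z ∈ Sector β) :
    2 * (π * sectorDensity β f (sectorMap β z)) * ‖sectorMapDeriv β z‖ ^ 2 = f z := by
  have hz0 : 0 < ‖z‖ := norm_pos_iff.2 hz.1
  have hexp : β⁻¹ * (2 * β - 2) + (β⁻¹ - 1) * 2 = 0 := by
    field_simp
    ring
  have hcancel : ‖z‖ ^ (β⁻¹ * (2 * β - 2)) * (‖z‖ ^ (β⁻¹ - 1)) ^ 2 = 1 := by
    rw [← Real.rpow_mul_natCast hz0.le, ← Real.rpow_add hz0, Nat.cast_two, hexp, Real.rpow_zero]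
  rw [sectorDensity, sectorMap_cpow hβ0 hz, norm_sectorMap, norm_sectorMapDeriv hβ0,
    ← Real.rpow_mul hz0.le]
  calc _ = f z * (‖z‖ ^ (β⁻¹ * (2 * β - 2)) * (‖z‖ ^ (β⁻¹ - 1)) ^ 2) := by field_simp
    _ = f z := by rw [hcancel, mul_one]

theorem locallyHolderOn_sectorDensity (hβ0 : 0 < β) (hβ : β ≤ 1)
    (hf : LocallyHolderOn f (Sector β)) :
    LocallyHolderOn (sectorDensity β f) upperHalfPlaneSet := by
  have hslit : upperHalfPlaneSet ⊆ slitPlane := fun w hw => Or.inr (ne_of_gt hw)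
  have hweight : LocallyHolderOn (fun w : ℂ => (2 * π)⁻¹ * β ^ 2 * ‖w‖ ^ (2 * β - 2))
      upperHalfPlaneSet := .of_contDiffAt fun w hw => by
    have hw0 : w ≠ 0 := slitPlane_ne_zero (hslit hw)
    exact contDiffAt_const.mul
      ((contDiffAt_norm ℝ hw0).rpow_const_of_ne (norm_ne_zero_iff.2 hw0))
  have hcpow : LocallyHolderOn (fun w : ℂ => w ^ (β : ℂ)) upperHalfPlaneSet :=
    .of_contDiffAt fun w hw => contDiffAt_cpow_const (hslit hw)
  exact hweight.mul (hf.comp hcpow fun w hw => cpow_mem_sector hβ0 hβ hw)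

theorem abs_sectorDensity_le (hβ0 : 0 < β) (hβ : β ≤ 1) (hM : ∀ z ∈ Sector β, |f z| ≤ M) {w : ℂ}
    (hw : 0 < w.im) : |sectorDensity β f w| ≤ (2 * π)⁻¹ * β ^ 2 * M * ‖w‖ ^ (2 * β - 2) := by
  rw [sectorDensity, abs_mul, abs_of_nonneg (by positivity), mul_right_comm _ M]
  gcongr
  exact hM _ (cpow_mem_sector hβ0 hβ hw)

theorem nonneg_of_forall_mem_sector_abs_le (hβ0 : 0 < β) (hβ : β ≤ 1)
    (hM : ∀ z ∈ Sector β, |f z| ≤ M) : 0 ≤ M :=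
  (abs_nonneg _).trans (hM _ (nonempty_sector hβ0 hβ).some_mem)

theorem isRieszDensity_oddReflection_sectorDensity (hβ0 : 0 < β) (hβ : β < 1 / 2)
    (hf : LocallyHolderOn f (Sector β)) (hM : ∀ z ∈ Sector β, |f z| ≤ M) :
    IsRieszDensity (oddReflection (sectorDensity β f)) ((2 * π)⁻¹ * β ^ 2 * M) (2 * β - 2) := by
  have hβ1 : β ≤ 1 := by linarith
  have hM0 := nonneg_of_forall_mem_sector_abs_le hβ0 hβ1 hM
  exact isRieszDensity_oddReflection (locallyHolderOn_sectorDensity hβ0 hβ1 hf).continuousOn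
    (by linarith) (by linarith) (by positivity) fun w hw => abs_sectorDensity_le hβ0 hβ1 hM hw

theorem continuousOn_sectorPotential (hβ0 : 0 < β) (hβ : β < 1 / 2)
    (hf : LocallyHolderOn f (Sector β)) (hM : ∀ z ∈ Sector β, |f z| ≤ M) :
    ContinuousOn (sectorPotential β f) (closure (Sector β)) :=
  ((isRieszDensity_oddReflection_sectorDensity hβ0 hβ hf hM).continuous_logPotential
    (oddReflection_conj _)).comp_continuousOn
    (continuousOn_cpow_const_closure_sector (by linarith) (by simpa using hβ0))

theorem sectorPotential_eq_zero_of_mem_frontier (hβ0 : 0 < β) (hβ : β ≤ 1) (f : ℂ → ℝ)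
    (hz : z ∈ frontier (Sector β)) : sectorPotential β f z = 0 := by
  have hreal : sectorMap β z = (sectorMap β z).re :=
    Complex.ext (ofReal_re _) (im_sectorMap_of_mem_frontier hβ0 hβ hz)
  rw [sectorPotential, hreal, logPotential_ofReal (oddReflection_conj _)]

theorem hasFDerivAt_logPotential_sectorMap (hβ0 : 0 < β) (hβ : β < 1 / 2)
    (hf : LocallyHolderOn f (Sector β)) (hM : ∀ z ∈ Sector β, |f z| ≤ M) (hz : z ∈ Sector β) :
    HasFDerivAt (logPotential (oddReflection (sectorDensity β f))) (reMulCLM (cauchyTransform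
      (fun w => oddReflection (sectorDensity β f) w) (sectorMap β z))) (sectorMap β z) :=
  (isRieszDensity_oddReflection_sectorDensity hβ0 hβ hf hM).hasFDerivAt_logPotential
    (sectorMap_ne_zero β hz.1)

theorem hasFDerivAt_sectorPotential (hβ0 : 0 < β) (hβ : β < 1 / 2)
    (hf : LocallyHolderOn f (Sector β)) (hM : ∀ z ∈ Sector β, |f z| ≤ M) (hz : z ∈ Sector β) :
    HasFDerivAt (sectorPotential β f) (reMulCLM (sectorGradient β f z)) z :=
  hasFDerivAt_reMulCLM_comp (φ := sectorMap β) (hasFDerivAt_logPotential_sectorMap hβ0 hβ hf hM hz)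
    (hasDerivAt_sectorMap β (sector_subset_slitPlane (by linarith) hz))

theorem contDiffAt_sectorGradient (hβ0 : 0 < β) (hβ : β < 1 / 2)
    (hf : LocallyHolderOn f (Sector β)) (hM : ∀ z ∈ Sector β, |f z| ≤ M) (hz : z ∈ Sector β) :
    ContDiffAt ℝ 1 (sectorGradient β f) z := by
  have hβ1 : β ≤ 1 := by linarith
  have hslit := sector_subset_slitPlane hβ1 hz
  obtain ⟨K, γ, hγ, hγ1, R, hR, hH⟩ :=
    (locallyHolderOn_sectorDensity hβ0 hβ1 hf).exists_holderOnWith_ball_oddReflection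
      (im_sectorMap_pos hβ0 hz)
  have hcauchy := (isRieszDensity_oddReflection_sectorDensity hβ0 hβ hf
    hM).ofReal.contDiffAt_cauchyTransform hH hγ hγ1 (mem_ball_self hR) (sectorMap_ne_zero β hz.1)
  exact (hcauchy.comp z (contDiffAt_cpow_const hslit)).mul
    (contDiffAt_const.mul (contDiffAt_cpow_const hslit))

theorem contDiffOn_sectorPotential (hβ0 : 0 < β) (hβ : β < 1 / 2)
    (hf : LocallyHolderOn f (Sector β)) (hM : ∀ z ∈ Sector β, |f z| ≤ M) :
    ContDiffOn ℝ 2 (sectorPotential β f) (Sector β) :=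
  contDiffOn_two_of_hasFDerivAt_reMulCLM (isOpen_sector (by linarith))
    (fun _ hz => hasFDerivAt_sectorPotential hβ0 hβ hf hM hz)
    fun _ hz => (contDiffAt_sectorGradient hβ0 hβ hf hM hz).contDiffWithinAt

theorem lap_sectorPotential (hβ0 : 0 < β) (hβ : β < 1 / 2) (hf : LocallyHolderOn f (Sector β))
    (hM : ∀ z ∈ Sector β, |f z| ≤ M) (hz : z ∈ Sector β) : lap (sectorPotential β f) z = f z := by
  have hβ1 : β ≤ 1 := by linarith
  have him := im_sectorMap_pos hβ0 hz
  have hslit := sector_subset_slitPlane hβ1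
  obtain ⟨K, γ, hγ, hγ1, R, hR, hH⟩ :=
    (locallyHolderOn_sectorDensity hβ0 hβ1 hf).exists_holderOnWith_ball_oddReflection him
  obtain ⟨a, ha⟩ := (isRieszDensity_oddReflection_sectorDensity hβ0 hβ hf
    hM).ofReal.exists_hasFDerivAt_cauchyTransform hH hγ hγ1 (mem_ball_self hR)
      (sectorMap_ne_zero β hz.1)
  have hlap := lap_comp_eq (isOpen_sector hβ1) hz
    (fun z hz => hasFDerivAt_logPotential_sectorMap hβ0 hβ hf hM hz)
    (fun z hz => hasDerivAt_sectorMap β (hslit hz))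
    (differentiableAt_sectorMapDeriv β (hslit hz)).hasDerivAt ha
  rwa [oddReflection_of_im_pos _ him, ← ofReal_mul, ofReal_re, sectorDensity_sectorMap hβ0 hz]
    at hlap

theorem abs_sectorPotential_le (hβ0 : 0 < β) (hβ : β < 1 / 2) (hf : LocallyHolderOn f (Sector β))
    (hM : ∀ z ∈ Sector β, |f z| ≤ M) (z : ℂ) :
    |sectorPotential β f z| ≤ 2 * π⁻¹ * β ^ 2 * rieszConst (2 * β - 2) * M * ‖z‖ ^ 2 := by
  have hle := (isRieszDensity_oddReflection_sectorDensity hβ0 hβ hf hM).abs_logPotential_le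
    (oddReflection_conj _) (sectorMap β z)
  have hexp : β⁻¹ * (2 * β - 2 + 2) = (2 : ℕ) := by
    rw [Nat.cast_two]
    field_simp
    ring
  rw [norm_sectorMap, ← Real.rpow_mul (norm_nonneg z), hexp, Real.rpow_natCast] at hle
  calc |sectorPotential β f z| ≤ _ := hle
    _ = _ := by ring

theorem norm_sectorGradient_le (hβ0 : 0 < β) (hβ : β < 1 / 2) (hf : LocallyHolderOn f (Sector β))
    (hM : ∀ z ∈ Sector β, |f z| ≤ M) (hz : z ≠ 0) :
    ‖sectorGradient β f z‖ ≤ (2 * π)⁻¹ * β * rieszConst (2 * β - 2) * M * ‖z‖ := by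
  have hle := (isRieszDensity_oddReflection_sectorDensity hβ0 hβ hf
    hM).ofReal.norm_cauchyTransform_le (sectorMap_ne_zero β hz)
  have hz0 : 0 < ‖z‖ := norm_pos_iff.2 hz
  have hexp : β⁻¹ * (2 * β - 2 + 1) + (β⁻¹ - 1) = 1 := by
    field_simp
    ring
  have hpow : ‖z‖ ^ (β⁻¹ * (2 * β - 2 + 1)) * ‖z‖ ^ (β⁻¹ - 1) = ‖z‖ := by
    rw [← Real.rpow_add hz0, hexp, Real.rpow_one]
  rw [norm_sectorMap, ← Real.rpow_mul hz0.le] at hle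
  rw [sectorGradient, norm_mul, norm_sectorMapDeriv hβ0]
  calc _ ≤ (2 * π)⁻¹ * β ^ 2 * M * rieszConst (2 * β - 2) * ‖z‖ ^ (β⁻¹ * (2 * β - 2 + 1)) *
        (β⁻¹ * ‖z‖ ^ (β⁻¹ - 1)) := by gcongr
    _ = (2 * π)⁻¹ * β * rieszConst (2 * β - 2) * M *
        (‖z‖ ^ (β⁻¹ * (2 * β - 2 + 1)) * ‖z‖ ^ (β⁻¹ - 1)) := by field_simp
    _ = _ := by rw [hpow]

theorem norm_fderiv_sectorPotential_le (hβ0 : 0 < β) (hβ : β < 1 / 2)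
    (hf : LocallyHolderOn f (Sector β)) (hM : ∀ z ∈ Sector β, |f z| ≤ M) (hz : z ∈ Sector β) :
    ‖fderiv ℝ (sectorPotential β f) z‖ ≤ (2 * π)⁻¹ * β * rieszConst (2 * β - 2) * M * ‖z‖ := by
  rw [(hasFDerivAt_sectorPotential hβ0 hβ hf hM hz).fderiv]
  exact (norm_reMulCLM_le _).trans (norm_sectorGradient_le hβ0 hβ hf hM hz.1)

end SectorPotential

/-- **Existence for the Dirichlet–Poisson problem on a sector with quadratic growth
(Lemma 3.4, existence part).** For `0 < β < 1/2` there is `C = C(β) > 0` such that for every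
bounded, locally Hölder continuous `f` on `Ω_β` there exists `Ψ`, continuous on `Ω̄_β` and
`C²` on `Ω_β`, with `ΔΨ = f` on `Ω_β`, `Ψ = 0` on `∂Ω_β`, and
`|Ψ(x)| ≤ C ‖f‖_∞ |x|²`, `|∇Ψ(x)| ≤ C ‖f‖_∞ |x|` on `Ω_β`. -/
theorem sector_poisson_existence (β : ℝ) (hβ0 : 0 < β) (hβ : β < 1/2) :
    ∃ C : ℝ, 0 < C ∧
      ∀ f : ℂ → ℝ,
      (∃ M : ℝ, ∀ z ∈ Sector β, |f z| ≤ M) →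
      (∀ z ∈ Sector β, ∃ ε > (0:ℝ), ∃ K γ : ℝ, 0 < γ ∧ γ ≤ 1 ∧
        ∀ w ∈ Sector β ∩ Metric.ball z ε, ∀ w' ∈ Sector β ∩ Metric.ball z ε,
          |f w - f w'| ≤ K * ‖w - w'‖ ^ γ) →
      ∃ Ψ : ℂ → ℝ,
        ContinuousOn Ψ (closure (Sector β)) ∧
        ContDiffOn ℝ 2 Ψ (Sector β) ∧
        (∀ z ∈ Sector β, lap Ψ z = f z) ∧
        (∀ z ∈ frontier (Sector β), Ψ z = 0) ∧
        (∀ M : ℝ, (∀ z ∈ Sector β, |f z| ≤ M) →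
          ∀ z ∈ Sector β, |Ψ z| ≤ C * M * ‖z‖ ^ 2 ∧ ‖fderiv ℝ Ψ z‖ ≤ C * M * ‖z‖) := by
  have hconst : 0 ≤ rieszConst (2 * β - 2) := rieszConst_nonneg _
  have hA : 0 ≤ 2 * π⁻¹ * β ^ 2 * rieszConst (2 * β - 2) := by positivity
  have hB : 0 ≤ (2 * π)⁻¹ * β * rieszConst (2 * β - 2) := by positivity
  refine ⟨2 * π⁻¹ * β ^ 2 * rieszConst (2 * β - 2) + (2 * π)⁻¹ * β * rieszConst (2 * β - 2) + 1,
    by positivity, ?_⟩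
  rintro f ⟨M, hM⟩ hH
  have hβ1 : β ≤ 1 := by linarith
  have hf : LocallyHolderOn f (Sector β) := .of_norm_sub_le_rpow fun z hz => by
    obtain ⟨ε, hε, K, γ, hγ, -, h⟩ := hH z hz
    exact ⟨ε, hε, K, γ, hγ, by simpa only [dist_eq_norm, Real.norm_eq_abs] using h⟩
  refine ⟨sectorPotential β f, continuousOn_sectorPotential hβ0 hβ hf hM,
    contDiffOn_sectorPotential hβ0 hβ hf hM, fun z hz => lap_sectorPotential hβ0 hβ hf hM hz,
    fun z hz => sectorPotential_eq_zero_of_mem_frontier hβ0 hβ1 f hz, fun N hN z hz => ?_⟩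
  have hN0 : 0 ≤ N := nonneg_of_forall_mem_sector_abs_le hβ0 hβ1 hN
  constructor
  · refine (abs_sectorPotential_le hβ0 hβ hf hN z).trans ?_
    gcongr
    linarith
  · refine (norm_fderiv_sectorPotential_le hβ0 hβ hf hN hz).trans ?_
    gcongr
    linarith
end
end
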